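/- Let d = 3. For every c ∈ (0, √2) there exists a nontrivial finite energy solution of the Gross–Pitaevskii traveling wave equation with speed c on ℝ³. -/

import Mathlib

/-!
Travelling waves of every subsonic speed on `ℝ³`, by constrained minimisation.

Write `ψ = 1 + v` with `v` a test field, let `A` be the transverse kinetic energy (`Af`), `K` the
longitudinal one (`Kf`), `V` the potential energy (`Vp`), `cP` the momentum term (`pf`), and minimise
`A` subject to `B = K + V - cP < 0` (`Bf`). The constraint set is nonempty (`exists_Bf_neg`): a loop of
the phase along `x₀`, localised by a transverse cutoff with a thin transition layer, carries more
momentum than energy after stretching in `x₀`. In three dimensions transverse dilations by `l` fix `A`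
and multiply `K`, `V`, `P` by `l²`, so the momentum term can be prescribed along a minimising sequence
(`rescale`).

*Compactness.* If a field with `K + V ≤ cP` stayed, after mollification at a small scale, near or
outside the unit circle with small local variance, its logarithmic differential would be a closed form
with compact support and `|∫ Im (conj v ∂₀ v)| ≤ √(4V) √(2K)` would hold up to a small error
(`mo_lift`). Then `cP ≤ (c/√2) cP` up to a
small error, which `c < √2` forbids (`nonvanish`). After translation, Rellich compactness
(`compactness`) yields a limit `w`, almost everywhere and locally in `L²`, with `1 + w` not a constant
of modulus one (`limit_exists`).

*Euler–Lagrange equation.* The infimum `T` is positive, since otherwise the limit would be invariant in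
a transverse direction, hence constant (`rig`, `MinSeq.T_pos`). Longitudinal dilations give
`K + V = cP` and `V ≤ K` for the limits of these quantities (`MinSeq.KV`). The elements of the
minimising sequence are perturbed themselves, each perturbation being corrected by a longitudinal
dilation (`MinSeq.EL`); only weak convergence is needed to pass to the limit. This yields a weak
equation whose transverse part has a coefficient `ε` (`Wk_zero`): `ε = 1` after a transverse dilation
if `K > V`, and `ε = 0` if `K = V`.

*The case `ε = 0`* (`degenerate`). Here almost every line parallel to the `x₀` axis carries a solution of
the one-dimensional equation, which by its two first integrals is either constant of modulus one or has
energy bounded below (`ode_gap`). The indicator of the set of lines carrying energy has a translation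
modulus quadratic in the step, so that set is translation invariant; it has finite measure, hence is
null, and `1 + w` is constant, a contradiction.

*Regularity.* For `ε = 1`, conjugation and multiplication by a plane wave turn the equation into
`Δu = F(u)` in the sense of distributions, with `F` a cubic polynomial (`weak_u`). The Sobolev embedding
puts `w` in `L⁶`, so `u` and `F(u)` are locally in `L²`; interior estimates from a parametrix
(`interior_est`) make `u` locally bounded, then continuous, then smooth (`loc_bdd`, `rep_cont`,
`reg_smooth`). Finite energy follows from Fatou's lemma, for the gradient through difference quotients
(`pd_sq_int`).
-/

open MeasureTheory Filter Complex Metric Topology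

noncomputable section

abbrev Ed (d : ℕ) := EuclideanSpace ℝ (Fin d)

/-- Partial derivative of `ψ` in the `i`-th coordinate direction. -/
def pd {d : ℕ} (ψ : Ed d → ℂ) (i : Fin d) (x : Ed d) : ℂ :=
  fderiv ℝ ψ x (EuclideanSpace.single i 1)

/-- Laplacian of `ψ`. -/
def lap {d : ℕ} (ψ : Ed d → ℂ) (x : Ed d) : ℂ :=
  ∑ i : Fin d, fderiv ℝ (fun y => fderiv ℝ ψ y (EuclideanSpace.single i 1)) x
      (EuclideanSpace.single i 1)

/-- The Gross–Pitaevskii traveling wave equation with speed `c` on `ℝ^d`: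
`ic ∂_{x₁}ψ + Δψ + (1 - |ψ|²)ψ = 0`. -/
def GPeq {d : ℕ} [NeZero d] (c : ℝ) (ψ : Ed d → ℂ) : Prop :=
  ∀ x, Complex.I * (c : ℂ) * pd ψ 0 x + lap ψ x + (1 - (‖ψ x‖ : ℂ) ^ 2) * ψ x = 0

/-- `|∇ψ|²`. -/
def gradSq {d : ℕ} (ψ : Ed d → ℂ) (x : Ed d) : ℝ := ∑ i : Fin d, ‖pd ψ i x‖ ^ 2

/-- Energy density `(1/2)|∇ψ|² + (1/4)(1 - |ψ|²)²`. -/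
def eDen {d : ℕ} (ψ : Ed d → ℂ) (x : Ed d) : ℝ :=
  1 / 2 * gradSq ψ x + 1 / 4 * (1 - ‖ψ x‖ ^ 2) ^ 2

/-- Energy `E(ψ)`. -/
def energy {d : ℕ} (ψ : Ed d → ℂ) : ℝ := ∫ x, eDen ψ x

/-- Finite energy. -/
def FiniteEnergy {d : ℕ} (ψ : Ed d → ℂ) : Prop := Integrable (eDen ψ)

/-- Momentum `P(ψ) = -∫ ∂_{x₁}(Im ψ)(Re ψ - 1)`. -/
def mom {d : ℕ} [NeZero d] (ψ : Ed d → ℂ) : ℝ :=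
  -∫ x, (pd ψ 0 x).im * ((ψ x).re - 1)

/-- Lagrangian `I^c(ψ) = E(ψ) - c P(ψ)`. -/
def lagr {d : ℕ} [NeZero d] (c : ℝ) (ψ : Ed d → ℂ) : ℝ := energy ψ - c * mom ψ

/-- `ψ` is not a constant of modulus 1. -/
def Nontriv {d : ℕ} (ψ : Ed d → ℂ) : Prop := ¬∃ z : ℂ, ‖z‖ = 1 ∧ ψ = fun _ => z

/-- The quadratic form `Q` of the second variation of `I^c` at `ψ`:
`Q(φ) = ∫ |∇φ|² - c⟨φ, i∂₁φ⟩ - (1-|ψ|²)|φ|² + 2⟨φ,ψ⟩²` with `⟨z₁,z₂⟩ = Re (z₁ conj z₂)`. -/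
def Qform {d : ℕ} [NeZero d] (c : ℝ) (ψ φ : Ed d → ℂ) : ℝ :=
  ∫ x, (gradSq φ x - c * (φ x * (starRingEnd ℂ) (Complex.I * pd φ 0 x)).re
    - (1 - ‖ψ x‖ ^ 2) * ‖φ x‖ ^ 2 + 2 * ((φ x * (starRingEnd ℂ) (ψ x)).re) ^ 2)

/-- The Morse index of `ψ` is at most `m`: every subspace of smooth compactly supported
functions on which `Q` is negative definite has dimension at most `m`. -/
def MorseIndexLE {d : ℕ} [NeZero d] (c : ℝ) (ψ : Ed d → ℂ) (m : ℕ) : Prop :=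
  ∀ Y : Submodule ℝ (Ed d → ℂ),
    (∀ φ ∈ Y, ContDiff ℝ (⊤ : ℕ∞) φ ∧ HasCompactSupport φ) →
    (∀ φ ∈ Y, φ ≠ 0 → Qform c ψ φ < 0) → Module.rank ℝ Y ≤ m

/-- `C^k_loc` convergence: uniform convergence of all iterated derivatives on every
compact set. -/
def LocCk {d : ℕ} (ψn : ℕ → Ed d → ℂ) (ψ : Ed d → ℂ) : Prop :=
  ∀ (k : ℕ) (K : Set (Ed d)), IsCompact K →
    TendstoUniformlyOn (fun n => iteratedFDeriv ℝ k (ψn n)) (iteratedFDeriv ℝ k ψ) atTop K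

/-! ### Test fields and functionals -/

/-- Smooth compactly supported complex functions on `ℝ³`; a field is written `ψ = 1 + v` with `v`
in this class. -/
def TF (v : Ed 3 → ℂ) : Prop := ContDiff ℝ (⊤ : ℕ∞) v ∧ HasCompactSupport v

/-- The `i`-th coordinate vector. -/
abbrev ee (i : Fin 3) : Ed 3 := EuclideanSpace.single i (1 : ℝ)

lemma TF.cont {v : Ed 3 → ℂ} (h : TF v) : Continuous v := h.1.continuous
lemma TF.c1 {v : Ed 3 → ℂ} (h : TF v) : ContDiff ℝ 1 v := h.1.of_le (by exact_mod_cast le_top)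
lemma TF.diff {v : Ed 3 → ℂ} (h : TF v) : Differentiable ℝ v := h.c1.differentiable one_ne_zero
lemma TF.integrable {v : Ed 3 → ℂ} (h : TF v) : Integrable v :=
  h.cont.integrable_of_hasCompactSupport h.2

lemma TF.add {v w : Ed 3 → ℂ} (h : TF v) (h' : TF w) : TF (fun x => v x + w x) :=
  ⟨h.1.add h'.1, h.2.add h'.2⟩
lemma TF.neg {v : Ed 3 → ℂ} (h : TF v) : TF (fun x => - v x) :=
  ⟨h.1.neg, h.2.comp_left (g := fun z : ℂ => -z) (by simp)⟩
lemma TF.sub {v w : Ed 3 → ℂ} (h : TF v) (h' : TF w) : TF (fun x => v x - w x) := by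
  simpa only [sub_eq_add_neg] using h.add h'.neg
lemma TF.cmul {v : Ed 3 → ℂ} (h : TF v) (c : ℂ) : TF (fun x => c * v x) :=
  ⟨contDiff_const.mul h.1, h.2.mul_left⟩
lemma TF.mul_left {v g : Ed 3 → ℂ} (h : TF v) (hg : ContDiff ℝ (⊤ : ℕ∞) g) :
    TF (fun x => g x * v x) := ⟨hg.mul h.1, h.2.mul_left⟩
lemma TF.conj {v : Ed 3 → ℂ} (h : TF v) : TF (fun x => (starRingEnd ℂ) (v x)) :=
  ⟨Complex.conjCLE.contDiff.comp h.1, h.2.comp_left (g := starRingEnd ℂ) (by simp)⟩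

lemma contDiff_pd {v : Ed 3 → ℂ} (h : ContDiff ℝ (⊤ : ℕ∞) v) (i : Fin 3) :
    ContDiff ℝ (⊤ : ℕ∞) (pd v i) := by
  unfold pd
  exact (h.fderiv_right (m := (⊤ : ℕ∞)) (by simp)).clm_apply contDiff_const

lemma continuous_pd {v : Ed 3 → ℂ} (h : ContDiff ℝ 1 v) (i : Fin 3) : Continuous (pd v i) := by
  unfold pd
  exact (h.continuous_fderiv one_ne_zero).clm_apply continuous_const

lemma hasCompactSupport_pd {v : Ed 3 → ℂ} (h : HasCompactSupport v) (i : Fin 3) :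
    HasCompactSupport (pd v i) :=
  (h.fderiv (𝕜 := ℝ)).comp_left (g := fun L : Ed 3 →L[ℝ] ℂ => L (ee i)) (by simp)

lemma TF.pd {v : Ed 3 → ℂ} (h : TF v) (i : Fin 3) : TF (pd v i) :=
  ⟨contDiff_pd h.1 i, hasCompactSupport_pd h.2 i⟩

lemma pd_add {v w : Ed 3 → ℂ} {x : Ed 3} (h : DifferentiableAt ℝ v x)
    (h' : DifferentiableAt ℝ w x) (i : Fin 3) :
    pd (fun x => v x + w x) i x = pd v i x + pd w i x := by
  unfold pd; rw [fderiv_fun_add h h']; rfl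
lemma pd_sub {v w : Ed 3 → ℂ} {x : Ed 3} (h : DifferentiableAt ℝ v x)
    (h' : DifferentiableAt ℝ w x) (i : Fin 3) :
    pd (fun x => v x - w x) i x = pd v i x - pd w i x := by
  unfold pd; rw [fderiv_fun_sub h h']; rfl
lemma pd_mul {v w : Ed 3 → ℂ} {x : Ed 3} (h : DifferentiableAt ℝ v x)
    (h' : DifferentiableAt ℝ w x) (i : Fin 3) :
    pd (fun x => v x * w x) i x = pd v i x * w x + v x * pd w i x := by
  unfold pd; rw [fderiv_fun_mul h h']; simp; ring
lemma pd_cmul {w : Ed 3 → ℂ} {x : Ed 3} (c : ℂ)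
    (h' : DifferentiableAt ℝ w x) (i : Fin 3) :
    pd (fun x => c * w x) i x = c * pd w i x := by
  unfold pd; rw [fderiv_const_mul h']; simp
lemma pd_const_add {w : Ed 3 → ℂ} (c : ℂ) (i : Fin 3) (x : Ed 3) :
    pd (fun x => c + w x) i x = pd w i x := by
  unfold pd; rw [fderiv_const_add]
lemma pd_conj (v : Ed 3 → ℂ) {x : Ed 3} (h : DifferentiableAt ℝ v x) (i : Fin 3) :
    pd (fun x => (starRingEnd ℂ) (v x)) i x = (starRingEnd ℂ) (pd v i x) := by
  unfold pd
  have := (Complex.conjCLE.toContinuousLinearMap.hasFDerivAt.comp x h.hasFDerivAt).fderiv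
  have h2 : (⇑Complex.conjCLE.toContinuousLinearMap ∘ v) = fun x => (starRingEnd ℂ) (v x) := by
    ext; simp
  rw [h2] at this
  rw [this]; simp

lemma pd_comm {v : Ed 3 → ℂ} (h : ContDiff ℝ (⊤ : ℕ∞) v) (i j : Fin 3) (x : Ed 3) :
    pd (pd v i) j x = pd (pd v j) i x := by
  have hs : IsSymmSndFDerivAt ℝ v x := by
    apply ContDiffAt.isSymmSndFDerivAt (n := (⊤ : ℕ∞)) h.contDiffAt
    simp only [minSmoothness_of_isRCLikeNormedField]
    exact WithTop.coe_le_coe.2 (le_top : (2:ℕ∞) ≤ ⊤)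
  have hd : DifferentiableAt ℝ (fderiv ℝ v) x :=
    ((h.fderiv_right (m := (⊤ : ℕ∞)) (by simp)).differentiable (by simp)) x
  have key : ∀ i j : Fin 3, pd (pd v i) j x = fderiv ℝ (fderiv ℝ v) x (ee j) (ee i) := by
    intro i j
    have : HasFDerivAt (pd v i) ((ContinuousLinearMap.apply ℝ ℂ (ee i)).comp
        (fderiv ℝ (fderiv ℝ v) x)) x :=
      ((ContinuousLinearMap.apply ℝ ℂ (ee i)).hasFDerivAt.comp x hd.hasFDerivAt)
    unfold pd at this ⊢
    rw [this.fderiv]; simp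
  rw [key, key]; exact hs _ _

/-- Integration by parts against a compactly supported factor. -/
lemma ibp {f g : Ed 3 → ℂ} (hf : ContDiff ℝ 1 f) (hg : ContDiff ℝ 1 g)
    (hc : HasCompactSupport g) (i : Fin 3) :
    ∫ x, f x * pd g i x = -∫ x, pd f i x * g x := by
  unfold pd
  apply integral_mul_fderiv_eq_neg_fderiv_mul_of_integrable
  · exact ((continuous_pd hf i).mul hg.continuous).integrable_of_hasCompactSupport hc.mul_left
  · exact (hf.continuous.mul (continuous_pd hg i)).integrable_of_hasCompactSupport
      (hasCompactSupport_pd hc i).mul_left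
  · exact (hf.continuous.mul hg.continuous).integrable_of_hasCompactSupport hc.mul_left
  · exact fun x _ => hf.differentiable one_ne_zero x
  · exact fun x _ => hg.differentiable one_ne_zero x

/-- `∫ |∂_i v|²`. -/
def G (i : Fin 3) (v : Ed 3 → ℂ) : ℝ := ∫ x, ‖pd v i x‖ ^ 2
/-- Potential energy `¼ ∫ (1 - |1+v|²)²`. -/
def Vp (v : Ed 3 → ℂ) : ℝ := 1 / 4 * ∫ x, (1 - ‖1 + v x‖ ^ 2) ^ 2
/-- `∫ Im (conj v ∂₀ v)`, which is `-2` times the momentum. -/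
def Mo (v : Ed 3 → ℂ) : ℝ := ∫ x, ((starRingEnd ℂ) (v x) * pd v 0 x).im

/-- Transverse kinetic energy. -/
def Af (v : Ed 3 → ℂ) : ℝ := 1 / 2 * (G 1 v + G 2 v)
/-- Longitudinal kinetic energy. -/
def Kf (v : Ed 3 → ℂ) : ℝ := 1 / 2 * G 0 v

lemma hcs_comp {β : Type*} [Zero β] {v : Ed 3 → ℂ} (h : HasCompactSupport v) (g : ℂ → β)
    (hg : g 0 = 0) : HasCompactSupport (fun x => g (v x)) := h.comp_left hg

lemma TF.int_normsq {v : Ed 3 → ℂ} (h : TF v) : Integrable (fun x => ‖v x‖ ^ 2) :=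
  by
  have h1 : HasCompactSupport (fun x => ‖v x‖ ^ 2) := hcs_comp h.2 (fun z : ℂ => ‖z‖ ^ 2) (by simp)
  have h2 : Continuous (fun x => ‖v x‖ ^ 2) := by have := h.cont; fun_prop
  exact h2.integrable_of_hasCompactSupport h1

lemma TF.int_pot {v : Ed 3 → ℂ} (h : TF v) : Integrable (fun x => (1 - ‖1 + v x‖ ^ 2) ^ 2) := by
  have h1 : HasCompactSupport (fun x => (1 - ‖1 + v x‖ ^ 2) ^ 2) :=
    hcs_comp h.2 (fun z : ℂ => (1 - ‖1 + z‖ ^ 2) ^ 2) (by simp)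
  have h2 : Continuous (fun x => (1 - ‖1 + v x‖ ^ 2) ^ 2) := by have := h.cont; fun_prop
  exact h2.integrable_of_hasCompactSupport h1

lemma TF.int_mul {v w : Ed 3 → ℂ} (h : TF v) (hw : Continuous w) :
    Integrable (fun x => v x * w x) :=
  (h.cont.mul hw).integrable_of_hasCompactSupport h.2.mul_right
lemma TF.int_im {v w : Ed 3 → ℂ} (h : TF v) (hw : Continuous w) :
    Integrable (fun x => ((starRingEnd ℂ) (v x) * w x).im) := (h.conj.int_mul hw).im
lemma TF.int_re {v w : Ed 3 → ℂ} (h : TF v) (hw : Continuous w) :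
    Integrable (fun x => ((starRingEnd ℂ) (v x) * w x).re) := (h.conj.int_mul hw).re

/-- Real functions: Cauchy–Schwarz in a form with square roots. -/
lemma cs_integral {α : Type*} [MeasurableSpace α] {μ : Measure α} {f g : α → ℝ}
    (hf : AEStronglyMeasurable f μ) (hg : AEStronglyMeasurable g μ)
    (hf2 : Integrable (fun x => f x ^ 2) μ) (hg2 : Integrable (fun x => g x ^ 2) μ) :
    Integrable (fun x => f x * g x) μ ∧
    ∫ x, |f x * g x| ∂μ ≤ Real.sqrt (∫ x, f x ^ 2 ∂μ) * Real.sqrt (∫ x, g x ^ 2 ∂μ) := by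
  have h1 : MemLp f 2 μ := (memLp_two_iff_integrable_sq hf).2 hf2
  have h2 : MemLp g 2 μ := (memLp_two_iff_integrable_sq hg).2 hg2
  refine ⟨h1.integrable_mul h2, ?_⟩
  have := integral_mul_norm_le_Lp_mul_Lq (μ := μ) (f := f) (g := g) (p := 2) (q := 2)
    Real.HolderConjugate.two_two (by simpa using h1) (by simpa using h2)
  simpa [abs_mul, Real.sqrt_eq_rpow] using this

lemma G_nonneg (i : Fin 3) (v : Ed 3 → ℂ) : 0 ≤ G i v := integral_nonneg fun _ => by positivity
lemma Vp_nonneg (v : Ed 3 → ℂ) : 0 ≤ Vp v :=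
  mul_nonneg (by norm_num) (integral_nonneg fun _ => by positivity)
lemma Af_nonneg (v : Ed 3 → ℂ) : 0 ≤ Af v :=
  mul_nonneg (by norm_num) (add_nonneg (G_nonneg _ _) (G_nonneg _ _))
lemma Kf_nonneg (v : Ed 3 → ℂ) : 0 ≤ Kf v := mul_nonneg (by norm_num) (G_nonneg _ _)

/-! ### Anisotropic scaling and a field with negative `B` -/

/-- The diagonal map `(x₀, x₁, x₂) ↦ (a x₀, b x₁, b x₂)`. -/
def dg (a b : ℝ) : Ed 3 →L[ℝ] Ed 3 :=
  LinearMap.toContinuousLinearMap (Matrix.toEuclideanLin (Matrix.diagonal ![a, b, b]))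

lemma dg_ee (a b : ℝ) (i : Fin 3) : dg a b (ee i) = (![a, b, b] i) • ee i := by
  ext j
  fin_cases i <;> fin_cases j <;> simp [dg, ee, Matrix.toLpLin_apply]

lemma dg_det (a b : ℝ) : LinearMap.det (dg a b : Ed 3 →ₗ[ℝ] Ed 3) = a * b ^ 2 := by
  have : ((dg a b : Ed 3 →L[ℝ] Ed 3) : Ed 3 →ₗ[ℝ] Ed 3) =
    Matrix.toEuclideanLin (Matrix.diagonal ![a, b, b]) := by ext; rfl
  rw [this]
  unfold Matrix.toEuclideanLin
  rw [Matrix.toLpLin_eq_toLin, LinearMap.det_toLin, Matrix.det_diagonal]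
  simp [Fin.prod_univ_succ, pow_two]

lemma dg_inv {a b : ℝ} (ha : a ≠ 0) (hb : b ≠ 0) (x : Ed 3) : dg a⁻¹ b⁻¹ (dg a b x) = x := by
  ext j
  fin_cases j <;> simp [dg, Matrix.mulVec_diagonal, Matrix.toLpLin_apply, ha, hb]

/-- `dg` as a homeomorphism. -/
def dgH {a b : ℝ} (ha : a ≠ 0) (hb : b ≠ 0) : Ed 3 ≃ₜ Ed 3 where
  toFun := dg a b
  invFun := dg a⁻¹ b⁻¹
  left_inv := dg_inv ha hb
  right_inv x := by simpa using dg_inv (inv_ne_zero ha) (inv_ne_zero hb) x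
  continuous_toFun := (dg a b).continuous
  continuous_invFun := (dg a⁻¹ b⁻¹).continuous

lemma integral_dg {a b : ℝ} (ha : 0 < a) (hb : 0 < b) (g : Ed 3 → ℝ) :
    ∫ x, g (dg a b x) = (a * b ^ 2)⁻¹ * ∫ x, g x := by
  have hd : LinearMap.det (dg a b : Ed 3 →ₗ[ℝ] Ed 3) ≠ 0 := by rw [dg_det]; positivity
  have h1 := Measure.map_linearMap_addHaar_eq_smul_addHaar (volume : Measure (Ed 3)) hd
  have h2 : ∫ x, g (dgH ha.ne' hb.ne' x) = ∫ y, g y ∂(Measure.map (dgH ha.ne' hb.ne') volume) :=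
    ((dgH ha.ne' hb.ne').measurableEmbedding.integral_map g).symm
  have h3 : (dgH ha.ne' hb.ne' : Ed 3 → Ed 3) = (dg a b : Ed 3 →ₗ[ℝ] Ed 3) := rfl
  change ∫ x, g (dgH ha.ne' hb.ne' x) = _
  rw [h2, h3, h1, integral_smul_measure, dg_det, ENNReal.toReal_ofReal (abs_nonneg _),
    abs_of_pos (by positivity)]
  rfl

/-- The rescaled field `v(x₀/s, x₁/l, x₂/l)`. -/
def sc (s l : ℝ) (v : Ed 3 → ℂ) (x : Ed 3) : ℂ := v (dg s⁻¹ l⁻¹ x)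

lemma TF.sc {s l : ℝ} (hs : 0 < s) (hl : 0 < l) {v : Ed 3 → ℂ} (h : TF v) : TF (sc s l v) := by
  refine ⟨h.1.comp (dg s⁻¹ l⁻¹).contDiff, ?_⟩
  exact h.2.comp_homeomorph (dgH (inv_ne_zero hs.ne') (inv_ne_zero hl.ne'))

lemma pd_sc {s l : ℝ} {v : Ed 3 → ℂ} (h : Differentiable ℝ v) (i : Fin 3) (x : Ed 3) :
    pd (sc s l v) i x = (![s⁻¹, l⁻¹, l⁻¹] i : ℝ) * pd v i (dg s⁻¹ l⁻¹ x) := by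
  unfold pd sc
  have := ((h (dg s⁻¹ l⁻¹ x)).hasFDerivAt.comp x (dg s⁻¹ l⁻¹).hasFDerivAt).fderiv
  change fderiv ℝ (v ∘ dg s⁻¹ l⁻¹) x (ee i) = _
  rw [this]
  simp only [ContinuousLinearMap.comp_apply]
  rw [dg_ee, map_smul]; simp

lemma G_sc {s l : ℝ} (hs : 0 < s) (hl : 0 < l) {v : Ed 3 → ℂ} (h : TF v) (i : Fin 3) :
    G i (sc s l v) = (![s⁻¹, l⁻¹, l⁻¹] i : ℝ) ^ 2 * (s * l ^ 2) * G i v := by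
  unfold G
  simp_rw [pd_sc h.diff, norm_mul, mul_pow]
  rw [integral_const_mul, integral_dg (inv_pos.2 hs) (inv_pos.2 hl) (fun x => ‖pd v i x‖ ^ 2)]
  have : ‖((![s⁻¹, l⁻¹, l⁻¹] i : ℝ) : ℂ)‖ ^ 2 = (![s⁻¹, l⁻¹, l⁻¹] i : ℝ) ^ 2 := by
    rw [Complex.norm_real, Real.norm_eq_abs, sq_abs]
  rw [this]; field_simp

lemma Af_sc {s l : ℝ} (hs : 0 < s) (hl : 0 < l) {v : Ed 3 → ℂ} (h : TF v) :
    Af (sc s l v) = s * Af v := by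
  unfold Af; rw [G_sc hs hl h, G_sc hs hl h]; simp; field_simp

lemma Kf_sc {s l : ℝ} (hs : 0 < s) (hl : 0 < l) {v : Ed 3 → ℂ} (h : TF v) :
    Kf (sc s l v) = l ^ 2 / s * Kf v := by
  unfold Kf; rw [G_sc hs hl h]; simp; field_simp

lemma Vp_sc {s l : ℝ} (hs : 0 < s) (hl : 0 < l) (v : Ed 3 → ℂ) :
    Vp (sc s l v) = s * l ^ 2 * Vp v := by
  unfold Vp
  have := integral_dg (inv_pos.2 hs) (inv_pos.2 hl) (fun x => (1 - ‖1 + v x‖ ^ 2) ^ 2)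
  simp only [sc, this]; field_simp

lemma Mo_sc {s l : ℝ} (hs : 0 < s) (hl : 0 < l) {v : Ed 3 → ℂ} (h : TF v) :
    Mo (sc s l v) = l ^ 2 * Mo v := by
  unfold Mo
  have := integral_dg (inv_pos.2 hs) (inv_pos.2 hl)
    (fun x => s⁻¹ * ((starRingEnd ℂ) (v x) * pd v 0 x).im)
  have h2 : ∀ x, ((starRingEnd ℂ) (sc s l v x) * pd (sc s l v) 0 x).im =
      s⁻¹ * ((starRingEnd ℂ) (v (dg s⁻¹ l⁻¹ x)) * pd v 0 (dg s⁻¹ l⁻¹ x)).im := by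
    intro x
    rw [pd_sc h.diff]
    simp [sc]; ring
  rw [integral_congr_ae (Eventually.of_forall h2), this, integral_const_mul]; field_simp

/-- The momentum term `c · P`. -/
def pf (c : ℝ) (v : Ed 3 → ℂ) : ℝ := -(c / 2) * Mo v
/-- `B = K + V - cP`. -/
def Bf (c : ℝ) (v : Ed 3 → ℂ) : ℝ := Kf v + Vp v - pf c v

lemma pf_sc {s l : ℝ} (c : ℝ) (hs : 0 < s) (hl : 0 < l) {v : Ed 3 → ℂ} (h : TF v) :
    pf c (sc s l v) = l ^ 2 * pf c v := by unfold pf; rw [Mo_sc hs hl h]; ring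

lemma int_prod3 (f g h : ℝ → ℝ) :
    ∫ x : Ed 3, f (x 0) * g (x 1) * h (x 2) = (∫ t, f t) * (∫ t, g t) * ∫ t, h t := by
  have h1 := (EuclideanSpace.volume_preserving_symm_measurableEquiv_toLp (Fin 3)).integral_comp'
    (fun y : Fin 3 → ℝ => f (y 0) * g (y 1) * h (y 2))
  have h2 := integral_fin_nat_prod_eq_prod (𝕜 := ℝ) (n := 3) (E := fun _ => ℝ)
    (μ := fun _ => volume) ![f, g, h]
  simp only [Fin.prod_univ_three] at h2
  exact h1.trans h2

lemma hasDerivAt_line {v : Ed 3 → ℂ} {x : Ed 3} (h : DifferentiableAt ℝ v x) (i : Fin 3) :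
    HasDerivAt (fun t : ℝ => v (x + t • ee i)) (pd v i x) 0 := by
  have := h.hasFDerivAt.hasLineDerivAt (ee i)
  exact this

/-- The phase of the test loop. -/
def lth (t : ℝ) : ℝ := -(2 * Real.pi) * Real.smoothTransition t
/-- A loop `e^{iθ} - 1` around the origin. -/
def lw (t : ℝ) : ℂ := Complex.exp (Complex.I * lth t) - 1

lemma lth_contDiff : ContDiff ℝ (⊤ : ℕ∞) lth :=
  contDiff_const.mul Real.smoothTransition.contDiff
lemma lw_contDiff : ContDiff ℝ (⊤ : ℕ∞) lw := by
  unfold lw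
  exact ((contDiff_const.mul (Complex.ofRealCLM.contDiff.comp lth_contDiff)).cexp).sub
    contDiff_const
lemma lth_diff (t : ℝ) : HasDerivAt lth (deriv lth t) t :=
  ((lth_contDiff.differentiable (by simp)) t).hasDerivAt
lemma lw_deriv (t : ℝ) :
    HasDerivAt lw (Complex.I * deriv lth t * Complex.exp (Complex.I * lth t)) t := by
  have := (((lth_diff t).ofReal_comp.const_mul Complex.I).cexp).sub_const 1
  refine this.congr_deriv ?_
  ring
lemma lth_nonpos {t : ℝ} (ht : t ≤ 0) : lth t = 0 := by
  simp [lth, Real.smoothTransition.zero_of_nonpos ht]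
lemma lth_ge {t : ℝ} (ht : 1 ≤ t) : lth t = -(2 * Real.pi) := by
  simp [lth, Real.smoothTransition.one_of_one_le ht]
lemma lw_zero {t : ℝ} (ht : t ∉ Set.Icc (0 : ℝ) 1) : lw t = 0 := by
  by_cases h : t ≤ 0
  · simp [lw, lth_nonpos h]
  · have h1 : 1 ≤ t := by
      by_contra h2; exact ht ⟨by linarith, by linarith⟩
    simp only [lw, lth_ge h1]
    rw [sub_eq_zero, Complex.exp_eq_one_iff]
    exact ⟨-1, by push_cast; ring⟩
lemma deriv_lth_zero {t : ℝ} (ht : t ∉ Set.Icc (0 : ℝ) 1) : deriv lth t = 0 := by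
  by_cases h : t < 0
  · have : lth =ᶠ[𝓝 t] fun _ => 0 := by
      filter_upwards [gt_mem_nhds h] with y hy using lth_nonpos hy.le
    rw [this.deriv_eq]; simp
  · have h1 : 1 < t := by
      by_contra h2; exact ht ⟨by linarith, by linarith⟩
    have : lth =ᶠ[𝓝 t] fun _ => -(2 * Real.pi) := by
      filter_upwards [lt_mem_nhds h1] with y hy using lth_ge hy.le
    rw [this.deriv_eq]; simp
lemma cos_lth_zero {t : ℝ} (ht : t ∉ Set.Icc (0 : ℝ) 1) : Real.cos (lth t) = 1 := by
  by_cases h : t ≤ 0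
  · simp [lth_nonpos h]
  · have h1 : 1 ≤ t := by
      by_contra h2; exact ht ⟨by linarith, by linarith⟩
    simp [lth_ge h1]
lemma exp_I_re (a : ℝ) : (Complex.exp (Complex.I * a)).re = Real.cos a := by
  rw [mul_comm]; exact Complex.exp_ofReal_mul_I_re a
lemma exp_I_im (a : ℝ) : (Complex.exp (Complex.I * a)).im = Real.sin a := by
  rw [mul_comm]; exact Complex.exp_ofReal_mul_I_im a

/-- The loop winds once around the origin. -/
lemma lw_mom : ∫ t, ((starRingEnd ℂ) (lw t) * deriv lw t).im = -(2 * Real.pi) := by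
  have h1 : ∀ t, ((starRingEnd ℂ) (lw t) * deriv lw t).im =
      deriv lth t - deriv lth t * Real.cos (lth t) := by
    intro t
    rw [(lw_deriv t).deriv, lw]
    simp [exp_I_re, exp_I_im]
    have := Real.sin_sq_add_cos_sq (lth t)
    linear_combination (deriv lth t) * this
  have h2 : ∀ t, HasDerivAt (fun t => lth t - Real.sin (lth t))
      (deriv lth t - deriv lth t * Real.cos (lth t)) t := by
    intro t
    exact ((lth_diff t).sub ((lth_diff t).sin)).congr_deriv (by ring)
  have hc : Continuous (fun t => deriv lth t - deriv lth t * Real.cos (lth t)) := by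
    have := lth_contDiff.continuous
    have := lth_contDiff.continuous_deriv (by simp)
    fun_prop
  simp_rw [h1]
  rw [← setIntegral_eq_integral_of_forall_compl_eq_zero (s := Set.Icc (0:ℝ) 1)
    (fun t ht => by rw [deriv_lth_zero ht]; simp), integral_Icc_eq_integral_Ioc,
    ← intervalIntegral.integral_of_le zero_le_one,
    intervalIntegral.integral_eq_sub_of_hasDerivAt (fun t _ => h2 t) (hc.intervalIntegrable _ _)]
  rw [lth_nonpos le_rfl, lth_ge le_rfl]; simp

/-- Test field `X(x₁) X(x₂) w(x₀)`. -/
def lv (X : ℝ → ℝ) (x : Ed 3) : ℂ := ((X (x 1) * X (x 2) : ℝ) : ℂ) * lw (x 0)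

lemma coord_contDiff (i : Fin 3) : ContDiff ℝ (⊤ : ℕ∞) (fun x : Ed 3 => x i) :=
  (EuclideanSpace.proj (𝕜 := ℝ) i).contDiff

lemma hcs3 {β : Type*} [Zero β] {K0 K : Set ℝ} (hK0 : IsCompact K0) (hK : IsCompact K)
    {F : Ed 3 → β} (hF : ∀ x : Ed 3, x 0 ∉ K0 ∨ x 1 ∉ K ∨ x 2 ∉ K → F x = 0) :
    HasCompactSupport F := by
  have hcomp : IsCompact (WithLp.ofLp ⁻¹' (Set.pi Set.univ ![K0, K, K]) : Set (Ed 3)) := by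
    have := (EuclideanSpace.equiv (Fin 3) ℝ).toHomeomorph.isCompact_preimage
      (s := (Set.pi Set.univ ![K0, K, K]))
    refine this.2 (isCompact_univ_pi fun i => ?_)
    fin_cases i
    · exact hK0
    · exact hK
    · exact hK
  refine HasCompactSupport.intro hcomp fun x hx => hF x ?_
  by_contra h
  push Not at h
  refine hx fun i _ => ?_
  fin_cases i
  · exact h.1
  · exact h.2.1
  · exact h.2.2

lemma lv_TF {X : ℝ → ℝ} (hX : ContDiff ℝ (⊤ : ℕ∞) X) (hc : HasCompactSupport X) : TF (lv X) := by
  constructor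
  · unfold lv
    exact (Complex.ofRealCLM.contDiff.comp ((hX.comp (coord_contDiff 1)).mul
      (hX.comp (coord_contDiff 2)))).mul (lw_contDiff.comp (coord_contDiff 0))
  · obtain ⟨K, hK, hK0⟩ := exists_compact_iff_hasCompactSupport.2 hc
    refine hcs3 (isCompact_Icc (a := (0:ℝ)) (b := 1)) hK fun x hx => ?_
    unfold lv
    rcases hx with h | h | h
    · simp [lw_zero h]
    · simp [hK0 _ h]
    · simp [hK0 _ h]

lemma pd_lv {X : ℝ → ℝ} (h : TF (lv X)) (x : Ed 3) :
    pd (lv X) 0 x = ((X (x 1) * X (x 2) : ℝ) : ℂ) * deriv lw (x 0) := by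
  have h1 := hasDerivAt_line (h.diff x) 0
  have h2 : HasDerivAt (fun t : ℝ => lv X (x + t • ee 0))
      (((X (x 1) * X (x 2) : ℝ) : ℂ) * deriv lw (x 0)) 0 := by
    have h3 : (fun t : ℝ => lv X (x + t • ee 0)) =
        fun t => ((X (x 1) * X (x 2) : ℝ) : ℂ) * lw (x 0 + t) := by
      ext t; simp [lv, ee]
    rw [h3]
    have h4 := (lw_deriv (x 0 + 0)).comp_const_add (x 0) 0
    have h5 := h4.deriv
    rw [(lw_deriv (x 0)).deriv]
    simpa using h4.const_mul ((X (x 1) * X (x 2) : ℝ) : ℂ)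
  exact h1.unique h2

/-- The constraint set is nonempty: a transversally localised loop of the phase, stretched along `x₀`. -/
lemma exists_Bf_neg {c : ℝ} (hc : 0 < c) : ∃ v, TF v ∧ Bf c v < 0 := by
  set k0 : ℝ := ∫ t, ‖deriv lw t‖ ^ 2 with hk0
  set a0 : ℝ := ∫ t, (1 - Real.cos (lth t)) ^ 2 with ha0
  have hk0n : 0 ≤ k0 := integral_nonneg fun _ => by positivity
  have ha0n : 0 ≤ a0 := integral_nonneg fun _ => by positivity
  have hpi := Real.pi_pos
  -- The stretching factor: the kinetic energy scales like `1 / s` while the momentum is unchanged.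
  set s : ℝ := (k0 + 1) / (c * Real.pi) with hs
  have hs0 : 0 < s := by positivity
  -- The width of the transition layer, where alone the potential energy is carried.
  set δ : ℝ := min 1 (c * Real.pi / (3 * s * a0 + 1)) with hδ
  have hδ0 : 0 < δ := by positivity
  have hδ1 : δ ≤ 1 := min_le_left _ _
  have hδ2 : δ * (3 * s * a0 + 1) ≤ c * Real.pi := by
    have : δ ≤ c * Real.pi / (3 * s * a0 + 1) := min_le_right _ _
    rwa [le_div_iff₀ (by positivity)] at this
  let b : ContDiffBump (0 : ℝ) := ⟨1, 1 + δ, one_pos, by linarith⟩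
  set X : ℝ → ℝ := fun t => b t with hX
  have hXc : ContDiff ℝ (⊤ : ℕ∞) X := b.contDiff
  have hXs : HasCompactSupport X := b.hasCompactSupport
  have hX0 : ∀ t, 0 ≤ X t := fun t => b.nonneg
  have hX1 : ∀ t, X t ≤ 1 := fun t => b.le_one
  have hXi : Integrable X := hXc.continuous.integrable_of_hasCompactSupport hXs
  have hXs2 : HasCompactSupport (fun t => X t ^ 2) := hXs.comp_left (g := fun z : ℝ => z ^ 2) (by simp)
  have hXi2 : Integrable (fun t => X t ^ 2) :=
    (hXc.continuous.pow 2).integrable_of_hasCompactSupport hXs2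
  have hI1 : ∫ t, X t ≤ 2 * (1 + δ) := by
    have : ∫ t, X t ≤ ∫ t, (Set.Icc (-(1 + δ)) (1 + δ)).indicator (fun _ => (1:ℝ)) t := by
      refine integral_mono hXi ((integrable_indicator_iff measurableSet_Icc).2 (by simp)) ?_
      intro t
      by_cases ht : t ∈ Set.Icc (-(1 + δ)) (1 + δ)
      · rw [Set.indicator_of_mem ht]; exact hX1 t
      · simp only [ht, Set.indicator_of_notMem, not_false_eq_true]
        refine (b.zero_of_le_dist ?_).le
        simp only [b]
        rw [Real.dist_eq, sub_zero]
        by_contra h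
        exact ht (abs_le.1 (not_le.1 h).le)
    rw [integral_indicator measurableSet_Icc] at this
    rw [setIntegral_const, smul_eq_mul, Real.volume_real_Icc_of_le (by linarith)] at this
    linarith
  have hI2 : 2 ≤ ∫ t, X t ^ 2 := by
    have : ∫ t, (Set.Icc (-1 : ℝ) 1).indicator (fun _ => (1:ℝ)) t ≤ ∫ t, X t ^ 2 := by
      refine integral_mono ((integrable_indicator_iff measurableSet_Icc).2 (by simp)) hXi2 ?_
      intro t
      by_cases ht : t ∈ Set.Icc (-1:ℝ) 1
      · have : X t = 1 := b.one_of_mem_closedBall (by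
          simp only [b, mem_closedBall, Real.dist_eq, sub_zero]; exact abs_le.2 ht)
        simp [ht, this]
      · simp [ht]; positivity
    rw [integral_indicator measurableSet_Icc] at this
    simp at this
    norm_num at this
    linarith
  set I1 := ∫ t, X t
  set I2 := ∫ t, X t ^ 2
  have hT : TF (lv X) := lv_TF hXc hXs
  have hK : Kf (lv X) = 1 / 2 * (k0 * I2 * I2) := by
    unfold Kf G
    rw [← int_prod3 (fun t => ‖deriv lw t‖ ^ 2) (fun t => X t ^ 2) (fun t => X t ^ 2)]
    congr 2; ext x
    rw [pd_lv hT, norm_mul, Complex.norm_real, Real.norm_eq_abs, mul_pow, sq_abs]; ring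
  have hM : Mo (lv X) = -(2 * Real.pi) * I2 * I2 := by
    unfold Mo
    rw [← lw_mom, ← int_prod3 (fun t => ((starRingEnd ℂ) (lw t) * deriv lw t).im)
      (fun t => X t ^ 2) (fun t => X t ^ 2)]
    congr 1; ext x
    rw [pd_lv hT, lv]
    simp; ring
  have hV : Vp (lv X) ≤ 1 / 4 * (a0 * I1 * I1 - a0 * I2 * I2) := by
    unfold Vp
    rw [← int_prod3 (fun t => (1 - Real.cos (lth t)) ^ 2) X X,
      ← int_prod3 (fun t => (1 - Real.cos (lth t)) ^ 2) (fun t => X t ^ 2) (fun t => X t ^ 2)]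
    have hlc := lth_contDiff.continuous
    have hcx : ∀ i : Fin 3, Continuous (fun x : Ed 3 => x i) := fun i => (coord_contDiff i).continuous
    obtain ⟨K, hK, hK0⟩ := exists_compact_iff_hasCompactSupport.2 hXs
    have hX' := hXc.continuous
    have i1 : Integrable (fun x : Ed 3 => (1 - Real.cos (lth (x 0))) ^ 2 * X (x 1) * X (x 2)) := by
      refine Continuous.integrable_of_hasCompactSupport ?_ ?_
      · exact (((continuous_const.sub (Real.continuous_cos.comp (hlc.comp (hcx 0)))).pow 2).mul
          (hX'.comp (hcx 1))).mul (hX'.comp (hcx 2))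
      · refine hcs3 (isCompact_Icc (a := (0:ℝ)) (b := 1)) hK fun x hx => ?_
        rcases hx with h | h | h
        · rw [cos_lth_zero h]; simp
        · simp [hK0 _ h]
        · simp [hK0 _ h]
    have i2 : Integrable (fun x : Ed 3 => (1 - Real.cos (lth (x 0))) ^ 2 * X (x 1) ^ 2 * X (x 2) ^ 2) := by
      refine Continuous.integrable_of_hasCompactSupport ?_ ?_
      · exact (((continuous_const.sub (Real.continuous_cos.comp (hlc.comp (hcx 0)))).pow 2).mul
          ((hX'.comp (hcx 1)).pow 2)).mul ((hX'.comp (hcx 2)).pow 2)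
      · refine hcs3 (isCompact_Icc (a := (0:ℝ)) (b := 1)) hK fun x hx => ?_
        rcases hx with h | h | h
        · rw [cos_lth_zero h]; simp
        · simp [hK0 _ h]
        · simp [hK0 _ h]
    rw [← integral_sub i1 i2]
    refine mul_le_mul_of_nonneg_left (integral_mono hT.int_pot (i1.sub i2) fun x => ?_)
      (by norm_num)
    have hn : ‖1 + lv X x‖ ^ 2 = 1 - 2 * (X (x 1) * X (x 2)) * (1 - X (x 1) * X (x 2)) *
        (1 - Real.cos (lth (x 0))) := by
      rw [Complex.sq_norm, Complex.normSq_apply, lv, lw]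
      simp [exp_I_re, exp_I_im]
      have := Real.sin_sq_add_cos_sq (lth (x 0))
      linear_combination (X (x 1) * X (x 2)) ^ 2 * this
    simp only [hn]
    have t0 := mul_nonneg (hX0 (x 1)) (hX0 (x 2))
    have t1 : X (x 1) * X (x 2) ≤ 1 := mul_le_one₀ (hX1 _) (hX0 _) (hX1 _)
    set t := X (x 1) * X (x 2) with ht
    have e1 : (1 - (1 - 2 * t * (1 - t) * (1 - Real.cos (lth (x 0))))) ^ 2 =
      (1 - Real.cos (lth (x 0))) ^ 2 * (4 * (t * (1 - t)) ^ 2) := by ring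
    have e2 : (1 - Real.cos (lth (x 0))) ^ 2 * X (x 1) * X (x 2) -
      (1 - Real.cos (lth (x 0))) ^ 2 * X (x 1) ^ 2 * X (x 2) ^ 2 =
      (1 - Real.cos (lth (x 0))) ^ 2 * (t * (1 - t)) := by rw [ht]; ring
    rw [e1]
    refine le_trans ?_ e2.ge
    refine mul_le_mul_of_nonneg_left ?_ (sq_nonneg _)
    nlinarith [mul_nonneg t0 (sub_nonneg.2 t1), sq_nonneg (t - 1/2)]
  refine ⟨sc s 1 (lv X), hT.sc hs0 one_pos, ?_⟩
  unfold Bf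
  rw [Kf_sc hs0 one_pos hT, Vp_sc hs0 one_pos, pf_sc c hs0 one_pos hT, pf, hM, hK]
  have hE : I1 * I1 - I2 * I2 ≤ 12 * δ := by
    have h0 : 0 ≤ I1 := integral_nonneg hX0
    nlinarith
  have hV2 : s * Vp (lv X) ≤ c * Real.pi := by
    have : s * Vp (lv X) ≤ s * (1 / 4 * (a0 * (12 * δ))) := by
      refine mul_le_mul_of_nonneg_left (hV.trans ?_) hs0.le
      nlinarith
    nlinarith
  have hK2 : 1 / s * (1 / 2 * (k0 * I2 * I2)) ≤ 1 / 2 * (c * Real.pi) * (I2 * I2) := by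
    have : 1 / s * k0 ≤ c * Real.pi := by
      rw [hs, one_div_div, div_mul_eq_mul_div, div_le_iff₀ (by positivity)]
      nlinarith [mul_pos hc hpi]
    nlinarith [mul_self_nonneg I2]
  have hI22 : 4 ≤ I2 * I2 := by nlinarith
  have := mul_pos hc hpi
  have h1 : 1 ^ 2 / s * (1 / 2 * (k0 * I2 * I2)) = 1 / s * (1 / 2 * (k0 * I2 * I2)) := by ring
  rw [h1]
  nlinarith

/-! ### Translation estimates -/

/-- The full Dirichlet integral. -/
def DG (v : Ed 3 → ℂ) : ℝ := G 0 v + G 1 v + G 2 v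

lemma TF.bdd {v : Ed 3 → ℂ} (h : TF v) : ∃ C, ∀ x, ‖v x‖ ≤ C :=
  h.2.exists_bound_of_continuous h.cont

lemma fderiv_apply_sum (v : Ed 3 → ℂ) (x z : Ed 3) :
    fderiv ℝ v x z = ∑ i, (z i : ℂ) * pd v i x := by
  have hz : z = ∑ i, z i • ee i := by
    ext j
    fin_cases j <;> simp [Fin.sum_univ_three, ee]
  conv_lhs => rw [hz]
  rw [map_sum]
  simp [pd, ee]

lemma norm_fderiv_sq_le (v : Ed 3 → ℂ) (x z : Ed 3) :
    ‖fderiv ℝ v x z‖ ^ 2 ≤ ‖z‖ ^ 2 * ∑ i, ‖pd v i x‖ ^ 2 := by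
  rw [fderiv_apply_sum, EuclideanSpace.norm_sq_eq]
  have h1 : ‖∑ i, (z i : ℂ) * pd v i x‖ ≤ ∑ i, ‖z i‖ * ‖pd v i x‖ := by
    refine (norm_sum_le _ _).trans (Finset.sum_le_sum fun i _ => ?_)
    rw [norm_mul, Complex.norm_real]
  calc ‖∑ i, (z i : ℂ) * pd v i x‖ ^ 2 ≤ (∑ i, ‖z i‖ * ‖pd v i x‖) ^ 2 := by gcongr
    _ ≤ _ := Finset.sum_mul_sq_le_sq_mul_sq _ _ _

lemma sq_integral_le {α : Type*} [MeasurableSpace α] {μ : Measure α} [IsProbabilityMeasure μ]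
    {f : α → ℂ} (hf : AEStronglyMeasurable f μ) (hf2 : Integrable (fun x => ‖f x‖ ^ 2) μ) :
    ‖∫ x, f x ∂μ‖ ^ 2 ≤ ∫ x, ‖f x‖ ^ 2 ∂μ := by
  have h := (cs_integral (f := fun x => ‖f x‖) (g := fun _ => (1:ℝ)) hf.norm
    aestronglyMeasurable_const hf2 (by simp)).2
  simp only [mul_one, abs_norm, one_pow, integral_const, probReal_univ, smul_eq_mul,
    Real.sqrt_one] at h
  have h2 := (norm_integral_le_integral_norm f).trans h
  calc ‖∫ x, f x ∂μ‖ ^ 2 ≤ (Real.sqrt (∫ x, ‖f x‖ ^ 2 ∂μ)) ^ 2 := by gcongr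
    _ = _ := Real.sq_sqrt (integral_nonneg fun _ => by positivity)

lemma TF.fderiv_hcs {v : Ed 3 → ℂ} (h : TF v) (z : Ed 3) :
    Continuous (fun x => fderiv ℝ v x z) ∧ HasCompactSupport (fun x => fderiv ℝ v x z) :=
  ⟨(h.c1.continuous_fderiv one_ne_zero).clm_apply continuous_const,
    (h.2.fderiv (𝕜 := ℝ)).comp_left (g := fun L : Ed 3 →L[ℝ] ℂ => L z) (by simp)⟩

lemma TF.shift {v : Ed 3 → ℂ} (h : TF v) (z : Ed 3) : TF (fun x => v (x + z)) :=
  ⟨h.1.comp (contDiff_id.add contDiff_const), h.2.comp_homeomorph (Homeomorph.addRight z)⟩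

/-- Translation estimate: `‖v(· + z) - v‖₂ ≤ ‖z·∇v‖₂`. -/
lemma shift_le {v : Ed 3 → ℂ} (h : TF v) (z : Ed 3) :
    ∫ x, ‖v (x + z) - v x‖ ^ 2 ≤ ∫ x, ‖fderiv ℝ v x z‖ ^ 2 := by
  obtain ⟨hc, hs⟩ := h.fderiv_hcs z
  set g : Ed 3 → ℂ := fun x => fderiv ℝ v x z with hg
  let μ : Measure ℝ := volume.restrict (Set.Ioc 0 1)
  have : IsProbabilityMeasure μ := ⟨by simp [μ]⟩
  have hftc : ∀ x, v (x + z) - v x = ∫ t, g (x + t • z) ∂μ := by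
    intro x
    have hd : ∀ t : ℝ, HasDerivAt (fun t : ℝ => v (x + t • z)) (g (x + t • z)) t := by
      intro t
      have h1 : HasDerivAt (fun t : ℝ => x + t • z) z t := by
        simpa using ((hasDerivAt_id t).smul_const z).const_add x
      exact (h.diff (x + t • z)).hasFDerivAt.comp_hasDerivAt t h1
    have := intervalIntegral.integral_eq_sub_of_hasDerivAt (a := 0) (b := 1) (fun t _ => hd t)
      (Continuous.intervalIntegrable (by fun_prop) _ _)
    rw [intervalIntegral.integral_of_le zero_le_one] at this
    rw [this]; simp
  have hgb : ∃ C, ∀ x, ‖g x‖ ≤ C := hs.exists_bound_of_continuous hc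
  obtain ⟨C, hC⟩ := hgb
  have hJ : ∀ x, ‖v (x + z) - v x‖ ^ 2 ≤ ∫ t, ‖g (x + t • z)‖ ^ 2 ∂μ := by
    intro x
    rw [hftc x]
    refine sq_integral_le (Continuous.aestronglyMeasurable (by fun_prop)) ?_
    refine Integrable.of_bound (C := C ^ 2) (Continuous.aestronglyMeasurable (by fun_prop)) ?_
    refine Eventually.of_forall fun t => ?_
    rw [Real.norm_of_nonneg (by positivity)]
    have := hC (x + t • z); gcongr
  have hg2 : Integrable (fun x => ‖g x‖ ^ 2) := by
    have h1 : HasCompactSupport (fun x => ‖g x‖ ^ 2) := hcs_comp hs (fun z : ℂ => ‖z‖ ^ 2) (by simp)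
    exact (by fun_prop : Continuous (fun x => ‖g x‖ ^ 2)).integrable_of_hasCompactSupport h1
  have hl : ∫⁻ x, ENNReal.ofReal (‖v (x + z) - v x‖ ^ 2) ≤ ∫⁻ x, ENNReal.ofReal (‖g x‖ ^ 2) := by
    calc ∫⁻ x, ENNReal.ofReal (‖v (x + z) - v x‖ ^ 2)
        ≤ ∫⁻ x, ∫⁻ t, ENNReal.ofReal (‖g (x + t • z)‖ ^ 2) ∂μ := by
          refine lintegral_mono fun x => ?_
          refine (ENNReal.ofReal_le_ofReal (hJ x)).trans ?_
          rw [ofReal_integral_eq_lintegral_ofReal]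
          · refine Integrable.of_bound (C := C ^ 2)
              (Continuous.aestronglyMeasurable (by fun_prop)) ?_
            refine Eventually.of_forall fun t => ?_
            rw [Real.norm_of_nonneg (by positivity)]
            have := hC (x + t • z); gcongr
          · exact Eventually.of_forall fun t => by positivity
      _ = ∫⁻ t, (∫⁻ x, ENNReal.ofReal (‖g (x + t • z)‖ ^ 2)) ∂μ := by
          refine lintegral_lintegral_swap (Measurable.aemeasurable ?_)
          refine ENNReal.measurable_ofReal.comp (Continuous.measurable ?_)
          fun_prop
      _ = ∫⁻ t, (∫⁻ x, ENNReal.ofReal (‖g x‖ ^ 2)) ∂μ := by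
          refine lintegral_congr fun t => ?_
          exact lintegral_add_right_eq_self (fun x => ENNReal.ofReal (‖g x‖ ^ 2)) (t • z)
      _ = _ := by simp
  have hv2 := ((h.shift z).sub h).int_normsq
  rw [← ofReal_integral_eq_lintegral_ofReal hv2 (Eventually.of_forall fun t => by positivity),
    ← ofReal_integral_eq_lintegral_ofReal hg2 (Eventually.of_forall fun t => by positivity)] at hl
  exact (ENNReal.ofReal_le_ofReal_iff (integral_nonneg fun _ => by positivity)).1 hl

/-- The translation estimate in a coordinate direction. -/
lemma shift_le_G {v : Ed 3 → ℂ} (h : TF v) (τ : ℝ) (i : Fin 3) :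
    ∫ x, ‖v (x + τ • ee i) - v x‖ ^ 2 ≤ τ ^ 2 * G i v := by
  refine (shift_le h _).trans ?_
  unfold G pd
  rw [← integral_const_mul]
  refine le_of_eq (integral_congr_ae (Eventually.of_forall fun x => ?_))
  simp only [map_smul, norm_smul, mul_pow, Real.norm_eq_abs, sq_abs]

lemma TF.int_G {v : Ed 3 → ℂ} (h : TF v) (i : Fin 3) : Integrable (fun x => ‖_root_.pd v i x‖ ^ 2) :=
  (h.pd i).int_normsq

lemma shift_le_DG {v : Ed 3 → ℂ} (h : TF v) (z : Ed 3) :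
    ∫ x, ‖v (x + z) - v x‖ ^ 2 ≤ ‖z‖ ^ 2 * DG v := by
  refine (shift_le h _).trans ?_
  obtain ⟨hc, hs⟩ := h.fderiv_hcs z
  have h2 : DG v = ∫ x, ∑ i, ‖pd v i x‖ ^ 2 := by
    rw [integral_finsetSum _ fun i _ => h.int_G i, Fin.sum_univ_three]; rfl
  rw [h2, ← integral_const_mul]
  refine integral_mono ?_ ?_ (fun x => norm_fderiv_sq_le v x z)
  · have h1 : HasCompactSupport (fun x => ‖fderiv ℝ v x z‖ ^ 2) :=
      hcs_comp hs (fun z : ℂ => ‖z‖ ^ 2) (by simp)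
    exact (by fun_prop : Continuous (fun x => ‖fderiv ℝ v x z‖ ^ 2)).integrable_of_hasCompactSupport
      h1
  · exact (integrable_finsetSum _ fun i _ => h.int_G i).const_mul _

/-! ### Mollification -/

/-- Mollifier radius. -/
def hk (k : ℕ) : ℝ := 1 / ((k : ℝ) + 1)
lemma hk_pos (k : ℕ) : 0 < hk k := by unfold hk; positivity
lemma hk_tendsto : Tendsto hk atTop (𝓝 0) := tendsto_one_div_add_atTop_nhds_zero_nat

/-- The bump functions behind the mollifiers. -/
def bmp (k : ℕ) : ContDiffBump (0 : Ed 3) :=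
  ⟨hk k / 2, hk k, half_pos (hk_pos k), half_lt_self (hk_pos k)⟩
/-- The mollifier, supported in the ball of radius `hk k`. -/
def rho (k : ℕ) : Ed 3 → ℝ := (bmp k).normed volume
lemma rho_cont (k : ℕ) : Continuous (rho k) := (bmp k).continuous_normed
lemma rho_smooth (k : ℕ) : ContDiff ℝ (⊤ : ℕ∞) (rho k) := (bmp k).contDiff_normed
lemma rho_nonneg (k : ℕ) (x : Ed 3) : 0 ≤ rho k x := (bmp k).nonneg_normed x
lemma rho_hcs (k : ℕ) : HasCompactSupport (rho k) := (bmp k).hasCompactSupport_normed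
lemma rho_int (k : ℕ) : ∫ x, rho k x = 1 := (bmp k).integral_normed
lemma rho_neg (k : ℕ) (x : Ed 3) : rho k (-x) = rho k x := (bmp k).normed_neg x
lemma rho_integrable (k : ℕ) : Integrable (rho k) :=
  (rho_cont k).integrable_of_hasCompactSupport (rho_hcs k)
lemma rho_zero {k : ℕ} {x : Ed 3} (h : hk k ≤ ‖x‖) : rho k x = 0 := by
  have : x ∉ Function.support (rho k) := by
    rw [rho, ContDiffBump.support_normed_eq]
    simpa [bmp] using h
  simpa using this

/-- The probability measure with density `rho k`. -/
def Mp (k : ℕ) : Measure (Ed 3) := volume.withDensity fun y => ENNReal.ofReal (rho k y)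
instance (k : ℕ) : IsProbabilityMeasure (Mp k) := ⟨by
  rw [Mp, withDensity_apply _ MeasurableSet.univ, Measure.restrict_univ,
    ← ofReal_integral_eq_lintegral_ofReal (rho_integrable k)
      (Eventually.of_forall (rho_nonneg k)), rho_int]; simp⟩

lemma Mp_integral (k : ℕ) {E : Type*} [NormedAddCommGroup E] [NormedSpace ℝ E] (f : Ed 3 → E) :
    ∫ y, f y ∂(Mp k) = ∫ y, rho k y • f y := by
  rw [Mp, integral_withDensity_eq_integral_toReal_smul
    (by have := rho_cont k; fun_prop) (by simp)]
  simp [ENNReal.toReal_ofReal (rho_nonneg k _)]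

lemma Mp_ae (k : ℕ) : ∀ᵐ y ∂(Mp k), ‖y‖ ≤ hk k := by
  rw [Mp, ae_withDensity_iff (by have := rho_cont k; fun_prop)]
  refine Eventually.of_forall fun y hy => ?_
  by_contra h
  exact hy (by simp [rho_zero (not_le.1 h).le])

/-- Mollification. -/
def ml (k : ℕ) {E : Type*} [NormedAddCommGroup E] [NormedSpace ℝ E] (f : Ed 3 → E) : Ed 3 → E :=
  convolution (rho k) f (ContinuousLinearMap.lsmul ℝ ℝ) volume

lemma ml_eq (k : ℕ) {E : Type*} [NormedAddCommGroup E] [NormedSpace ℝ E] (f : Ed 3 → E)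
    (x : Ed 3) : ml k f x = ∫ y, f (x - y) ∂(Mp k) := by
  rw [Mp_integral, ml, convolution_def]; rfl

lemma ml_eq' (k : ℕ) {E : Type*} [NormedAddCommGroup E] [NormedSpace ℝ E] (f : Ed 3 → E)
    (x : Ed 3) : ml k f x = ∫ y, rho k (x - y) • f y := by
  rw [ml, convolution_lsmul_swap]

lemma ml_TF (k : ℕ) {v : Ed 3 → ℂ} (h : TF v) : TF (ml k v) :=
  ⟨h.2.contDiff_convolution_right _ (rho_integrable k).locallyIntegrable h.1,
    (rho_hcs k).convolution _ h.2⟩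

lemma pd_ml (k : ℕ) {v : Ed 3 → ℂ} (h : TF v) (i : Fin 3) (x : Ed 3) :
    pd (ml k v) i x = ml k (pd v i) x := by
  have h1 := (h.2.hasFDerivAt_convolution_right (ContinuousLinearMap.lsmul ℝ ℝ)
    (rho_integrable k).locallyIntegrable h.c1 x).fderiv
  unfold pd
  change fderiv ℝ (convolution (rho k) v (ContinuousLinearMap.lsmul ℝ ℝ) volume) x (ee i) = _
  rw [h1, ml, convolution_precompR_apply]
  · exact (rho_integrable k).locallyIntegrable
  · exact h.2.fderiv (𝕜 := ℝ)
  · exact h.c1.continuous_fderiv one_ne_zero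

lemma Mp_integrable (k : ℕ) {E : Type*} [NormedAddCommGroup E] [NormedSpace ℝ E] {f : Ed 3 → E}
    (hf : Continuous f) (hb : ∃ C, ∀ x, ‖f x‖ ≤ C) (x : Ed 3) :
    Integrable (fun y => f (x - y)) (Mp k) := by
  obtain ⟨C, hC⟩ := hb
  have : Continuous (fun y => f (x - y)) := by fun_prop
  exact Integrable.of_bound (C := C) this.aestronglyMeasurable (Eventually.of_forall fun y => hC _)

lemma ml_sub_const (k : ℕ) {f : Ed 3 → ℂ} (hf : Continuous f) (hb : ∃ C, ∀ x, ‖f x‖ ≤ C)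
    (c : ℂ) (x : Ed 3) : ∫ y, (f (x - y) - c) ∂(Mp k) = ml k f x - c := by
  rw [integral_sub (Mp_integrable k hf hb x) (integrable_const _), ml_eq]; simp

/-- The local mean oscillation `∫ ρ(y) |v(x - y) - v(x)|² dy`. -/
def osc (k : ℕ) (v : Ed 3 → ℂ) (x : Ed 3) : ℝ := ∫ y, ‖v (x - y) - v x‖ ^ 2 ∂(Mp k)

lemma osc_nonneg (k : ℕ) (v : Ed 3 → ℂ) (x : Ed 3) : 0 ≤ osc k v x :=
  integral_nonneg fun _ => by positivity

lemma osc_aux (k : ℕ) {v : Ed 3 → ℂ} (h : TF v) (c : ℂ) (x : Ed 3) :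
    Integrable (fun y => ‖v (x - y) - c‖ ^ 2) (Mp k) := by
  obtain ⟨C, hC⟩ := h.bdd
  have := h.cont
  refine Mp_integrable (f := fun x => ‖v x - c‖ ^ 2) k (by fun_prop) ⟨(C + ‖c‖) ^ 2, fun x => ?_⟩ x
  rw [Real.norm_of_nonneg (by positivity)]
  gcongr
  exact (norm_sub_le _ _).trans (by gcongr; exact hC x)

/-- Poincaré-type bound: the total local oscillation is quadratic in the mollifier radius. -/
lemma osc_int (k : ℕ) {v : Ed 3 → ℂ} (h : TF v) :
    Integrable (osc k v) ∧ ∫ x, osc k v x ≤ hk k ^ 2 * DG v := by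
  have hc := h.cont
  have hF : Continuous (fun p : Ed 3 × Ed 3 => ‖v (p.1 - p.2) - v p.1‖ ^ 2) := by fun_prop
  have hDG : 0 ≤ DG v := add_nonneg (add_nonneg (G_nonneg _ _) (G_nonneg _ _)) (G_nonneg _ _)
  have hl : ∫⁻ x, ENNReal.ofReal (osc k v x) ≤ ENNReal.ofReal (hk k ^ 2 * DG v) := by
    calc ∫⁻ x, ENNReal.ofReal (osc k v x)
        = ∫⁻ x, (∫⁻ y, ENNReal.ofReal (‖v (x - y) - v x‖ ^ 2) ∂(Mp k)) := by
          refine lintegral_congr fun x => ?_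
          exact ofReal_integral_eq_lintegral_ofReal (osc_aux k h (v x) x)
            (Eventually.of_forall fun _ => by positivity)
      _ = ∫⁻ y, (∫⁻ x, ENNReal.ofReal (‖v (x - y) - v x‖ ^ 2)) ∂(Mp k) := by
          refine lintegral_lintegral_swap (Measurable.aemeasurable ?_)
          exact ENNReal.measurable_ofReal.comp hF.measurable
      _ ≤ ∫⁻ y, ENNReal.ofReal (hk k ^ 2 * DG v) ∂(Mp k) := by
          refine lintegral_mono_ae ?_
          filter_upwards [Mp_ae k] with y hy
          have h1 := ((h.shift (-y)).sub h).int_normsq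
          simp only [← sub_eq_add_neg] at h1
          rw [← ofReal_integral_eq_lintegral_ofReal h1 (Eventually.of_forall fun _ => by positivity)]
          refine ENNReal.ofReal_le_ofReal ?_
          have h2 := shift_le_DG h (-y)
          simp only [← sub_eq_add_neg, norm_neg] at h2
          refine h2.trans ?_
          gcongr
      _ = _ := by simp
  have hm : AEStronglyMeasurable (osc k v) volume :=
    (hF.stronglyMeasurable.integral_prod_right' (ν := Mp k)).aestronglyMeasurable
  have hfin : ∫⁻ x, ENNReal.ofReal (osc k v x) < ⊤ := hl.trans_lt ENNReal.ofReal_lt_top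
  refine ⟨⟨hm, ?_⟩, ?_⟩
  · rw [hasFiniteIntegral_iff_ofReal (Eventually.of_forall (osc_nonneg k v))]; exact hfin
  · rw [integral_eq_lintegral_of_nonneg_ae (Eventually.of_forall (osc_nonneg k v)) hm]
    exact ENNReal.toReal_le_of_le_ofReal (by positivity) hl

lemma TF.cb {v : Ed 3 → ℂ} (h : TF v) : Continuous v ∧ ∃ C, ∀ x, ‖v x‖ ≤ C := ⟨h.cont, h.bdd⟩

lemma ml_close (k : ℕ) {v : Ed 3 → ℂ} (h : TF v) (x : Ed 3) :
    ‖ml k v x - v x‖ ^ 2 ≤ osc k v x := by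
  rw [← ml_sub_const k h.cont h.bdd]
  have := h.cont
  exact sq_integral_le (Continuous.aestronglyMeasurable (by fun_prop)) (osc_aux k h _ x)

lemma ml_close_int (k : ℕ) {v : Ed 3 → ℂ} (h : TF v) :
    ∫ x, ‖ml k v x - v x‖ ^ 2 ≤ hk k ^ 2 * DG v :=
  (integral_mono ((ml_TF k h).sub h).int_normsq (osc_int k h).1 (ml_close k h)).trans
    (osc_int k h).2

lemma ml_norm_sq_le (k : ℕ) {f : Ed 3 → ℂ} (hf : Continuous f) (hb : ∃ C, ∀ x, ‖f x‖ ≤ C)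
    (x : Ed 3) : ‖ml k f x‖ ^ 2 ≤ ml k (fun x => ‖f x‖ ^ 2) x := by
  rw [ml_eq, ml_eq]
  obtain ⟨C, hC⟩ := hb
  refine sq_integral_le (Continuous.aestronglyMeasurable (by fun_prop)) ?_
  refine Mp_integrable (f := fun x => ‖f x‖ ^ 2) k (by fun_prop) ⟨C ^ 2, fun x => ?_⟩ x
  rw [Real.norm_of_nonneg (by positivity)]
  gcongr; exact hC x

/-- The local variance `(|ψ|²)_h - |ψ_h|²` of `ψ = 1 + v`. -/
def vr (k : ℕ) (v : Ed 3 → ℂ) (x : Ed 3) : ℝ :=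
  ml k (fun x => ‖1 + v x‖ ^ 2) x - ‖1 + ml k v x‖ ^ 2

/-- The local variance can be computed about any centre `c`. -/
lemma vr_eq (k : ℕ) {v : Ed 3 → ℂ} (h : TF v) (x : Ed 3) (c : ℂ) :
    vr k v x = (∫ y, ‖v (x - y) - c‖ ^ 2 ∂(Mp k)) - ‖ml k v x - c‖ ^ 2 := by
  have e : ∀ z : ℂ, ‖1 + z‖ ^ 2 = ‖z - c‖ ^ 2 + (2 * ((starRingEnd ℂ (1 + c)) * (z - c)).re
      + ‖1 + c‖ ^ 2) := by
    intro z
    simp only [Complex.sq_norm, Complex.normSq_apply]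
    simp; ring
  have i1 := osc_aux k h c x
  have i2 : Integrable (fun y => (v (x - y) - c)) (Mp k) :=
    (Mp_integrable k h.cont h.bdd x).sub (integrable_const _)
  have i3 : Integrable (fun y => ((starRingEnd ℂ (1 + c)) * (v (x - y) - c)).re) (Mp k) :=
    (i2.const_mul _).re
  have e2 : ∫ y, ((starRingEnd ℂ (1 + c)) * (v (x - y) - c)).re ∂(Mp k) =
      ((starRingEnd ℂ (1 + c)) * (ml k v x - c)).re := by
    rw [← ml_sub_const k h.cont h.bdd, ← integral_const_mul]
    exact integral_re (i2.const_mul _)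
  unfold vr
  rw [ml_eq k (fun x => ‖1 + v x‖ ^ 2)]
  rw [integral_congr_ae (Eventually.of_forall fun y => e (v (x - y))), e (ml k v x)]
  have i4 : Integrable (fun y => 2 * ((starRingEnd ℂ (1 + c)) * (v (x - y) - c)).re
      + ‖1 + c‖ ^ 2) (Mp k) := (i3.const_mul 2).add (integrable_const _)
  rw [integral_add i1 i4,
    integral_add (i3.const_mul 2) (integrable_const _), integral_const_mul, e2,
    integral_const, probReal_univ, one_smul]
  ring

lemma vr_nonneg (k : ℕ) {v : Ed 3 → ℂ} (h : TF v) (x : Ed 3) : 0 ≤ vr k v x := by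
  rw [vr_eq k h x (ml k v x)]
  simp; exact integral_nonneg fun _ => by positivity

lemma vr_le (k : ℕ) {v : Ed 3 → ℂ} (h : TF v) (x : Ed 3) : vr k v x ≤ osc k v x := by
  rw [vr_eq k h x (v x)]
  unfold osc
  linarith [sq_nonneg ‖ml k v x - v x‖]

lemma vr_cont (k : ℕ) {v : Ed 3 → ℂ} (h : TF v) : Continuous (vr k v) := by
  have h0 := h.cont
  have h1 : Continuous (ml k (fun x => ‖1 + v x‖ ^ 2)) := by
    have := (rho_hcs k).continuous_convolution_left (ContinuousLinearMap.lsmul ℝ ℝ) (μ := volume)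
      (f := rho k) (g := fun x => ‖1 + v x‖ ^ 2) (rho_cont k)
      (by fun_prop : Continuous (fun x => ‖1 + v x‖ ^ 2)).locallyIntegrable
    exact this
  have h2 := (ml_TF k h).cont
  unfold vr; fun_prop

lemma vr_int (k : ℕ) {v : Ed 3 → ℂ} (h : TF v) :
    Integrable (vr k v) ∧ ∫ x, vr k v x ≤ hk k ^ 2 * DG v := by
  have hi : Integrable (vr k v) := (osc_int k h).1.mono' (vr_cont k h).aestronglyMeasurable
    (Eventually.of_forall fun x => by
      rw [Real.norm_of_nonneg (vr_nonneg k h x)]; exact vr_le k h x)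
  exact ⟨hi, (integral_mono hi (osc_int k h).1 (vr_le k h)).trans (osc_int k h).2⟩

/-- Young's inequality `‖ρ * f‖₂ ≤ ‖f‖₂` together with integrability. -/
lemma ml_L2 (k : ℕ) {v : Ed 3 → ℂ} (h : TF v) :
    ∫ x, ‖ml k v x‖ ^ 2 ≤ ∫ x, ‖v x‖ ^ 2 := by
  have hi := h.int_normsq
  have h1 : ∫ x, ml k (fun x => ‖v x‖ ^ 2) x = ∫ x, ‖v x‖ ^ 2 := by
    unfold ml
    rw [integral_convolution _ (rho_integrable k) hi, rho_int]; simp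
  have h2 : Integrable (ml k (fun x => ‖v x‖ ^ 2)) :=
    (rho_integrable k).integrable_convolution _ hi
  rw [← h1]
  exact integral_mono (ml_TF k h).int_normsq h2 (ml_norm_sq_le k h.cont h.bdd)

lemma G_ml (k : ℕ) {v : Ed 3 → ℂ} (h : TF v) (i : Fin 3) : G i (ml k v) ≤ G i v := by
  unfold G
  simp_rw [pd_ml k h]
  exact ml_L2 k (h.pd i)

/-- Pointwise bound of a mollification by the `L²` norm. -/
lemma ml_sup (k : ℕ) : ∃ R : ℝ, 0 ≤ R ∧ ∀ f : Ed 3 → ℂ, AEStronglyMeasurable f volume →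
    Integrable (fun x => ‖f x‖ ^ 2) → ∀ x, ‖ml k f x‖ ≤ R * Real.sqrt (∫ x, ‖f x‖ ^ 2) := by
  refine ⟨Real.sqrt (∫ y, rho k y ^ 2), Real.sqrt_nonneg _, fun f hf hf2 x => ?_⟩
  rw [ml_eq']
  have hr2 : Integrable (fun y => rho k y ^ 2) := by
    have h1 : HasCompactSupport (fun x => rho k x ^ 2) :=
      (rho_hcs k).comp_left (g := fun z : ℝ => z ^ 2) (by simp)
    exact ((rho_cont k).pow 2).integrable_of_hasCompactSupport h1
  have hr := rho_cont k
  have hcs := (cs_integral (μ := volume) (f := fun y => rho k (x - y)) (g := fun y => ‖f y‖)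
    (Continuous.aestronglyMeasurable (by fun_prop)) hf.norm (hr2.comp_sub_left x) hf2).2
  rw [integral_sub_left_eq_self (fun y => rho k y ^ 2) volume x] at hcs
  refine (norm_integral_le_integral_norm _).trans (le_trans (le_of_eq ?_) hcs)
  refine integral_congr_ae (Eventually.of_forall fun y => ?_)
  simp [abs_mul]

/-! ### Lifting and nonvanishing -/

lemma coordC_contDiff (i : Fin 3) : ContDiff ℝ (⊤ : ℕ∞) (fun x : Ed 3 => ((x i : ℝ) : ℂ)) :=
  Complex.ofRealCLM.contDiff.comp (coord_contDiff i)

lemma pd_coord (i j : Fin 3) (x : Ed 3) :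
    pd (fun x : Ed 3 => ((x i : ℝ) : ℂ)) j x = if i = j then 1 else 0 := by
  have h : HasFDerivAt (fun x : Ed 3 => ((x i : ℝ) : ℂ))
      (Complex.ofRealCLM.comp (EuclideanSpace.proj (𝕜 := ℝ) i)) x :=
    (Complex.ofRealCLM.comp (EuclideanSpace.proj (𝕜 := ℝ) i)).hasFDerivAt
  unfold pd
  rw [h.fderiv]
  fin_cases i <;> fin_cases j <;> simp

lemma c1_of {f : Ed 3 → ℂ} (h : ContDiff ℝ (⊤ : ℕ∞) f) : ContDiff ℝ 1 f :=
  h.of_le (by exact_mod_cast le_top)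

/-- A closed compactly supported one-form has vanishing integrals. -/
lemma integral_closed {g0 g1 : Ed 3 → ℂ} (h0 : TF g0) (h1 : TF g1)
    (h : ∀ x, pd g0 1 x = pd g1 0 x) : ∫ x, g0 x = 0 := by
  have e1 := ibp (c1_of (coordC_contDiff 1)) h0.c1 h0.2 1
  have e2 := ibp (c1_of (coordC_contDiff 1)) h1.c1 h1.2 0
  simp only [pd_coord] at e1 e2
  simp only [h] at e1
  rw [e1] at e2
  simpa using e2

lemma integral_pd {w : Ed 3 → ℂ} (h : TF w) (i : Fin 3) : ∫ x, pd w i x = 0 := by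
  have e1 := ibp (f := fun _ => (1:ℂ)) contDiff_const h.c1 h.2 i
  simpa [pd] using e1

lemma pd_div {f u : Ed 3 → ℂ} (hf : Differentiable ℝ f) (hu : Differentiable ℝ u)
    (h0 : ∀ x, u x ≠ 0) (j : Fin 3) (x : Ed 3) :
    pd (fun x => (u x)⁻¹ * f x) j x = (pd f j x * u x - f x * pd u j x) / u x ^ 2 := by
  have hinv : DifferentiableAt ℝ (fun x => (u x)⁻¹) x := (hu x).fun_inv (h0 x)
  have e : pd (fun x => u x * ((u x)⁻¹ * f x)) j x = pd f j x := by
    congr 1; ext y; rw [mul_inv_cancel_left₀ (h0 y)]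
  rw [pd_mul (hu x) (hinv.fun_mul (hf x))] at e
  have := h0 x
  field_simp
  field_simp at e
  linear_combination e

/-- If `|1 + w| ≥ r > 0`, the form `dw / (1 + w)` is closed with compact support, so its integrals vanish;
up to terms of zero integral the momentum density is then `(|1 + w|² - 1) Im ((1 + w)⁻¹ ∂₀ w)`, which
is controlled by the potential and the longitudinal energies. -/
lemma mo_lift {w : Ed 3 → ℂ} (h : TF w) {r : ℝ} (hr : 0 < r) (hw : ∀ x, r ≤ ‖1 + w x‖) :
    |Mo w| ≤ 1 / r * (Real.sqrt (4 * Vp w) * Real.sqrt (G 0 w)) := by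
  set u : Ed 3 → ℂ := fun x => 1 + w x with hu
  have hus : ContDiff ℝ (⊤ : ℕ∞) u := contDiff_const.add h.1
  have hu0 : ∀ x, u x ≠ 0 := fun x => by
    have := hw x
    intro h0; rw [hu] at h0; simp only at h0; rw [h0, norm_zero] at this; linarith
  have hui : ContDiff ℝ (⊤ : ℕ∞) (fun x => (u x)⁻¹) := hus.inv hu0
  have hg : ∀ i, TF (fun x => (u x)⁻¹ * pd w i x) := fun i => (h.pd i).mul_left hui
  have hud := hus.differentiable (by simp)
  have hpu : ∀ i x, pd u i x = pd w i x := fun i x => pd_const_add 1 i x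
  have hz : ∫ x, (u x)⁻¹ * pd w 0 x = 0 := by
    refine integral_closed (hg 0) (hg 1) fun x => ?_
    rw [pd_div (h.pd 0).diff hud hu0, pd_div (h.pd 1).diff hud hu0, pd_comm h.1 0 1, hpu, hpu]
    ring
  have hz2 := integral_pd h 0
  have i0 := (hg 0).integrable
  have i1 := (h.pd 0).integrable
  have hzi : ∫ x, ((u x)⁻¹ * pd w 0 x).im = 0 := by
    have := integral_im i0 (𝕜 := ℂ)
    rw [hz] at this; simpa using this
  have hz2i : ∫ x, (pd w 0 x).im = 0 := by
    have := integral_im i1 (𝕜 := ℂ)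
    rw [hz2] at this; simpa using this
  have hpc := (h.pd 0).cont
  have hkey : Mo w = ∫ x, -((1 - ‖u x‖ ^ 2) * ((u x)⁻¹ * pd w 0 x).im) := by
    have e : ∀ x, ((starRingEnd ℂ) (w x) * pd w 0 x).im =
        -((1 - ‖u x‖ ^ 2) * ((u x)⁻¹ * pd w 0 x).im) + (((u x)⁻¹ * pd w 0 x).im - (pd w 0 x).im) := by
      intro x
      have e1 : ((‖u x‖ ^ 2 : ℝ) : ℂ) * ((u x)⁻¹ * pd w 0 x) = (starRingEnd ℂ) (u x) * pd w 0 x := by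
        have := hu0 x
        rw [← Complex.normSq_eq_norm_sq, ← Complex.mul_conj]; field_simp
      have e2 : ‖u x‖ ^ 2 * ((u x)⁻¹ * pd w 0 x).im = ((starRingEnd ℂ) (u x) * pd w 0 x).im := by
        rw [← e1, Complex.im_ofReal_mul]
      have e3 : ((starRingEnd ℂ) (u x) * pd w 0 x).im = (pd w 0 x).im +
          ((starRingEnd ℂ) (w x) * pd w 0 x).im := by
        simp [hu]; ring
      linear_combination -e3 - e2
    unfold Mo
    rw [integral_congr_ae (Eventually.of_forall e)]
    have hq : Integrable (fun x => -((1 - ‖u x‖ ^ 2) * ((u x)⁻¹ * pd w 0 x).im)) := by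
      have h1 : HasCompactSupport (fun x => ((u x)⁻¹ * pd w 0 x).im) :=
        hcs_comp (hg 0).2 (fun z : ℂ => z.im) (by simp)
      have hc1 := (hg 0).cont
      have hc2 := hus.continuous
      refine Continuous.integrable_of_hasCompactSupport ?_ (h1.mul_left.comp_left (g := fun z : ℝ => -z) (by simp))
      exact (((continuous_const.sub (hc2.norm.pow 2)).mul (Complex.continuous_im.comp hc1))).neg
    have j0 : Integrable (fun x => ((u x)⁻¹ * pd w 0 x).im) := i0.im
    have j1 : Integrable (fun x => (pd w 0 x).im) := i1.im
    have j2 : Integrable (fun x => ((u x)⁻¹ * pd w 0 x).im - (pd w 0 x).im) := j0.sub j1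
    rw [integral_add hq j2, integral_sub j0 j1, hzi, hz2i]; simp
  have hcs := cs_integral (μ := volume) (f := fun x => 1 - ‖u x‖ ^ 2) (g := fun x => ‖pd w 0 x‖)
    (by have := hus.continuous; exact Continuous.aestronglyMeasurable (by fun_prop))
    hpc.norm.aestronglyMeasurable h.int_pot (h.int_G 0)
  have e4 : 4 * Vp w = ∫ x, (1 - ‖u x‖ ^ 2) ^ 2 := by unfold Vp; ring
  rw [hkey, e4]
  calc |∫ x, -((1 - ‖u x‖ ^ 2) * ((u x)⁻¹ * pd w 0 x).im)|
      ≤ ∫ x, 1 / r * |(1 - ‖u x‖ ^ 2) * ‖pd w 0 x‖| := by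
        rw [← Real.norm_eq_abs]
        refine norm_integral_le_of_norm_le (hcs.1.abs.const_mul _) (Eventually.of_forall fun x => ?_)
        rw [norm_neg, Real.norm_eq_abs, abs_mul, abs_mul, abs_norm, ← mul_assoc, mul_comm (1 / r),
          mul_assoc]
        gcongr
        refine (Complex.abs_im_le_norm _).trans ?_
        rw [norm_mul, norm_inv, one_div]
        gcongr; exact hw x
    _ ≤ _ := by
        rw [integral_const_mul]
        exact mul_le_mul_of_nonneg_left hcs.2 (by positivity)

lemma sqrt_int_le {f : Ed 3 → ℂ} {a b : ℝ} (h : ∫ x, ‖f x‖ ^ 2 ≤ a ^ 2 * b) (ha : 0 ≤ a) :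
    Real.sqrt (∫ x, ‖f x‖ ^ 2) ≤ a * Real.sqrt b := by
  refine (Real.sqrt_le_sqrt h).trans ?_
  rw [Real.sqrt_mul (sq_nonneg a), Real.sqrt_sq ha]

lemma im_int_le {f g : Ed 3 → ℂ} (hf : TF f) (hg : TF g) :
    |∫ x, ((starRingEnd ℂ) (f x) * g x).im| ≤
      Real.sqrt (∫ x, ‖f x‖ ^ 2) * Real.sqrt (∫ x, ‖g x‖ ^ 2) := by
  have hcs := cs_integral (μ := volume) (f := fun x => ‖f x‖) (g := fun x => ‖g x‖)
    hf.cont.norm.aestronglyMeasurable hg.cont.norm.aestronglyMeasurable hf.int_normsq hg.int_normsq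
  refine le_trans ?_ hcs.2
  rw [← Real.norm_eq_abs]
  refine norm_integral_le_of_norm_le hcs.1.abs (Eventually.of_forall fun x => ?_)
  refine (Complex.abs_im_le_norm _).trans ?_
  rw [norm_mul, abs_mul]; simp

/-- The momentum is Lipschitz in `L²` on fields of bounded longitudinal energy. -/
lemma mo_diff {v w : Ed 3 → ℂ} (hv : TF v) (hw : TF w) :
    |Mo v - Mo w| ≤ Real.sqrt (∫ x, ‖w x - v x‖ ^ 2) * (Real.sqrt (G 0 v) + Real.sqrt (G 0 w)) := by
  have hd := hw.sub hv
  have e1 : Mo w - Mo v = (∫ x, ((starRingEnd ℂ) (w x - v x) * pd v 0 x).im) +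
      ∫ x, ((starRingEnd ℂ) (w x - v x) * pd w 0 x).im := by
    have i1 := hd.int_im (hv.pd 0).cont
    have i2 := hd.int_im (hw.pd 0).cont
    have i3 := hw.int_im (hw.pd 0).cont
    have i4 := hv.int_im (hv.pd 0).cont
    have i5 := hv.int_im (hw.pd 0).cont
    have i6 := hw.int_im (hv.pd 0).cont
    have e2 : ∫ x, ((starRingEnd ℂ) (v x) * pd w 0 x).im =
        ∫ x, ((starRingEnd ℂ) (w x) * pd v 0 x).im := by
      have h1 := ibp hv.conj.c1 hw.c1 hw.2 0
      have h2 := congrArg Complex.im h1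
      have j1 := integral_im (𝕜 := ℂ) (hv.conj.int_mul (hw.pd 0).cont)
      have j2 := integral_im (𝕜 := ℂ) ((hv.conj.pd 0).int_mul hw.cont)
      simp only [RCLike.im_to_complex] at j1 j2
      rw [Complex.neg_im, ← j1, ← j2, ← integral_neg] at h2
      rw [h2]
      refine integral_congr_ae (Eventually.of_forall fun x => ?_)
      simp only [pd_conj v (hv.diff x)]
      simp; ring
    simp only [map_sub, sub_mul, Complex.sub_im]
    rw [integral_sub i6 i4, integral_sub i3 i5, e2]
    unfold Mo; ring
  rw [abs_sub_comm, e1, mul_add]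
  exact (abs_add_le _ _).trans (add_le_add (im_int_le hd (hv.pd 0)) (im_int_le hd (hw.pd 0)))

/-- The potential energy of a mollification exceeds the original one only slightly where the local
variance is at most one. -/
lemma Vp_ml (k : ℕ) {v : Ed 3 → ℂ} (h : TF v) (hv : ∀ x, vr k v x ≤ 1) :
    4 * Vp (ml k v) ≤ (1 + hk k) * (4 * Vp v + hk k * DG v) := by
  have hh := hk_pos k
  -- `m = 1 - |1 + v|²`, as a complex test function
  set m : Ed 3 → ℂ := fun x => ((1 - ‖1 + v x‖ ^ 2 : ℝ) : ℂ) with hm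
  have hmT : TF m := by
    refine ⟨?_, hcs_comp h.2 (fun z : ℂ => ((1 - ‖1 + z‖ ^ 2 : ℝ) : ℂ)) (by simp)⟩
    exact Complex.ofRealCLM.contDiff.comp
      (contDiff_const.sub ((contDiff_const.add h.1).norm_sq ℝ))
  have hc := h.cont
  have hml : ∀ x, ml k m x = ((1 - ‖1 + ml k v x‖ ^ 2 - vr k v x : ℝ) : ℂ) := by
    intro x
    obtain ⟨C, hC⟩ := h.bdd
    have hi : Integrable (fun y => ‖1 + v (x - y)‖ ^ 2) (Mp k) := by
      refine Mp_integrable (f := fun x => ‖1 + v x‖ ^ 2) k (by fun_prop) ⟨(1 + C) ^ 2, fun x => ?_⟩ x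
      rw [Real.norm_of_nonneg (by positivity)]
      gcongr
      exact (norm_add_le _ _).trans (by simpa using hC x)
    rw [vr, ml_eq, ml_eq k (fun x => ‖1 + v x‖ ^ 2), hm]
    change (∫ y, ((1 - ‖1 + v (x - y)‖ ^ 2 : ℝ) : ℂ) ∂Mp k) = _
    rw [integral_complex_ofReal (f := fun y => (1 - ‖1 + v (x - y)‖ ^ 2 : ℝ))]
    rw [integral_sub (integrable_const _) hi]
    simp
  have h1 : ∀ x, (1 - ‖1 + ml k v x‖ ^ 2) ^ 2 ≤
      (1 + hk k) * (‖ml k m x‖ ^ 2) + (1 + 1 / hk k) * vr k v x := by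
    intro x
    rw [hml, Complex.norm_real, Real.norm_eq_abs, sq_abs]
    set a := 1 - ‖1 + ml k v x‖ ^ 2
    have h0 := vr_nonneg k h x
    have h01 := hv x
    have h02 : vr k v x ^ 2 ≤ vr k v x := by nlinarith
    have h03 : (1 + 1 / hk k) * vr k v x ^ 2 ≤ (1 + 1 / hk k) * vr k v x := by gcongr
    refine le_trans ?_ (add_le_add le_rfl h03)
    have : (1 + hk k) * (a - vr k v x) ^ 2 + (1 + 1 / hk k) * vr k v x ^ 2 - a ^ 2 =
      1 / hk k * (hk k * (a - vr k v x) - vr k v x) ^ 2 := by field_simp; ring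
    have h04 : 0 ≤ 1 / hk k * (hk k * (a - vr k v x) - vr k v x) ^ 2 := by positivity
    linarith
  have h2 := integral_mono (ml_TF k h).int_pot
    (((ml_TF k hmT).int_normsq.const_mul (1 + hk k)).add ((vr_int k h).1.const_mul (1 + 1 / hk k))) h1
  simp only [Pi.add_apply] at h2
  rw [integral_add ((ml_TF k hmT).int_normsq.const_mul (1 + hk k))
    ((vr_int k h).1.const_mul (1 + 1 / hk k)), integral_const_mul, integral_const_mul] at h2
  have h3 := ml_L2 k hmT
  have h4 : ∫ x, ‖m x‖ ^ 2 = 4 * Vp v := by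
    unfold Vp
    simp only [hm, Complex.norm_real, Real.norm_eq_abs, sq_abs]; ring
  have h5 : 4 * Vp (ml k v) = ∫ x, (1 - ‖1 + ml k v x‖ ^ 2) ^ 2 := by unfold Vp; ring
  have h6 := (vr_int k h).2
  rw [h5]
  refine h2.trans ?_
  rw [h4] at h3
  have h7 : (1 + hk k) * ∫ x, ‖ml k m x‖ ^ 2 ≤ (1 + hk k) * (4 * Vp v) := by gcongr
  have h8 : (1 + 1 / hk k) * ∫ x, vr k v x ≤ (1 + 1 / hk k) * (hk k ^ 2 * DG v) := by gcongr
  have h9 : (1 + 1 / hk k) * (hk k ^ 2 * DG v) = (1 + hk k) * (hk k * DG v) := by field_simp; ring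
  linarith

/-- Subsonic fields with `K + V ≤ cP = π₀` must, after mollification at a fixed scale, somewhere be away from
the unit circle or have large local variance. Otherwise the lifting bound applies to the mollified
field, and `4V · 2K ≤ 2π₀²` gives `π₀ ≤ (c/√2) π₀` up to a small error. -/
lemma nonvanish {c π0 M : ℝ} (hc : 0 < c) (hc2 : c < Real.sqrt 2) (hπ : 0 < π0) (hM : 0 ≤ M) :
    ∃ k : ℕ, ∀ v, TF v → Af v ≤ M → Kf v + Vp v ≤ pf c v → pf c v = π0 →
      ∃ x, ‖1 + ml k v x‖ ≤ 1 - hk k ∨ 1 ≤ vr k v x := by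
  set D := 2 * (π0 + M) with hD
  -- The momentum bound as a function of the mollifier radius; at radius zero it is `(c / √2) π₀ < π₀`.
  have hlim : Tendsto (fun h : ℝ => c / 2 * (1 / (1 - h) * Real.sqrt ((1 + h) * (2 * π0 ^ 2 + h * D ^ 2)))
      + c * h * D) (𝓝 0) (𝓝 (c / 2 * (1 / (1 - 0) * Real.sqrt ((1 + 0) * (2 * π0 ^ 2 + 0 * D ^ 2)))
      + c * 0 * D)) := by
    apply ContinuousAt.tendsto
    refine ContinuousAt.add (ContinuousAt.mul continuousAt_const (ContinuousAt.mul ?_ ?_)) ?_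
    · exact ContinuousAt.div continuousAt_const (by fun_prop) (by norm_num)
    · fun_prop
    · fun_prop
  have hval : c / 2 * (1 / (1 - 0) * Real.sqrt ((1 + 0) * (2 * π0 ^ 2 + 0 * D ^ 2))) + c * 0 * D < π0 := by
    have : Real.sqrt ((1 + 0) * (2 * π0 ^ 2 + 0 * D ^ 2)) = Real.sqrt 2 * π0 := by
      rw [show (1 + 0) * (2 * π0 ^ 2 + 0 * D ^ 2) = 2 * π0 ^ 2 by ring,
        Real.sqrt_mul (by norm_num), Real.sqrt_sq hπ.le]
    rw [this]
    have h2 : Real.sqrt 2 * Real.sqrt 2 = 2 := Real.mul_self_sqrt (by norm_num)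
    have h3 : 0 < Real.sqrt 2 := by positivity
    nlinarith [mul_pos hπ h3]
  have hev := (hlim.comp hk_tendsto).eventually (gt_mem_nhds hval)
  have hev2 := hk_tendsto.eventually (gt_mem_nhds (show (0:ℝ) < 1 by norm_num))
  obtain ⟨k, hk1, hk2⟩ := (hev.and hev2).exists
  refine ⟨k, fun v h hA hKV hp => ?_⟩
  by_contra hcon
  push Not at hcon
  have hh := hk_pos k
  have hK0 := Kf_nonneg v
  have hV0 := Vp_nonneg v
  have hDG : DG v ≤ D := by
    have : DG v = 2 * (Kf v + Af v) := by unfold DG Kf Af; ring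
    rw [this, hD]; nlinarith
  have hDG0 : 0 ≤ DG v := add_nonneg (add_nonneg (G_nonneg _ _) (G_nonneg _ _)) (G_nonneg _ _)
  have hG0 : G 0 v = 2 * Kf v := by unfold Kf; ring
  have hG0D : G 0 v ≤ D := by
    refine le_trans ?_ hDG
    unfold DG; linarith [G_nonneg 1 v, G_nonneg 2 v]
  have hl := mo_lift (ml_TF k h) (r := 1 - hk k) (by linarith) (fun x => (hcon x).1.le)
  have hd := mo_diff h (ml_TF k h)
  have hV := Vp_ml k h (fun x => (hcon x).2.le)
  have hGk := G_ml k h 0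
  have hs1 : Real.sqrt (4 * Vp (ml k v)) * Real.sqrt (G 0 (ml k v)) ≤
      Real.sqrt ((1 + hk k) * (2 * π0 ^ 2 + hk k * D ^ 2)) := by
    rw [← Real.sqrt_mul (by have := Vp_nonneg (ml k v); positivity)]
    refine Real.sqrt_le_sqrt ?_
    calc 4 * Vp (ml k v) * G 0 (ml k v) ≤ ((1 + hk k) * (4 * Vp v + hk k * DG v)) * G 0 v := by
          gcongr
          exact G_nonneg _ _
      _ = (1 + hk k) * (4 * Vp v * G 0 v + hk k * (DG v * G 0 v)) := by ring
      _ ≤ (1 + hk k) * (2 * π0 ^ 2 + hk k * D ^ 2) := by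
          have a1 : 4 * Vp v * G 0 v ≤ 2 * π0 ^ 2 := by
            rw [hG0]; nlinarith [sq_nonneg (Kf v - Vp v), mul_nonneg hK0 hV0]
          have a2 : DG v * G 0 v ≤ D ^ 2 := by
            rw [pow_two]; exact mul_le_mul hDG hG0D (G_nonneg _ _) (hDG0.trans hDG)
          gcongr
  have hs2 : Real.sqrt (∫ x, ‖ml k v x - v x‖ ^ 2) * (Real.sqrt (G 0 v) + Real.sqrt (G 0 (ml k v)))
      ≤ 2 * hk k * D := by
    have b1 := sqrt_int_le (ml_close_int k h) hh.le
    have b2 : Real.sqrt (DG v) ≤ Real.sqrt D := Real.sqrt_le_sqrt hDG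
    have b3 : Real.sqrt (G 0 v) ≤ Real.sqrt D := Real.sqrt_le_sqrt hG0D
    have b4 : Real.sqrt (G 0 (ml k v)) ≤ Real.sqrt D := Real.sqrt_le_sqrt (hGk.trans hG0D)
    calc _ ≤ (hk k * Real.sqrt D) * (Real.sqrt D + Real.sqrt D) := by
          gcongr
          exact b1.trans (by gcongr)
      _ = 2 * hk k * (Real.sqrt D * Real.sqrt D) := by ring
      _ = _ := by rw [Real.mul_self_sqrt (hDG0.trans hDG)]
  have hfin : |Mo v| ≤ 1 / (1 - hk k) * Real.sqrt ((1 + hk k) * (2 * π0 ^ 2 + hk k * D ^ 2))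
      + 2 * hk k * D := by
    have : |Mo v| ≤ |Mo v - Mo (ml k v)| + |Mo (ml k v)| := by
      simpa using abs_add_le (Mo v - Mo (ml k v)) (Mo (ml k v))
    have h1k : 0 < 1 - hk k := by linarith
    have c1 : 1 / (1 - hk k) * (Real.sqrt (4 * Vp (ml k v)) * Real.sqrt (G 0 (ml k v))) ≤
      1 / (1 - hk k) * Real.sqrt ((1 + hk k) * (2 * π0 ^ 2 + hk k * D ^ 2)) := by gcongr
    linarith
  have hlast : π0 ≤ c / 2 * |Mo v| := by
    rw [← hp]; unfold pf
    nlinarith [neg_abs_le (Mo v)]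
  simp only [Function.comp] at hk1
  have := mul_le_mul_of_nonneg_left hfin (by positivity : 0 ≤ c / 2)
  linarith

/-! ### Local compactness -/

lemma eLp2 {α : Type*} [MeasurableSpace α] {μ : Measure α} {f : α → ℂ} (hf : MemLp f 2 μ) :
    eLpNorm f 2 μ = ENNReal.ofReal (Real.sqrt (∫ x, ‖f x‖ ^ 2 ∂μ)) := by
  rw [hf.eLpNorm_eq_integral_rpow_norm (by norm_num) (by norm_num), Real.sqrt_eq_rpow]
  norm_num

/-- A sequence that is uniformly well approximated in `L²` by sequences that converge pointwise
and boundedly is Cauchy, hence convergent, in `L²`. -/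
lemma l2_conv {α : Type*} [MeasurableSpace α] {μ : Measure α} [IsFiniteMeasure μ]
    {F : ℕ → α → ℂ} {H : ℕ → ℕ → α → ℂ} {b : ℕ → ENNReal} {C : ℕ → ℝ}
    (hF : ∀ n, MemLp (F n) 2 μ) (hH : ∀ k n, AEStronglyMeasurable (H k n) μ)
    (hC : ∀ k n x, ‖H k n x‖ ≤ C k) (hb : Tendsto b atTop (𝓝 0))
    (hFH : ∀ k n, eLpNorm (F n - H k n) 2 μ ≤ b k)
    (hc : ∀ k x, ∃ l, Tendsto (fun n => H k n x) atTop (𝓝 l)) :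
    ∃ V : α → ℂ, MemLp V 2 μ ∧ Tendsto (fun n => eLpNorm (F n - V) 2 μ) atTop (𝓝 0) := by
  choose g hg using hc
  have hmH : ∀ k n, MemLp (H k n) 2 μ := fun k n =>
    MemLp.of_bound (hH k n) (C k) (Eventually.of_forall (hC k n))
  have hgm : ∀ k, AEStronglyMeasurable (g k) μ := fun k =>
    aestronglyMeasurable_of_tendsto_ae atTop (hH k) (Eventually.of_forall (hg k))
  have hgC : ∀ k x, ‖g k x‖ ≤ C k := fun k x =>
    le_of_tendsto (hg k x).norm (Eventually.of_forall fun n => hC k n x)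
  have hmg : ∀ k, MemLp (g k) 2 μ := fun k =>
    MemLp.of_bound (hgm k) (C k) (Eventually.of_forall (hgC k))
  have hlim : ∀ k, Tendsto (fun n => eLpNorm (H k n - g k) 2 μ) atTop (𝓝 0) := by
    intro k
    have e : (fun n => eLpNorm (H k n - g k) 2 μ) =
        fun n => ENNReal.ofReal (Real.sqrt (∫ x, ‖H k n x - g k x‖ ^ 2 ∂μ)) := by
      funext n; rw [eLp2 ((hmH k n).sub (hmg k))]; rfl
    rw [e]
    have : Tendsto (fun n => ∫ x, ‖H k n x - g k x‖ ^ 2 ∂μ) atTop (𝓝 (∫ _, (0:ℝ) ∂μ)) := by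
      refine tendsto_integral_of_dominated_convergence (fun _ => (2 * C k) ^ 2) (fun n => ?_)
        (integrable_const _) (fun n => Eventually.of_forall fun x => ?_)
        (Eventually.of_forall fun x => ?_)
      · exact ((hH k n).sub (hgm k)).norm.pow 2
      · rw [Real.norm_of_nonneg (by positivity)]
        gcongr
        linarith [norm_sub_le (H k n x) (g k x), hC k n x, hgC k x]
      · have := ((hg k x).sub_const (g k x)).norm.pow 2
        simpa using this
    have h2 := (ENNReal.continuous_ofReal.comp Real.continuous_sqrt).continuousAt.tendsto.comp this
    simpa [Function.comp_def] using h2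
  let f : ℕ → Lp ℂ 2 μ := fun n => (hF n).toLp
  have hcs : CauchySeq f := by
    rw [EMetric.cauchySeq_iff]
    intro ε hε
    have hε4 : 0 < ε / 4 := ENNReal.div_pos hε.ne' (by norm_num)
    obtain ⟨k, hk⟩ := ((tendsto_order.1 hb).2 _ hε4).exists
    obtain ⟨N, hN⟩ := eventually_atTop.1 ((tendsto_order.1 (hlim k)).2 _ hε4)
    refine ⟨N, fun m hm n hn => ?_⟩
    have key : ∀ n, N ≤ n → eLpNorm (F n - g k) 2 μ < ε / 2 := by
      intro n hn
      have : F n - g k = (F n - H k n) + (H k n - g k) := by abel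
      rw [this]
      refine (eLpNorm_add_le ((hF n).sub (hmH k n)).1 ((hmH k n).sub (hmg k)).1 (by norm_num)).trans_lt ?_
      have : ε / 2 = ε / 4 + ε / 4 := by
        rw [← ENNReal.add_div, ← two_mul]
        rw [show (4 : ENNReal) = 2 * 2 by norm_num, ENNReal.mul_div_mul_left _ _ (by norm_num) (by norm_num)]
      rw [this]
      exact ENNReal.add_lt_add ((hFH k n).trans_lt hk) (hN n hn)
    rw [Lp.edist_toLp_toLp]
    have : F m - F n = (F m - g k) - (F n - g k) := by abel
    rw [this]
    refine (eLpNorm_sub_le ((hF m).sub (hmg k)).1 ((hF n).sub (hmg k)).1 (by norm_num)).trans_lt ?_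
    rw [← ENNReal.add_halves ε]
    exact ENNReal.add_lt_add (key m hm) (key n hn)
  obtain ⟨V, hV⟩ := cauchySeq_tendsto_of_complete hcs
  refine ⟨V, Lp.memLp V, ?_⟩
  rw [Lp.tendsto_Lp_iff_tendsto_eLpNorm'] at hV
  refine hV.congr fun n => eLpNorm_congr_ae ?_
  filter_upwards [(hF n).coeFn_toLp] with x hx
  simp [f, hx]

/-- Uniformly Lipschitz functions converging on a dense sequence converge everywhere. -/
lemma conv_of_dense {f : ℕ → Ed 3 → ℂ} {L : ℝ} (hL : 0 ≤ L)
    (hf : ∀ n x z, ‖f n x - f n z‖ ≤ L * ‖x - z‖)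
    (hd : ∀ j, ∃ l, Tendsto (fun n => f n (TopologicalSpace.denseSeq (Ed 3) j)) atTop (𝓝 l))
    (x : Ed 3) : ∃ l, Tendsto (fun n => f n x) atTop (𝓝 l) := by
  apply cauchySeq_tendsto_of_complete
  rw [Metric.cauchySeq_iff]
  intro ε hε
  obtain ⟨j, hj⟩ := (TopologicalSpace.denseRange_denseSeq (Ed 3)).exists_dist_lt x
    (show 0 < ε / (3 * (L + 1)) by positivity)
  obtain ⟨l, hl⟩ := hd j
  obtain ⟨N, hN⟩ := Metric.cauchySeq_iff.1 hl.cauchySeq (ε / 3) (by positivity)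
  refine ⟨N, fun m hm n hn => ?_⟩
  set z := TopologicalSpace.denseSeq (Ed 3) j
  have a : ∀ n, dist (f n x) (f n z) < ε / 3 := by
    intro n
    rw [dist_eq_norm]
    refine (hf n x z).trans_lt ?_
    rw [dist_eq_norm] at hj
    have h1 : L * ‖x - z‖ ≤ (L + 1) * ‖x - z‖ := by gcongr; linarith
    refine h1.trans_lt ?_
    rw [lt_div_iff₀ (by positivity)] at hj
    nlinarith
  have b := dist_triangle4 (f m x) (f m z) (f n z) (f n x)
  have c := hN m hm n hn
  have d := a n
  rw [dist_comm] at d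
  linarith [a m]

/-- Mollifications of fields of bounded Dirichlet energy are uniformly Lipschitz. -/
lemma ml_lip (k : ℕ) : ∃ R, 0 ≤ R ∧ ∀ v, TF v → ∀ x z,
    ‖ml k v x - ml k v z‖ ≤ R * Real.sqrt (DG v) * ‖x - z‖ := by
  obtain ⟨R, hR, h⟩ := ml_sup k
  refine ⟨R, hR, fun v hv x z => ?_⟩
  have h0 : 0 ≤ DG v := add_nonneg (add_nonneg (G_nonneg _ _) (G_nonneg _ _)) (G_nonneg _ _)
  have hs := (hv.shift (x - z)).sub hv
  have h1 := h _ hs.cont.aestronglyMeasurable hs.int_normsq z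
  have e : ml k (fun y => v (y + (x - z)) - v y) z = ml k v x - ml k v z := by
    rw [ml_eq, ml_eq, ml_eq, integral_sub]
    · congr 2; funext y; congr 1; abel
    · exact Mp_integrable k (hv.shift (x-z)).cont (hv.shift (x-z)).bdd z
    · exact Mp_integrable k hv.cont hv.bdd z
  rw [e] at h1
  refine h1.trans ?_
  rw [mul_assoc]
  gcongr
  have h2 := shift_le_DG hv (x - z)
  rw [mul_comm, ← Real.sqrt_sq (norm_nonneg (x - z)), ← Real.sqrt_mul (by positivity)]
  exact Real.sqrt_le_sqrt h2

/-- Mollifications of fields of bounded potential energy are uniformly bounded. -/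
lemma ml_bd (k : ℕ) : ∃ R, 0 ≤ R ∧ ∀ v, TF v → ∀ x, ‖1 + ml k v x‖ ^ 2 ≤ 1 + R * Real.sqrt (4 * Vp v) := by
  obtain ⟨R, hR, h⟩ := ml_sup k
  refine ⟨R, hR, fun v hv x => ?_⟩
  have hc : Continuous (fun x => 1 + v x) := continuous_const.add hv.cont
  obtain ⟨C, hC⟩ := hv.bdd
  have hb : ∀ x, ‖1 + v x‖ ≤ 1 + C := fun x => (norm_add_le _ _).trans (by simpa using hC x)
  have h1 := ml_norm_sq_le k hc ⟨_, hb⟩ x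
  have hi := Mp_integrable k hv.cont hv.bdd x
  have e1 : ml k (fun x => 1 + v x) x = 1 + ml k v x := by
    rw [ml_eq, ml_eq, integral_add (integrable_const _) hi]; simp
  rw [e1] at h1
  refine h1.trans ?_
  have hm : Integrable (fun x => ‖((1 - ‖1 + v x‖ ^ 2 : ℝ) : ℂ)‖ ^ 2) := by
    have := hv.int_pot
    simpa only [Complex.norm_real, Real.norm_eq_abs, sq_abs] using this
  have hcm : Continuous (fun x => ((1 - ‖1 + v x‖ ^ 2 : ℝ) : ℂ)) := by fun_prop
  have h2 := h _ hcm.aestronglyMeasurable hm x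
  have hi2 : Integrable (fun y => ‖1 + v (x - y)‖ ^ 2) (Mp k) := by
    refine Mp_integrable (f := fun x => ‖1 + v x‖ ^ 2) k (by fun_prop) ⟨(1 + C) ^ 2, fun x => ?_⟩ x
    rw [Real.norm_of_nonneg (by positivity)]
    gcongr
    exact hb x
  have e2 : ml k (fun x => ((1 - ‖1 + v x‖ ^ 2 : ℝ) : ℂ)) x =
      ((1 - ml k (fun x => ‖1 + v x‖ ^ 2) x : ℝ) : ℂ) := by
    rw [ml_eq, ml_eq k (fun x => ‖1 + v x‖ ^ 2),
      integral_complex_ofReal (f := fun y => (1 - ‖1 + v (x - y)‖ ^ 2 : ℝ)),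
      integral_sub (integrable_const _) hi2]
    simp
  have e3 : ∫ x, ‖((1 - ‖1 + v x‖ ^ 2 : ℝ) : ℂ)‖ ^ 2 = 4 * Vp v := by
    unfold Vp; simp only [Complex.norm_real, Real.norm_eq_abs, sq_abs]; ring
  rw [e2, e3, Complex.norm_real, Real.norm_eq_abs] at h2
  have := neg_abs_le (1 - ml k (fun x => ‖1 + v x‖ ^ 2) x)
  linarith

/-- The weight defining the finite measure `nu`. -/
def wt (x : Ed 3) : ℝ := (1 + ‖x‖) ^ (-4 : ℝ)
lemma wt_int : Integrable wt := integrable_one_add_norm (by simp; norm_num)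
lemma wt_pos (x : Ed 3) : 0 < wt x := by unfold wt; positivity
lemma wt_meas : Measurable fun x => ENNReal.ofReal (wt x) := by unfold wt; fun_prop

/-- A finite measure with positive density, hence with the same null sets as Lebesgue measure. -/
def nu : Measure (Ed 3) := volume.withDensity fun x => ENNReal.ofReal (wt x)
instance : IsFiniteMeasure nu := isFiniteMeasure_withDensity_ofReal wt_int.2
lemma nu_le : nu ≤ volume := by
  have : nu ≤ volume.withDensity 1 := by
    refine withDensity_mono (Eventually.of_forall fun x => ?_)
    simp only [Pi.one_apply]
    rw [ENNReal.ofReal_le_one]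
    exact Real.rpow_le_one_of_one_le_of_nonpos (by linarith [norm_nonneg x]) (by norm_num)
  simpa using this
lemma vol_ac_nu : (volume : Measure (Ed 3)) ≪ nu :=
  withDensity_absolutelyContinuous' wt_meas.aemeasurable
    (Eventually.of_forall fun x => by simpa using wt_pos x)
lemma restrict_le_nu (R : ℝ) (hR : 0 ≤ R) :
    (volume : Measure (Ed 3)).restrict (closedBall 0 R) ≤ ENNReal.ofReal ((1 + R) ^ (4 : ℝ)) • nu := by
  refine Measure.le_iff.2 fun s hs => ?_
  rw [Measure.restrict_apply hs, Measure.smul_apply, smul_eq_mul, nu, withDensity_apply _ hs,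
    ← lintegral_const_mul _ wt_meas]
  calc volume (s ∩ closedBall 0 R) = ∫⁻ x in s ∩ closedBall 0 R, 1 := by simp
    _ ≤ ∫⁻ x in s ∩ closedBall 0 R, ENNReal.ofReal ((1 + R) ^ (4 : ℝ)) * ENNReal.ofReal (wt x) := by
        refine setLIntegral_mono' (hs.inter measurableSet_closedBall) fun x hx => ?_
        rw [← ENNReal.ofReal_mul (by positivity), ← ENNReal.ofReal_one]
        apply ENNReal.ofReal_le_ofReal
        have hx2 : ‖x‖ ≤ R := by simpa using hx.2
        unfold wt
        rw [Real.rpow_neg (by positivity), ← div_eq_mul_inv, one_le_div (by positivity)]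
        gcongr
    _ ≤ _ := lintegral_mono_set Set.inter_subset_left

/-- Rellich-type compactness for test functions of bounded energy. -/
lemma compactness (v : ℕ → Ed 3 → ℂ) (hv : ∀ n, TF (v n)) (C : ℝ) (hD : ∀ n, DG (v n) ≤ C)
    (hV : ∀ n, Vp (v n) ≤ C) : ∃ φ : ℕ → ℕ, StrictMono φ ∧ ∃ V : Ed 3 → ℂ,
      StronglyMeasurable V ∧ (∀ᵐ x, Tendsto (fun n => v (φ n) x) atTop (𝓝 (V x))) ∧
      ∀ R, MemLp V 2 (volume.restrict (closedBall 0 R)) ∧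
        Tendsto (fun n => eLpNorm (v (φ n) - V) 2 (volume.restrict (closedBall 0 R))) atTop (𝓝 0) := by
  have hDn : ∀ n, 0 ≤ DG (v n) := fun n =>
    add_nonneg (add_nonneg (G_nonneg _ _) (G_nonneg _ _)) (G_nonneg _ _)
  have hC0 : 0 ≤ C := (hDn 0).trans (hD 0)
  choose R1 hR1 h1 using ml_lip
  choose R2 hR2 h2 using ml_bd
  let B : ℕ → ℝ := fun k => 1 + Real.sqrt (1 + R2 k * Real.sqrt (4 * C))
  have hB : ∀ k n x, ‖ml k (v n) x‖ ≤ B k := by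
    intro k n x
    have a : ‖1 + ml k (v n) x‖ ≤ Real.sqrt (1 + R2 k * Real.sqrt (4 * C)) := by
      apply Real.le_sqrt_of_sq_le
      refine (h2 k _ (hv n) x).trans ?_
      have := hR2 k
      gcongr; exact hV n
    have b := norm_sub_le (1 + ml k (v n) x) 1
    simp only [add_sub_cancel_left, norm_one] at b
    show _ ≤ 1 + _
    linarith
  have hL : ∀ k n x z, ‖ml k (v n) x - ml k (v n) z‖ ≤ (R1 k * Real.sqrt C) * ‖x - z‖ := by
    intro k n x z
    refine (h1 k _ (hv n) x z).trans ?_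
    have := hR1 k
    gcongr; exact hD n
  -- Diagonal extraction by compactness of a product: all mollifications are followed at the points of a
  -- dense sequence.
  let S : Set (ℕ × ℕ → ℂ) := Set.univ.pi fun p => closedBall (0 : ℂ) (B p.1)
  have hS : IsCompact S := isCompact_univ_pi fun p => isCompact_closedBall _ _
  let X : ℕ → (ℕ × ℕ → ℂ) := fun n p => ml p.1 (v n) (TopologicalSpace.denseSeq (Ed 3) p.2)
  obtain ⟨a, -, φ, hφ, hlim⟩ := hS.tendsto_subseq (x := X) fun n p _ => by
    simpa using hB p.1 n _
  have hpt : ∀ k x, ∃ l, Tendsto (fun n => ml k (v (φ n)) x) atTop (𝓝 l) := by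
    intro k x
    refine conv_of_dense (f := fun n => ml k (v (φ n))) (mul_nonneg (hR1 k) (Real.sqrt_nonneg C))
      (fun n => hL k (φ n)) (fun j => ⟨a (k, j), ?_⟩) x
    exact (tendsto_pi_nhds.1 hlim) (k, j)
  have hmem : ∀ w, TF w → MemLp w 2 (volume : Measure (Ed 3)) := fun w hw =>
    (memLp_two_iff_integrable_sq_norm hw.cont.aestronglyMeasurable).2 hw.int_normsq
  obtain ⟨V, hV1, hV2⟩ := l2_conv (μ := nu) (F := fun n => v (φ n)) (H := fun k n => ml k (v (φ n)))
    (b := fun k => ENNReal.ofReal (hk k * Real.sqrt C)) (C := B)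
    (fun n => (hmem _ (hv _)).mono_measure nu_le)
    (fun k n => (ml_TF k (hv _)).cont.aestronglyMeasurable) (fun k n x => hB k _ x)
    (by
      have := ENNReal.continuous_ofReal.continuousAt.tendsto.comp (hk_tendsto.mul_const (Real.sqrt C))
      simpa [Function.comp_def] using this)
    (fun k n => by
      have hT := (hv (φ n)).sub (ml_TF k (hv (φ n)))
      refine (eLpNorm_mono_measure _ nu_le).trans ?_
      have e := eLp2 (hmem _ hT)
      change eLpNorm (fun x => v (φ n) x - ml k (v (φ n)) x) 2 volume ≤ _
      rw [e]
      apply ENNReal.ofReal_le_ofReal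
      have hc := ml_close_int k (hv (φ n))
      simp only [norm_sub_rev (v (φ n) _)]
      rw [← Real.sqrt_sq (hk_pos k).le, ← Real.sqrt_mul (by positivity)]
      apply Real.sqrt_le_sqrt
      refine hc.trans ?_
      gcongr; exact hD _) hpt
  obtain ⟨ns, hns, hae⟩ := (tendstoInMeasure_of_tendsto_eLpNorm (by norm_num)
    (fun n => (hv (φ n)).cont.aestronglyMeasurable) hV1.1 hV2).exists_seq_tendsto_ae
  have hVm := hV1.1
  have heq : V =ᵐ[volume] hVm.mk V := vol_ac_nu.ae_le hVm.ae_eq_mk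
  refine ⟨φ ∘ ns, hφ.comp hns, hVm.mk V, hVm.stronglyMeasurable_mk, ?_, fun R => ?_⟩
  · filter_upwards [vol_ac_nu.ae_le hae, heq] with x hx hx2
    rw [← hx2]; exact hx
  · have hmono : (volume : Measure (Ed 3)).restrict (closedBall 0 R) ≤
        ENNReal.ofReal ((1 + |R|) ^ (4 : ℝ)) • nu :=
      (Measure.restrict_mono (closedBall_subset_closedBall (le_abs_self R)) le_rfl).trans
        (restrict_le_nu |R| (abs_nonneg R))
    have hVR : MemLp (hVm.mk V) 2 nu := hV1.ae_eq hVm.ae_eq_mk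
    refine ⟨(hVR.smul_measure (by simp)).mono_measure hmono, ?_⟩
    have hne : ENNReal.ofReal ((1 + |R|) ^ (4 : ℝ)) ≠ 0 := by
      simp only [ne_eq, ENNReal.ofReal_eq_zero, not_le]; positivity
    have hV3 : Tendsto (fun n => ENNReal.ofReal ((1 + |R|) ^ (4 : ℝ)) ^ (1 / (2:ENNReal)).toReal *
        eLpNorm (v (φ (ns n)) - V) 2 nu) atTop (𝓝 (_ * 0)) :=
      ENNReal.Tendsto.const_mul (hV2.comp hns.tendsto_atTop) (Or.inr (by simp))
    rw [mul_zero] at hV3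
    refine tendsto_of_tendsto_of_tendsto_of_le_of_le tendsto_const_nhds hV3 (fun _ => zero_le) fun n => ?_
    refine (eLpNorm_mono_measure _ hmono).trans ?_
    rw [eLpNorm_smul_measure_of_ne_zero hne, smul_eq_mul]
    refine le_of_eq ?_
    congr 1
    refine eLpNorm_congr_ae ?_
    filter_upwards [hVm.ae_eq_mk] with x hx
    simp [← hx]

/-! ### Translations and nontrivial limits -/

lemma pd_shift (v : Ed 3 → ℂ) (z : Ed 3) (i : Fin 3) (x : Ed 3) :
    pd (fun x => v (x + z)) i x = pd v i (x + z) := by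
  unfold pd; rw [fderiv_comp_add_right]

lemma G_shift (v : Ed 3 → ℂ) (z : Ed 3) (i : Fin 3) : G i (fun x => v (x + z)) = G i v := by
  unfold G
  simp only [pd_shift]
  exact integral_add_right_eq_self (fun x => ‖pd v i x‖ ^ 2) z

lemma Af_shift (v : Ed 3 → ℂ) (z : Ed 3) : Af (fun x => v (x + z)) = Af v := by
  unfold Af; simp only [G_shift]
lemma Kf_shift (v : Ed 3 → ℂ) (z : Ed 3) : Kf (fun x => v (x + z)) = Kf v := by
  unfold Kf; simp only [G_shift]
lemma Vp_shift (v : Ed 3 → ℂ) (z : Ed 3) : Vp (fun x => v (x + z)) = Vp v := by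
  unfold Vp
  rw [integral_add_right_eq_self (fun x => (1 - ‖1 + v x‖ ^ 2) ^ 2) z]
lemma pf_shift (c : ℝ) (v : Ed 3 → ℂ) (z : Ed 3) : pf c (fun x => v (x + z)) = pf c v := by
  unfold pf Mo
  simp only [pd_shift]
  rw [integral_add_right_eq_self (fun x => ((starRingEnd ℂ) (v x) * pd v 0 x).im) z]

lemma ml_shift (k : ℕ) (v : Ed 3 → ℂ) (z : Ed 3) : ml k (fun x => v (x + z)) 0 = ml k v z := by
  rw [ml_eq, ml_eq]; congr 1; funext y; congr 1; abel

lemma vr_shift (k : ℕ) (v : Ed 3 → ℂ) (z : Ed 3) : vr k (fun x => v (x + z)) 0 = vr k v z := by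
  unfold vr
  rw [ml_shift, ml_eq k (fun x => ‖1 + v (x + z)‖ ^ 2), ml_eq k (fun x => ‖1 + v x‖ ^ 2)]
  congr 2; funext y
  rw [show 0 - y + z = z - y by abel]

/-- If translates `w n` converge locally in `L²` to a constant of modulus one, then their
mollifications at the origin become close to that constant with small variance. -/
lemma ml_local (k : ℕ) {w : ℕ → Ed 3 → ℂ} (hw : ∀ n, TF (w n)) (a : ℂ)
    (hl : Tendsto (fun n => ∫ x in closedBall 0 1, ‖w n x - a‖ ^ 2) atTop (𝓝 0)) :
    Tendsto (fun n => ∫ y, ‖w n (0 - y) - a‖ ^ 2 ∂(Mp k)) atTop (𝓝 0) := by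
  obtain ⟨R, hR⟩ := (rho_hcs k).exists_bound_of_continuous (rho_cont k)
  have hR0 : 0 ≤ R := (norm_nonneg _).trans (hR 0)
  have h1 : ∀ n, ∫ y, ‖w n (0 - y) - a‖ ^ 2 ∂(Mp k) ≤ R * ∫ x in closedBall 0 1, ‖w n x - a‖ ^ 2 := by
    intro n
    have hcn := (hw n).cont
    have e : ∫ y, ‖w n (0 - y) - a‖ ^ 2 ∂(Mp k) = ∫ y, rho k (0 - y) • (‖w n y - a‖ ^ 2) := by
      rw [← ml_eq' k (fun x => ‖w n x - a‖ ^ 2) 0, ml_eq]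
    have hi : IntegrableOn (fun x => ‖w n x - a‖ ^ 2) (closedBall 0 1) :=
      Continuous.continuousOn (by fun_prop) |>.integrableOn_compact (isCompact_closedBall _ _)
    rw [e, ← integral_const_mul, ← integral_indicator measurableSet_closedBall]
    refine integral_mono_of_nonneg (Eventually.of_forall fun y => ?_)
      ((integrable_indicator_iff measurableSet_closedBall).2 (hi.const_mul R)) (Eventually.of_forall fun y => ?_)
    · exact mul_nonneg (rho_nonneg _ _) (by positivity)
    · by_cases hy : y ∈ closedBall (0 : Ed 3) 1
      · rw [Set.indicator_of_mem hy]
        simp only [smul_eq_mul]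
        gcongr
        exact (le_abs_self _).trans (hR _)
      · rw [Set.indicator_of_notMem hy]
        simp only [smul_eq_mul]
        rw [rho_zero, zero_mul]
        rw [mem_closedBall_zero_iff, not_le] at hy
        rw [zero_sub, norm_neg]
        refine le_trans ?_ hy.le
        unfold hk
        rw [div_le_one (by positivity)]; linarith [(Nat.cast_nonneg k : (0:ℝ) ≤ k)]
  refine tendsto_of_tendsto_of_tendsto_of_le_of_le tendsto_const_nhds ?_ (fun n => ?_) h1
  · simpa using hl.const_mul R
  · exact integral_nonneg fun _ => by positivity

lemma ml_at (k : ℕ) {v : Ed 3 → ℂ} (h : TF v) (a : ℂ) (x : Ed 3) :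
    ‖ml k v x - a‖ ^ 2 ≤ ∫ y, ‖v (x - y) - a‖ ^ 2 ∂(Mp k) := by
  rw [← ml_sub_const k h.cont h.bdd]
  have := h.cont
  exact sq_integral_le (Continuous.aestronglyMeasurable (by fun_prop)) (osc_aux k h _ x)

lemma DG_eq (v : Ed 3 → ℂ) : DG v = 2 * (Kf v + Af v) := by unfold DG Kf Af; ring

/-- Local `L²` convergence in terms of Bochner integrals. -/
lemma loc_int {α : Type*} [MeasurableSpace α] {μ : Measure α} {w : ℕ → α → ℂ} {V : α → ℂ}
    (hw : ∀ n, MemLp (w n) 2 μ) (hV : MemLp V 2 μ)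
    (h : Tendsto (fun n => eLpNorm (w n - V) 2 μ) atTop (𝓝 0)) :
    Tendsto (fun n => ∫ x, ‖w n x - V x‖ ^ 2 ∂μ) atTop (𝓝 0) := by
  have e : ∀ n, (eLpNorm (w n - V) 2 μ).toReal = Real.sqrt (∫ x, ‖w n x - V x‖ ^ 2 ∂μ) := by
    intro n
    rw [eLp2 ((hw n).sub hV), ENNReal.toReal_ofReal (Real.sqrt_nonneg _)]; rfl
  have h1 := (ENNReal.tendsto_toReal ENNReal.zero_ne_top).comp h
  simp only [Function.comp_def, e, ENNReal.toReal_zero] at h1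
  have h2 := h1.pow 2
  simp only [ne_eq, OfNat.ofNat_ne_zero, not_false_eq_true, zero_pow] at h2
  refine h2.congr fun n => Real.sq_sqrt (integral_nonneg fun _ => by positivity)

lemma TF.memLp {v : Ed 3 → ℂ} (h : TF v) (R : ℝ) : MemLp v 2 (volume.restrict (closedBall 0 R)) :=
  ((memLp_two_iff_integrable_sq_norm h.cont.aestronglyMeasurable).2 h.int_normsq).restrict _

/-- Up to translations and a subsequence, a sequence satisfying the hypotheses of `nonvanish`
converges to a limit that is not a constant of modulus one. -/
lemma limit_exists {c π0 M : ℝ} (hc : 0 < c) (hc2 : c < Real.sqrt 2) (hπ : 0 < π0) (hM : 0 ≤ M)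
    {v : ℕ → Ed 3 → ℂ} (hv : ∀ n, TF (v n)) (hA : ∀ n, Af (v n) ≤ M)
    (hB : ∀ n, Kf (v n) + Vp (v n) ≤ pf c (v n)) (hp : ∀ n, pf c (v n) = π0) :
    ∃ (φ : ℕ → ℕ) (w : ℕ → Ed 3 → ℂ) (V : Ed 3 → ℂ), StrictMono φ ∧
      (∀ n, TF (w n) ∧ (∀ i, G i (w n) = G i (v (φ n))) ∧ Vp (w n) = Vp (v (φ n)) ∧
        pf c (w n) = pf c (v (φ n))) ∧ StronglyMeasurable V ∧
      (∀ᵐ x, Tendsto (fun n => w n x) atTop (𝓝 (V x))) ∧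
      (∀ R, MemLp V 2 (volume.restrict (closedBall 0 R)) ∧
        Tendsto (fun n => ∫ x in closedBall 0 R, ‖w n x - V x‖ ^ 2) atTop (𝓝 0)) ∧
      ¬ ∃ a : ℂ, ‖a‖ = 1 ∧ ∀ᵐ x, 1 + V x = a := by
  obtain ⟨k, hk'⟩ := nonvanish hc hc2 hπ hM
  choose z hz using fun n => hk' (v n) (hv n) (hA n) (hB n) (hp n)
  let u : ℕ → Ed 3 → ℂ := fun n x => v n (x + z n)
  have hu : ∀ n, TF (u n) := fun n => (hv n).shift _
  have hK : ∀ n, Kf (v n) ≤ π0 := fun n => by linarith [hB n, hp n, Vp_nonneg (v n)]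
  have hVn : ∀ n, Vp (v n) ≤ π0 := fun n => by linarith [hB n, hp n, Kf_nonneg (v n)]
  obtain ⟨φ, hφ, V, hVs, hae, hL⟩ := compactness u hu (2 * (π0 + M))
    (fun n => by rw [DG_eq, Kf_shift, Af_shift]; linarith [hK n, hA n])
    (fun n => by rw [Vp_shift]; linarith [hVn n])
  have hL2 : ∀ R, Tendsto (fun n => ∫ x in closedBall 0 R, ‖u (φ n) x - V x‖ ^ 2) atTop (𝓝 0) :=
    fun R => loc_int (fun n => (hu _).memLp R) (hL R).1 (hL R).2
  refine ⟨φ, fun n => u (φ n), V, hφ, fun n => ⟨hu _, fun i => G_shift _ _ _, Vp_shift _ _, pf_shift _ _ _⟩,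
    hVs, hae, fun R => ⟨(hL R).1, hL2 R⟩, ?_⟩
  -- A constant limit of modulus one would contradict `nonvanish` at the origin.
  rintro ⟨a, ha, hVa⟩
  have h1 : Tendsto (fun n => ∫ x in closedBall 0 1, ‖u (φ n) x - (a - 1)‖ ^ 2) atTop (𝓝 0) := by
    refine (hL2 1).congr fun n => setIntegral_congr_ae measurableSet_closedBall ?_
    filter_upwards [hVa] with x hx _
    rw [← hx]; congr 2; ring
  have h2 := ml_local k (w := fun n => u (φ n)) (fun n => hu _) (a - 1) h1
  have hh := hk_pos k
  have h3 := (tendsto_order.1 h2).2 (min 1 (hk k ^ 2)) (lt_min one_pos (by positivity))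
  obtain ⟨n, hn⟩ := h3.exists
  have h4 := ml_at k (hu (φ n)) (a - 1) 0
  have h5 := vr_eq k (hu (φ n)) 0 (a - 1)
  have h6 := hz (φ n)
  rw [← ml_shift k (v (φ n)), ← vr_shift k (v (φ n))] at h6
  change ‖1 + ml k (u (φ n)) 0‖ ≤ _ ∨ 1 ≤ vr k (u (φ n)) 0 at h6
  rcases h6 with h6 | h6
  · have h7 : ‖ml k (u (φ n)) 0 - (a - 1)‖ < hk k := by
      refine lt_of_pow_lt_pow_left₀ 2 hh.le (h4.trans_lt (hn.trans_le (min_le_right _ _)))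
    have h8 : ‖a‖ ≤ ‖1 + ml k (u (φ n)) 0‖ + ‖ml k (u (φ n)) 0 - (a - 1)‖ := by
      have := norm_sub_le (1 + ml k (u (φ n)) 0) (ml k (u (φ n)) 0 - (a - 1))
      refine le_trans (le_of_eq ?_) this
      congr 1; ring
    linarith
  · have : (∫ y, ‖u (φ n) (0 - y) - (a - 1)‖ ^ 2 ∂(Mp k)) < 1 := hn.trans_le (min_le_left _ _)
    linarith [sq_nonneg ‖ml k (u (φ n)) 0 - (a - 1)‖]

/-- Fatou's lemma for nonnegative real functions. -/
lemma fatou {α : Type*} [MeasurableSpace α] {μ : Measure α} {f : ℕ → α → ℝ} {g : α → ℝ}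
    (hf : ∀ n, Integrable (f n) μ) (h0 : ∀ n x, 0 ≤ f n x) (hg : AEStronglyMeasurable g μ)
    (hl : ∀ᵐ x ∂μ, Tendsto (fun n => f n x) atTop (𝓝 (g x))) {B : ℕ → ℝ} {C : ℝ}
    (hB : ∀ n, ∫ x, f n x ∂μ ≤ B n) (hC : Tendsto B atTop (𝓝 C)) :
    Integrable g μ ∧ ∫ x, g x ∂μ ≤ C := by
  have g0 : 0 ≤ᵐ[μ] g := hl.mono fun x hx => ge_of_tendsto' hx fun n => h0 n x
  have hC0 : 0 ≤ C := ge_of_tendsto' hC fun n => (integral_nonneg (h0 n)).trans (hB n)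
  have key : ∫⁻ x, ENNReal.ofReal (g x) ∂μ ≤ ENNReal.ofReal C := by
    calc ∫⁻ x, ENNReal.ofReal (g x) ∂μ = ∫⁻ x, liminf (fun n => ENNReal.ofReal (f n x)) atTop ∂μ := by
          refine lintegral_congr_ae (hl.mono fun x hx => ?_)
          exact ((ENNReal.continuous_ofReal.tendsto _).comp hx).liminf_eq.symm
      _ ≤ liminf (fun n => ∫⁻ x, ENNReal.ofReal (f n x) ∂μ) atTop :=
          lintegral_liminf_le' fun n => (hf n).1.aemeasurable.ennreal_ofReal
      _ = liminf (fun n => ENNReal.ofReal (∫ x, f n x ∂μ)) atTop := by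
          congr 1; funext n
          rw [ofReal_integral_eq_lintegral_ofReal (hf n) (Eventually.of_forall (h0 n))]
      _ ≤ liminf (fun n => ENNReal.ofReal (B n)) atTop :=
          liminf_le_liminf (Eventually.of_forall fun n => ENNReal.ofReal_le_ofReal (hB n))
      _ = ENNReal.ofReal C := ((ENNReal.continuous_ofReal.tendsto _).comp hC).liminf_eq
  refine ⟨⟨hg, ?_⟩, ?_⟩
  · rw [hasFiniteIntegral_iff_ofReal g0]; exact key.trans_lt ENNReal.ofReal_lt_top
  · rw [integral_eq_lintegral_of_nonneg_ae g0 hg]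
    exact ENNReal.toReal_le_of_le_ofReal hC0 key

lemma ae_shift {p : Ed 3 → Prop} (h : ∀ᵐ x, p x) (z : Ed 3) : ∀ᵐ x : Ed 3, p (x + z) :=
  (measurePreserving_add_right volume z).quasiMeasurePreserving.ae h

/-- The translation estimate passes to the limit by Fatou's lemma. -/
lemma lim_shift {w : ℕ → Ed 3 → ℂ} (hw : ∀ n, TF (w n)) {V : Ed 3 → ℂ} (hV : StronglyMeasurable V)
    (hl : ∀ᵐ x, Tendsto (fun n => w n x) atTop (𝓝 (V x))) {i : Fin 3} {g : ℝ}
    (hg : Tendsto (fun n => G i (w n)) atTop (𝓝 g)) (τ : ℝ) :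
    Integrable (fun x => ‖V (x + τ • ee i) - V x‖ ^ 2) ∧
      ∫ x, ‖V (x + τ • ee i) - V x‖ ^ 2 ≤ τ ^ 2 * g := by
  refine fatou (f := fun n x => ‖w n (x + τ • ee i) - w n x‖ ^ 2)
    (fun n => (((hw n).shift _).sub (hw n)).int_normsq) (fun n x => by positivity) ?_ ?_
    (fun n => shift_le_G (hw n) τ i) (hg.const_mul _)
  · have := hV.comp_measurable (measurable_add_const (τ • ee i))
    exact ((this.sub hV).norm.pow 2).aestronglyMeasurable
  · filter_upwards [hl, ae_shift hl (τ • ee i)] with x h1 h2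
    exact (h2.sub h1).norm.pow 2

/-- The limit has finite potential energy by Fatou's lemma. -/
lemma lim_eta {w : ℕ → Ed 3 → ℂ} (hw : ∀ n, TF (w n)) {V : Ed 3 → ℂ} (hV : StronglyMeasurable V)
    (hl : ∀ᵐ x, Tendsto (fun n => w n x) atTop (𝓝 (V x))) {g : ℝ} (hg : ∀ n, Vp (w n) ≤ g) :
    Integrable (fun x => (1 - ‖1 + V x‖ ^ 2) ^ 2) := by
  refine (fatou (f := fun n x => (1 - ‖1 + w n x‖ ^ 2) ^ 2) (B := fun _ => 4 * g)
    (fun n => (hw n).int_pot) (fun n x => by positivity) ?_ ?_ (fun n => ?_) tendsto_const_nhds).1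
  · exact ((stronglyMeasurable_const.sub ((stronglyMeasurable_const.add hV).norm.pow 2)).pow 2).aestronglyMeasurable
  · filter_upwards [hl] with x h1
    exact (((h1.const_add 1).norm.pow 2).const_sub 1).pow 2
  · have := hg n; unfold Vp at this; linarith

/-! ### First variation -/

lemma integrable_re' {α : Type*} [MeasurableSpace α] {μ : Measure α} {f : α → ℂ} (h : Integrable f μ) :
    Integrable (fun x => (f x).re) μ := h.re
lemma integral_re' {α : Type*} [MeasurableSpace α] {μ : Measure α} {f : α → ℂ} (h : Integrable f μ) :
    ∫ x, (f x).re ∂μ = (∫ x, f x ∂μ).re := integral_re h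
lemma integral_im' {α : Type*} [MeasurableSpace α] {μ : Measure α} {f : α → ℂ} (h : Integrable f μ) :
    ∫ x, (f x).im ∂μ = (∫ x, f x ∂μ).im := integral_im h

/-- The pairing of a function with a test function. -/
def prg (v φ : Ed 3 → ℂ) : ℂ := ∫ x, (starRingEnd ℂ) (v x) * φ x

lemma ibp_conj {v φ : Ed 3 → ℂ} (hv : TF v) (hφ : TF φ) (i : Fin 3) :
    ∫ x, (starRingEnd ℂ) (pd v i x) * φ x = - prg v (pd φ i) := by
  have := ibp hv.conj.c1 hφ.c1 hφ.2 i
  unfold prg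
  rw [this, neg_neg]
  refine integral_congr_ae (Eventually.of_forall fun x => ?_)
  simp only [pd_conj v (hv.diff x)]

lemma pd_line {v φ : Ed 3 → ℂ} (hv : TF v) (hφ : TF φ) (t : ℝ) (i : Fin 3) (x : Ed 3) :
    pd (fun x => v x + t * φ x) i x = pd v i x + t * pd φ i x := by
  rw [pd_add (hv.diff x) ((hφ.cmul t).diff x), pd_cmul _ (hφ.diff x)]

/-- Exact expansion of the kinetic energies. -/
lemma var_G {v φ : Ed 3 → ℂ} (hv : TF v) (hφ : TF φ) (t : ℝ) (i : Fin 3) :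
    G i (fun x => v x + t * φ x) = G i v + t * (-2 * (prg v (pd (pd φ i) i)).re) + t ^ 2 * G i φ := by
  have e : ∀ x, ‖pd (fun x => v x + t * φ x) i x‖ ^ 2 = ‖pd v i x‖ ^ 2 +
      (t * (2 * ((starRingEnd ℂ) (pd v i x) * pd φ i x).re) + t ^ 2 * ‖pd φ i x‖ ^ 2) := by
    intro x
    rw [pd_line hv hφ]
    simp only [Complex.sq_norm, Complex.normSq_apply]
    simp; ring
  unfold G
  have hi := (hv.pd i).conj.int_mul (hφ.pd i).cont
  have i1 : Integrable (fun x => t * (2 * ((starRingEnd ℂ) (pd v i x) * pd φ i x).re)) :=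
    ((integrable_re' hi).const_mul 2).const_mul t
  have i2 : Integrable (fun x => t ^ 2 * ‖pd φ i x‖ ^ 2) := (hφ.int_G i).const_mul _
  have i3 : Integrable (fun x => t * (2 * ((starRingEnd ℂ) (pd v i x) * pd φ i x).re)
    + t ^ 2 * ‖pd φ i x‖ ^ 2) := i1.add i2
  rw [integral_congr_ae (Eventually.of_forall e), integral_add (hv.int_G i) i3, integral_add i1 i2,
    integral_const_mul, integral_const_mul, integral_const_mul, integral_re' hi,
    ibp_conj hv (hφ.pd i)]
  simp; ring

/-- Exact expansion of the momentum. -/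
lemma var_Mo {v φ : Ed 3 → ℂ} (hv : TF v) (hφ : TF φ) (t : ℝ) :
    Mo (fun x => v x + t * φ x) = Mo v + t * (2 * (prg v (pd φ 0)).im) + t ^ 2 * Mo φ := by
  have e : ∀ x, ((starRingEnd ℂ) (v x + t * φ x) * pd (fun x => v x + t * φ x) 0 x).im =
      ((starRingEnd ℂ) (v x) * pd v 0 x).im + (t * ((starRingEnd ℂ) (v x) * pd φ 0 x).im
       + (-t * ((starRingEnd ℂ) (pd v 0 x) * φ x).im + t ^ 2 * ((starRingEnd ℂ) (φ x) * pd φ 0 x).im)) := by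
    intro x
    rw [pd_line hv hφ]
    simp; ring
  unfold Mo
  have h1 := hv.conj.int_mul (hφ.pd 0).cont
  have h2 := (hv.pd 0).conj.int_mul hφ.cont
  have i0 := hv.int_im (hv.pd 0).cont
  have i1 : Integrable (fun x => t * ((starRingEnd ℂ) (v x) * pd φ 0 x).im) :=
    (hv.int_im (hφ.pd 0).cont).const_mul t
  have i2 : Integrable (fun x => -t * ((starRingEnd ℂ) (pd v 0 x) * φ x).im) :=
    ((hv.pd 0).int_im hφ.cont).const_mul _
  have i3 : Integrable (fun x => t ^ 2 * ((starRingEnd ℂ) (φ x) * pd φ 0 x).im) :=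
    (hφ.int_im (hφ.pd 0).cont).const_mul _
  have i4 : Integrable (fun x => -t * ((starRingEnd ℂ) (pd v 0 x) * φ x).im
      + t ^ 2 * ((starRingEnd ℂ) (φ x) * pd φ 0 x).im) := i2.add i3
  have i5 : Integrable (fun x => t * ((starRingEnd ℂ) (v x) * pd φ 0 x).im
       + (-t * ((starRingEnd ℂ) (pd v 0 x) * φ x).im + t ^ 2 * ((starRingEnd ℂ) (φ x) * pd φ 0 x).im)) :=
    i1.add i4
  rw [integral_congr_ae (Eventually.of_forall e), integral_add i0 i5, integral_add i1 i4,
    integral_add i2 i3, integral_const_mul, integral_const_mul, integral_const_mul,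
    integral_im' h1, integral_im' h2, ibp_conj hv hφ]
  simp only [prg, Complex.neg_im]; ring

/-- The pairing `∫ (1 - |1 + v|²) conj (1 + v) φ`. -/
def epr (v φ : Ed 3 → ℂ) : ℂ :=
  ∫ x, ((1 - ‖1 + v x‖ ^ 2 : ℝ) : ℂ) * ((starRingEnd ℂ) (1 + v x) * φ x)

/-- One-sided expansion of the potential energy: the remainder is quadratic in `t` and depends on `v` only
through its potential energy. -/
lemma var_Vp {v φ : Ed 3 → ℂ} (hv : TF v) (hφ : TF φ) {t : ℝ} (ht : |t| ≤ 1) :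
    Vp (fun x => v x + t * φ x) ≤ Vp v + t * (-(epr v φ).re) +
      t ^ 2 * (2 * (∫ x, ‖φ x‖ ^ 2) + 2 * (∫ x, ‖φ x‖ ^ 4) + 4 * Vp v) := by
  have hcv := hv.cont
  have hcφ := hφ.cont
  have hT : TF (fun x => v x + t * φ x) := hv.add (hφ.cmul t)
  have hi : Integrable (fun x => ((1 - ‖1 + v x‖ ^ 2 : ℝ) : ℂ) * ((starRingEnd ℂ) (1 + v x) * φ x)) :=
    Continuous.integrable_of_hasCompactSupport (by fun_prop) (hφ.2.mul_left.mul_left)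
  have i4 : Integrable (fun x => ‖φ x‖ ^ 4) :=
    Continuous.integrable_of_hasCompactSupport (by fun_prop) (hcs_comp hφ.2 (fun z : ℂ => ‖z‖ ^ 4) (by simp))
  have key : ∀ x, 1 / 4 * (1 - ‖1 + (v x + t * φ x)‖ ^ 2) ^ 2 ≤
      1 / 4 * (1 - ‖1 + v x‖ ^ 2) ^ 2 + ((-t) * (((1 - ‖1 + v x‖ ^ 2 : ℝ) : ℂ) *
        ((starRingEnd ℂ) (1 + v x) * φ x)).re + (t ^ 2 * (2 * ‖φ x‖ ^ 2 + 2 * ‖φ x‖ ^ 4) +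
          t ^ 2 * (1 - ‖1 + v x‖ ^ 2) ^ 2)) := by
    intro x
    rw [Complex.re_ofReal_mul]
    set m := 1 - ‖1 + v x‖ ^ 2 with hm
    set r := ((starRingEnd ℂ) (1 + v x) * φ x).re with hr
    set q := ‖φ x‖ ^ 2 with hq
    have e1 : ‖φ x‖ ^ 4 = q ^ 2 := by rw [hq]; ring
    have e2 : 1 - ‖1 + (v x + t * φ x)‖ ^ 2 = m - 2 * t * r - t ^ 2 * q := by
      rw [hm, hr, hq]
      simp only [Complex.sq_norm, Complex.normSq_apply]
      simp; ring
    have e3 : r ^ 2 ≤ (1 - m) * q := by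
      have a : |r| ≤ ‖1 + v x‖ * ‖φ x‖ := by
        refine (Complex.abs_re_le_norm _).trans ?_
        rw [norm_mul, RCLike.norm_conj]
      have := pow_le_pow_left₀ (abs_nonneg r) a 2
      rw [sq_abs, mul_pow] at this
      rw [hm, hq]; linarith
    have hq0 : 0 ≤ q := by positivity
    rw [e1, e2]
    have ht1 := abs_le.1 ht
    have ht2 : t ^ 2 ≤ 1 := by nlinarith
    have key2 : r ^ 2 - m * q / 2 + t * r * q + t ^ 2 * q ^ 2 / 4 ≤ 2 * q + 2 * q ^ 2 + m ^ 2 := by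
      have a1 : t * r * q ≤ (r ^ 2 + q ^ 2) / 2 := by
        have : (t * r) ^ 2 ≤ r ^ 2 := by rw [mul_pow]; nlinarith [sq_nonneg r]
        nlinarith [sq_nonneg (t * r - q)]
      have a2 : t ^ 2 * q ^ 2 ≤ q ^ 2 := by nlinarith [sq_nonneg q]
      nlinarith [sq_nonneg (m + q), sq_nonneg m, sq_nonneg q]
    nlinarith [mul_le_mul_of_nonneg_left key2 (sq_nonneg t)]
  have j1 : Integrable (fun x => 1 / 4 * (1 - ‖1 + v x‖ ^ 2) ^ 2) := hv.int_pot.const_mul _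
  have j2 : Integrable (fun x => (-t) * (((1 - ‖1 + v x‖ ^ 2 : ℝ) : ℂ) *
        ((starRingEnd ℂ) (1 + v x) * φ x)).re) := (integrable_re' hi).const_mul _
  have j3' : Integrable (fun x => 2 * ‖φ x‖ ^ 2 + 2 * ‖φ x‖ ^ 4) :=
    (hφ.int_normsq.const_mul 2).add (i4.const_mul 2)
  have j3 : Integrable (fun x => t ^ 2 * (2 * ‖φ x‖ ^ 2 + 2 * ‖φ x‖ ^ 4)) := j3'.const_mul _
  have j4 : Integrable (fun x => t ^ 2 * (1 - ‖1 + v x‖ ^ 2) ^ 2) := hv.int_pot.const_mul _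
  have j5 : Integrable (fun x => t ^ 2 * (2 * ‖φ x‖ ^ 2 + 2 * ‖φ x‖ ^ 4) +
          t ^ 2 * (1 - ‖1 + v x‖ ^ 2) ^ 2) := j3.add j4
  have j6 : Integrable (fun x => (-t) * (((1 - ‖1 + v x‖ ^ 2 : ℝ) : ℂ) *
        ((starRingEnd ℂ) (1 + v x) * φ x)).re + (t ^ 2 * (2 * ‖φ x‖ ^ 2 + 2 * ‖φ x‖ ^ 4) +
          t ^ 2 * (1 - ‖1 + v x‖ ^ 2) ^ 2)) := j2.add j5
  have := integral_mono (hT.int_pot.const_mul (1 / 4)) (j1.add j6) key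
  simp only [Pi.add_apply] at this
  rw [integral_const_mul, integral_add j1 j6, integral_add j2 j5, integral_add j3 j4,
    integral_const_mul, integral_const_mul, integral_const_mul, integral_const_mul,
    integral_add (hφ.int_normsq.const_mul 2) (i4.const_mul 2), integral_const_mul, integral_const_mul,
    integral_re' hi] at this
  unfold Vp epr
  beta_reduce
  linarith

/-- Products with a test function converge when the sequence converges locally in `L²`. -/
lemma lin_conv {w : ℕ → Ed 3 → ℂ} {V φ : Ed 3 → ℂ} (hw : ∀ n, TF (w n)) (hφ : TF φ)
    (hV : ∀ R, MemLp V 2 (volume.restrict (closedBall 0 R)) ∧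
        Tendsto (fun n => ∫ x in closedBall 0 R, ‖w n x - V x‖ ^ 2) atTop (𝓝 0)) :
    Integrable (fun x => (starRingEnd ℂ) (V x) * φ x) ∧
    Tendsto (fun n => prg (w n) φ) atTop (𝓝 (prg V φ)) := by
  obtain ⟨R, hR⟩ := hφ.2.isCompact.isBounded.subset_closedBall 0
  obtain ⟨hm, hl⟩ := hV R
  set μ := (volume : Measure (Ed 3)).restrict (closedBall 0 R) with hμ
  have h0 : ∀ x, x ∉ closedBall (0 : Ed 3) R → φ x = 0 := fun x hx =>
    image_eq_zero_of_notMem_tsupport fun h => hx (hR h)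
  have hφm : MemLp φ 2 μ := hφ.memLp R
  have iV : Integrable (fun x => (starRingEnd ℂ) (V x) * φ x) μ :=
    hm.star.integrable_mul (p := 2) (q := 2) hφm
  have iV' : Integrable (fun x => (starRingEnd ℂ) (V x) * φ x) := by
    refine (integrableOn_iff_integrable_of_support_subset (s := closedBall 0 R) ?_).1 iV
    intro x hx
    by_contra h
    exact hx (by simp [h0 x h])
  refine ⟨iV', ?_⟩
  have e : ∀ n, prg (w n) φ - prg V φ = ∫ x, (starRingEnd ℂ) (w n x - V x) * φ x ∂μ := by
    intro n
    unfold prg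
    rw [← integral_sub ((hw n).conj.int_mul hφ.cont) iV',
      ← setIntegral_eq_integral_of_forall_compl_eq_zero (s := closedBall 0 R)]
    · refine integral_congr_ae (Eventually.of_forall fun x => ?_)
      simp only [map_sub]; ring
    · intro x hx; simp [h0 x hx]
  have hb : ∀ n, ‖prg (w n) φ - prg V φ‖ ≤
      Real.sqrt (∫ x, ‖w n x - V x‖ ^ 2 ∂μ) * Real.sqrt (∫ x, ‖φ x‖ ^ 2 ∂μ) := by
    intro n
    rw [e]
    have hmn : MemLp (fun x => w n x - V x) 2 μ := ((hw n).memLp R).sub hm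
    have := cs_integral (μ := μ) (f := fun x => ‖w n x - V x‖) (g := fun x => ‖φ x‖)
      hmn.1.norm hφm.1.norm
      ((memLp_two_iff_integrable_sq_norm hmn.1).1 hmn) ((memLp_two_iff_integrable_sq_norm hφm.1).1 hφm)
    refine (norm_integral_le_integral_norm _).trans (le_trans (le_of_eq ?_) this.2)
    congr 1; funext x
    rw [norm_mul, RCLike.norm_conj, abs_mul, abs_norm, abs_norm]
  rw [tendsto_iff_norm_sub_tendsto_zero]
  refine squeeze_zero (fun _ => norm_nonneg _) hb ?_
  have := ((Real.continuous_sqrt.tendsto _).comp hl).mul_const (Real.sqrt (∫ x, ‖φ x‖ ^ 2 ∂μ))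
  simpa using this

/-- A sequence bounded in `L²` and converging to zero almost everywhere converges weakly. -/
lemma weak_zero {α : Type*} [MeasurableSpace α] {μ : Measure α} {a : ℕ → α → ℝ} {g : α → ℝ} {M : ℝ}
    (ha : ∀ n, AEStronglyMeasurable (a n) μ) (ha2 : ∀ n, Integrable (fun x => a n x ^ 2) μ)
    (hM : ∀ n, ∫ x, a n x ^ 2 ∂μ ≤ M) (hl : ∀ᵐ x ∂μ, Tendsto (fun n => a n x) atTop (𝓝 0))
    (hg : AEStronglyMeasurable g μ) (hg2 : Integrable (fun x => g x ^ 2) μ) :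
    Tendsto (fun n => ∫ x, |a n x * g x| ∂μ) atTop (𝓝 0) := by
  have hag : ∀ n, Integrable (fun x => |a n x * g x|) μ := fun n =>
    (cs_integral (ha n) hg (ha2 n) hg2).1.abs
  rw [Metric.tendsto_atTop]
  intro ε hε
  set δ := ε / (2 * (|M| + 1)) with hδ
  have hM1 : 0 < |M| + 1 := by positivity
  have hδ0 : 0 < δ := by positivity
  have h1 : Tendsto (fun n => ∫ x, max (|a n x * g x| - δ * a n x ^ 2) 0 ∂μ) atTop
      (𝓝 (∫ _, (0:ℝ) ∂μ)) := by
    refine tendsto_integral_of_dominated_convergence (fun x => 1 / (4 * δ) * g x ^ 2) (fun n => ?_)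
      (hg2.const_mul _) (fun n => Eventually.of_forall fun x => ?_) ?_
    · exact ((hag n).1.sub ((ha2 n).1.const_mul δ)).sup aestronglyMeasurable_const
    · rw [Real.norm_of_nonneg (le_max_right _ _)]
      refine max_le ?_ (by positivity)
      rw [abs_mul]
      have : 1 / (4 * δ) * g x ^ 2 - (|a n x| * |g x| - δ * a n x ^ 2) =
          δ * (|a n x| - |g x| / (2 * δ)) ^ 2 := by
        rw [← sq_abs (g x), ← sq_abs (a n x)]; field_simp; ring
      have h2 : 0 ≤ δ * (|a n x| - |g x| / (2 * δ)) ^ 2 := by positivity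
      linarith
    · filter_upwards [hl] with x hx
      have := (((hx.mul_const (g x)).abs).sub ((hx.pow 2).const_mul δ)).max (tendsto_const_nhds (x := (0:ℝ)))
      simpa using this
  rw [integral_zero] at h1
  obtain ⟨N, hN⟩ := Metric.tendsto_atTop.1 h1 (ε / 2) (by positivity)
  refine ⟨N, fun n hn => ?_⟩
  have h2 := hN n hn
  rw [Real.dist_eq, sub_zero] at h2 ⊢
  have hmx : Integrable (fun x => max (|a n x * g x| - δ * a n x ^ 2) 0) μ :=
    ((hag n).sub ((ha2 n).const_mul δ)).sup (integrable_zero _ _ _)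
  have h3 : ∫ x, |a n x * g x| ∂μ ≤ ∫ x, (δ * a n x ^ 2 + max (|a n x * g x| - δ * a n x ^ 2) 0) ∂μ :=
    integral_mono (hag n) (((ha2 n).const_mul δ).add hmx) fun x => by
      show _ ≤ δ * a n x ^ 2 + max (|a n x * g x| - δ * a n x ^ 2) 0
      linarith [le_max_left (|a n x * g x| - δ * a n x ^ 2) 0]
  rw [integral_add ((ha2 n).const_mul δ) hmx, integral_const_mul] at h3
  rw [abs_of_nonneg (integral_nonneg fun _ => abs_nonneg _)]
  have h4 : δ * ∫ x, a n x ^ 2 ∂μ < ε / 2 := by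
    calc δ * ∫ x, a n x ^ 2 ∂μ ≤ δ * |M| := by gcongr; exact (hM n).trans (le_abs_self M)
      _ < δ * (|M| + 1) := by gcongr; linarith
      _ = ε / 2 := by rw [hδ]; field_simp
  linarith [(abs_lt.1 h2).2]

/-! ### Euler–Lagrange inequality -/

/-- Products of locally square integrable functions with a bounded function supported in the ball are
square integrable. -/
lemma sq_mul_loc {φ U : Ed 3 → ℂ} {R D : ℝ} (hφc : Continuous φ) (hD : ∀ x, ‖φ x‖ ≤ D)
    (h0 : ∀ x, x ∉ closedBall (0 : Ed 3) R → φ x = 0)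
    (hU : MemLp U 2 (volume.restrict (closedBall 0 R))) :
      Integrable (fun x => (‖U x‖ * ‖φ x‖) ^ 2) ∧
      ∫ x, (‖U x‖ * ‖φ x‖) ^ 2 ≤ D ^ 2 * ∫ x in closedBall 0 R, ‖U x‖ ^ 2 := by
  have h1 := (memLp_two_iff_integrable_sq_norm hU.1).1 hU
  have h2 : Integrable (fun x => (‖U x‖ * ‖φ x‖) ^ 2) (volume.restrict (closedBall 0 R)) := by
    refine (h1.const_mul (D ^ 2)).mono ((hU.1.norm.mul hφc.norm.aestronglyMeasurable).pow 2)
      (Eventually.of_forall fun x => ?_)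
    rw [Real.norm_of_nonneg (by positivity), Real.norm_of_nonneg (by positivity), mul_pow, mul_comm]
    gcongr; exact hD x
  refine ⟨(integrableOn_iff_integrable_of_support_subset (s := closedBall 0 R) ?_).1 h2, ?_⟩
  · intro x hx
    by_contra h
    exact hx (by simp [h0 x h])
  · rw [← setIntegral_eq_integral_of_forall_compl_eq_zero (s := closedBall 0 R)
      (fun x hx => by simp [h0 x hx]), ← integral_const_mul]
    refine integral_mono h2 (h1.const_mul _) fun x => ?_
    simp only [mul_pow]
    rw [mul_comm]
    gcongr; exact hD x

set_option maxHeartbeats 400000 in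

/-- The potential part of the first variation passes to the limit: the potential density is bounded
in `L²`, so it converges weakly, while `w n` converges strongly on the support of `φ`. -/
lemma epr_conv {w : ℕ → Ed 3 → ℂ} {V φ : Ed 3 → ℂ} (hw : ∀ n, TF (w n)) (hφ : TF φ)
    (hVs : StronglyMeasurable V)
    (hae : ∀ᵐ x, Tendsto (fun n => w n x) atTop (𝓝 (V x)))
    (hV : ∀ R, MemLp V 2 (volume.restrict (closedBall 0 R)) ∧
        Tendsto (fun n => ∫ x in closedBall 0 R, ‖w n x - V x‖ ^ 2) atTop (𝓝 0))
    {g : ℝ} (hg : ∀ n, Vp (w n) ≤ g) :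
    Integrable (fun x => ((1 - ‖1 + V x‖ ^ 2 : ℝ) : ℂ) * ((starRingEnd ℂ) (1 + V x) * φ x)) ∧
    Tendsto (fun n => epr (w n) φ) atTop (𝓝 (epr V φ)) := by
  obtain ⟨R, hR⟩ := hφ.2.isCompact.isBounded.subset_closedBall 0
  obtain ⟨hm, hl⟩ := hV R
  obtain ⟨D, hD⟩ := hφ.bdd
  have hD0 : 0 ≤ D := (norm_nonneg _).trans (hD 0)
  have hη := lim_eta hw hVs hae hg
  have hφc := hφ.cont
  have h0 : ∀ x, x ∉ closedBall (0 : Ed 3) R → φ x = 0 := fun x hx =>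
    image_eq_zero_of_notMem_tsupport fun h => hx (hR h)
  have hsq : ∀ U : Ed 3 → ℂ, MemLp U 2 (volume.restrict (closedBall 0 R)) →
      Integrable (fun x => (‖U x‖ * ‖φ x‖) ^ 2) ∧
      ∫ x, (‖U x‖ * ‖φ x‖) ^ 2 ≤ D ^ 2 * ∫ x in closedBall 0 R, ‖U x‖ ^ 2 :=
    fun U hU => sq_mul_loc hφc hD h0 hU
  have hae' : AEStronglyMeasurable V volume := hVs.aestronglyMeasurable
  have h1V : MemLp (fun x => 1 + V x) 2 (volume.restrict (closedBall 0 R)) := by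
    haveI : IsFiniteMeasure (volume.restrict (closedBall (0 : Ed 3) R)) :=
      ⟨by rw [Measure.restrict_apply_univ]; exact measure_closedBall_lt_top⟩
    have hc1 : MemLp (fun _ : Ed 3 => (1 : ℂ)) 2 (volume.restrict (closedBall 0 R)) := memLp_const 1
    exact hc1.add hm
  have hηm : AEStronglyMeasurable (fun x => 1 - ‖1 + V x‖ ^ 2) volume :=
    (show Continuous (fun z : ℂ => 1 - ‖1 + z‖ ^ 2) by fun_prop).comp_aestronglyMeasurable hae'
  have gm : AEStronglyMeasurable (fun x => ‖1 + V x‖ * ‖φ x‖) volume :=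
    (aestronglyMeasurable_const.add hae').norm.mul hφc.norm.aestronglyMeasurable
  have cmm : AEStronglyMeasurable (fun x => (starRingEnd ℂ) (1 + V x) * φ x) volume :=
    (Complex.continuous_conj.comp_aestronglyMeasurable (aestronglyMeasurable_const.add hae')).mul
      hφc.aestronglyMeasurable
  have iV : Integrable (fun x => ((1 - ‖1 + V x‖ ^ 2 : ℝ) : ℂ) * ((starRingEnd ℂ) (1 + V x) * φ x)) := by
    have := (cs_integral hηm gm hη (hsq _ h1V).1).1
    refine this.mono ((Complex.continuous_ofReal.comp_aestronglyMeasurable hηm).mul cmm)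
      (Eventually.of_forall fun x => ?_)
    simp only [norm_mul, Complex.norm_real, RCLike.norm_conj, norm_norm]
    exact le_rfl
  refine ⟨iV, ?_⟩
  have hwi : ∀ n, Integrable (fun x => ((1 - ‖1 + w n x‖ ^ 2 : ℝ) : ℂ) *
      ((starRingEnd ℂ) (1 + w n x) * φ x)) := fun n => by
    have := (hw n).cont
    exact Continuous.integrable_of_hasCompactSupport (by fun_prop) (hφ.2.mul_left.mul_left)
  have hmn : ∀ n, AEStronglyMeasurable (fun x => 1 - ‖1 + w n x‖ ^ 2) volume := fun n => by
    have := (hw n).cont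
    exact Continuous.aestronglyMeasurable (by fun_prop)
  have hsub : ∀ n, MemLp (fun x => w n x - V x) 2 (volume.restrict (closedBall 0 R)) :=
    fun n => ((hw n).memLp R).sub hm
  have hgm : ∀ n, AEStronglyMeasurable (fun x => ‖w n x - V x‖ * ‖φ x‖) volume := fun n =>
    ((hw n).cont.aestronglyMeasurable.sub hae').norm.mul hφc.norm.aestronglyMeasurable
  have hM4 : ∀ n, ∫ x, (1 - ‖1 + w n x‖ ^ 2) ^ 2 ≤ 4 * g := fun n => by
    have := hg n; unfold Vp at this; linarith
  have c1 : ∀ n, Integrable (fun x => |(1 - ‖1 + w n x‖ ^ 2) * (‖w n x - V x‖ * ‖φ x‖)|) ∧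
      ∫ x, |(1 - ‖1 + w n x‖ ^ 2) * (‖w n x - V x‖ * ‖φ x‖)| ≤
      Real.sqrt (4 * g) * Real.sqrt (D ^ 2 * ∫ x in closedBall 0 R, ‖w n x - V x‖ ^ 2) := by
    intro n
    have h1 := cs_integral (hmn n) (hgm n) (hw n).int_pot (hsq _ (hsub n)).1
    refine ⟨h1.1.abs, h1.2.trans ?_⟩
    gcongr
    · exact hM4 n
    · exact (hsq _ (hsub n)).2
  have hdm : ∀ n, AEStronglyMeasurable (fun x => (1 - ‖1 + w n x‖ ^ 2) - (1 - ‖1 + V x‖ ^ 2)) volume :=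
    fun n => (hmn n).sub hηm
  have hdp : ∀ n x, ((1 - ‖1 + w n x‖ ^ 2) - (1 - ‖1 + V x‖ ^ 2)) ^ 2 ≤
      2 * (1 - ‖1 + w n x‖ ^ 2) ^ 2 + 2 * (1 - ‖1 + V x‖ ^ 2) ^ 2 := fun n x => by
    nlinarith [sq_nonneg ((1 - ‖1 + w n x‖ ^ 2) + (1 - ‖1 + V x‖ ^ 2))]
  have hdi' : ∀ n, Integrable (fun x => 2 * (1 - ‖1 + w n x‖ ^ 2) ^ 2 + 2 * (1 - ‖1 + V x‖ ^ 2) ^ 2) :=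
    fun n => ((hw n).int_pot.const_mul 2).add (hη.const_mul 2)
  have hdi : ∀ n, Integrable (fun x => ((1 - ‖1 + w n x‖ ^ 2) - (1 - ‖1 + V x‖ ^ 2)) ^ 2) :=
    fun n => (hdi' n).mono ((hdm n).pow 2) (Eventually.of_forall fun x => by
      rw [Real.norm_of_nonneg (by positivity), Real.norm_of_nonneg (by positivity)]
      exact hdp n x)
  have c2 := weak_zero (g := fun x => ‖1 + V x‖ * ‖φ x‖)
    (M := 2 * (4 * g) + 2 * ∫ x, (1 - ‖1 + V x‖ ^ 2) ^ 2) hdm hdi (fun n => by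
      refine (integral_mono (hdi n) (hdi' n) (hdp n)).trans ?_
      rw [integral_add ((hw n).int_pot.const_mul 2) (hη.const_mul 2), integral_const_mul, integral_const_mul]
      linarith [hM4 n]) (by
      filter_upwards [hae] with x hx
      have := (((hx.const_add 1).norm.pow 2).const_sub 1).sub_const (1 - ‖1 + V x‖ ^ 2)
      simpa using this) gm (hsq _ h1V).1
  have c2i : ∀ n, Integrable (fun x => |((1 - ‖1 + w n x‖ ^ 2) - (1 - ‖1 + V x‖ ^ 2)) *
      (‖1 + V x‖ * ‖φ x‖)|) := fun n => (cs_integral (hdm n) gm (hdi n) (hsq _ h1V).1).1.abs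
  have c3 : Tendsto (fun n => Real.sqrt (4 * g) *
      Real.sqrt (D ^ 2 * ∫ x in closedBall 0 R, ‖w n x - V x‖ ^ 2)) atTop (𝓝 0) := by
    have := ((Real.continuous_sqrt.tendsto _).comp (hl.const_mul (D ^ 2))).const_mul (Real.sqrt (4 * g))
    simpa using this
  rw [tendsto_iff_norm_sub_tendsto_zero]
  have c4 := c3.add c2
  rw [add_zero] at c4
  refine squeeze_zero (fun _ => norm_nonneg _) (fun n => ?_) c4
  unfold epr
  rw [← integral_sub (hwi n) iV]
  refine (norm_integral_le_of_norm_le ((c1 n).1.add (c2i n)) (Eventually.of_forall fun x => ?_)).trans ?_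
  · have e : ((1 - ‖1 + w n x‖ ^ 2 : ℝ) : ℂ) * ((starRingEnd ℂ) (1 + w n x) * φ x) -
        ((1 - ‖1 + V x‖ ^ 2 : ℝ) : ℂ) * ((starRingEnd ℂ) (1 + V x) * φ x) =
        ((1 - ‖1 + w n x‖ ^ 2 : ℝ) : ℂ) * ((starRingEnd ℂ) (w n x - V x) * φ x) +
        (((1 - ‖1 + w n x‖ ^ 2) - (1 - ‖1 + V x‖ ^ 2) : ℝ) : ℂ) * ((starRingEnd ℂ) (1 + V x) * φ x) := by
      push_cast; simp only [map_add, map_sub, map_one]; ring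
    rw [e]
    refine (norm_add_le _ _).trans (le_of_eq ?_)
    simp only [norm_mul, Complex.norm_real, RCLike.norm_conj, Real.norm_eq_abs, abs_mul, abs_norm,
      Pi.add_apply]
  · simp only [Pi.add_apply]
    rw [integral_add (c1 n).1 (c2i n)]
    linarith [(c1 n).2]

/-- First-order consequence of the minimisation inequality along the curve `s = 1 + t θ`. -/
lemma real_EL {T K V p0 k v p a A1 A2 A3 A4 θ : ℝ} (hKV : K + V = p0)
    (hθ : -θ * (K - V) + (k + v - p) < 0)
    (h : ∀ t : ℝ, 0 < t → t ≤ 1 → 0 < 1 + t * θ →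
      (K + t * k + t ^ 2 * A1) + (1 + t * θ) ^ 2 * (V + t * v + t ^ 2 * A2)
        - (1 + t * θ) * (p0 + t * p + t ^ 2 * A3) < 0 →
      T ≤ (1 + t * θ) * (T + t * a + t ^ 2 * A4)) : 0 ≤ θ * T + a := by
  by_contra hcon
  push Not at hcon
  let H : ℝ → ℝ := fun t => k + t * A1 + (2 * θ + t * θ ^ 2) * V + (1 + t * θ) ^ 2 * (v + t * A2)
    - θ * p0 - (1 + t * θ) * (p + t * A3)
  let Q : ℝ → ℝ := fun t => θ * T + (1 + t * θ) * (a + t * A4)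
  have hH : ∀ᶠ t in 𝓝 (0:ℝ), H t < 0 := by
    have : Continuous H := by fun_prop
    refine (this.tendsto 0).eventually (gt_mem_nhds ?_)
    simp only [H]; rw [← hKV]; nlinarith
  have hQ : ∀ᶠ t in 𝓝 (0:ℝ), Q t < 0 := by
    have : Continuous Q := by fun_prop
    refine (this.tendsto 0).eventually (gt_mem_nhds ?_)
    simp only [Q]; nlinarith
  have hs : ∀ᶠ t in 𝓝 (0:ℝ), 0 < 1 + t * θ := by
    have : Continuous (fun t : ℝ => 1 + t * θ) := by fun_prop
    refine (this.tendsto 0).eventually (lt_mem_nhds ?_)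
    norm_num
  have h1 : ∀ᶠ t in 𝓝 (0:ℝ), t < 1 := gt_mem_nhds one_pos
  have hall := ((hH.and hQ).and (hs.and h1)).filter_mono (nhdsWithin_le_nhds (s := Set.Ioi (0:ℝ)))
  obtain ⟨t, ⟨⟨a1, a2⟩, a3, a4⟩, a5⟩ := (hall.and self_mem_nhdsWithin).exists
  have ht : 0 < t := a5
  have h2 := h t ht a4.le a3 (by
    have : (K + t * k + t ^ 2 * A1) + (1 + t * θ) ^ 2 * (V + t * v + t ^ 2 * A2)
        - (1 + t * θ) * (p0 + t * p + t ^ 2 * A3) = t * H t := by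
      simp only [H]; rw [← hKV]; ring
    rw [this]; exact mul_neg_of_pos_of_neg ht a1)
  have h3 : (1 + t * θ) * (T + t * a + t ^ 2 * A4) - T = t * Q t := by simp only [Q]; ring
  have h4 := mul_neg_of_pos_of_neg ht a2
  linarith

/-- A minimising sequence `w` for `Af` among test fields with `Bf < 0`, with infimum `T` and fixed momentum
term `p0`; `K` and `V0` are the limits of the longitudinal kinetic and the potential energy, and `V` is
the limit of `w` almost everywhere and locally in `L²`. -/
structure MinSeq (c T p0 K V0 : ℝ) (w : ℕ → Ed 3 → ℂ) (V : Ed 3 → ℂ) : Prop where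
  tf : ∀ n, TF (w n)
  inf : ∀ v, TF v → Bf c v < 0 → T ≤ Af v
  neg : ∀ n, Bf c (w n) < 0
  hA : Tendsto (fun n => Af (w n)) atTop (𝓝 T)
  hK : Tendsto (fun n => Kf (w n)) atTop (𝓝 K)
  hV : Tendsto (fun n => Vp (w n)) atTop (𝓝 V0)
  hp : ∀ n, pf c (w n) = p0
  sm : StronglyMeasurable V
  ae : ∀ᵐ x, Tendsto (fun n => w n x) atTop (𝓝 (V x))
  loc : ∀ R, MemLp V 2 (volume.restrict (closedBall 0 R)) ∧
        Tendsto (fun n => ∫ x in closedBall 0 R, ‖w n x - V x‖ ^ 2) atTop (𝓝 0)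

lemma MinSeq.Vp_le {c T p0 K V0 : ℝ} {w : ℕ → Ed 3 → ℂ} {V : Ed 3 → ℂ} (h : MinSeq c T p0 K V0 w V)
    (n : ℕ) : Vp (w n) ≤ p0 := by
  have := h.neg n
  unfold Bf at this
  linarith [h.hp n, Kf_nonneg (w n)]

/-- If a perturbation `w n + t φ`, dilated longitudinally by `1 + t θ`, decreases `B` to first order, then it
is admissible and cannot decrease `A` to first order. -/
lemma MinSeq.EL {c T p0 K V0 : ℝ} {w : ℕ → Ed 3 → ℂ} {V : Ed 3 → ℂ} (h : MinSeq c T p0 K V0 w V)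
    (hKV : K + V0 = p0) {φ : Ed 3 → ℂ} (hφ : TF φ) {θ : ℝ}
    (hθ : -θ * (K - V0) + (-(prg V (pd (pd φ 0) 0)).re + -(epr V φ).re - -c * (prg V (pd φ 0)).im) < 0) :
    0 ≤ θ * T + (-(prg V (pd (pd φ 1) 1)).re - (prg V (pd (pd φ 2) 2)).re) := by
  set C := 2 * (∫ x, ‖φ x‖ ^ 2) + 2 * (∫ x, ‖φ x‖ ^ 4) + 4 * p0 with hC
  refine real_EL (A1 := Kf φ) (A2 := C) (A3 := pf c φ) (A4 := Af φ) hKV hθ ?_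
  intro t ht ht1 hs hneg
  have cre : ∀ ψ, TF ψ → Tendsto (fun n => (prg (w n) ψ).re) atTop (𝓝 (prg V ψ).re) := fun ψ hψ =>
    (Complex.continuous_re.tendsto _).comp (lin_conv h.tf hψ h.loc).2
  have cim : ∀ ψ, TF ψ → Tendsto (fun n => (prg (w n) ψ).im) atTop (𝓝 (prg V ψ).im) := fun ψ hψ =>
    (Complex.continuous_im.tendsto _).comp (lin_conv h.tf hψ h.loc).2
  have cep : Tendsto (fun n => (epr (w n) φ).re) atTop (𝓝 (epr V φ).re) :=
    (Complex.continuous_re.tendsto _).comp (epr_conv h.tf hφ h.sm h.ae h.loc h.Vp_le).2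
  let u : ℕ → Ed 3 → ℂ := fun n x => w n x + t * φ x
  have hu : ∀ n, TF (u n) := fun n => (h.tf n).add (hφ.cmul t)
  have eK : ∀ n, Kf (u n) = Kf (w n) + t * (-(prg (w n) (pd (pd φ 0) 0)).re) + t ^ 2 * Kf φ := by
    intro n; unfold Kf; rw [var_G (h.tf n) hφ]; ring
  have eA : ∀ n, Af (u n) = Af (w n) + t * (-(prg (w n) (pd (pd φ 1) 1)).re - (prg (w n) (pd (pd φ 2) 2)).re)
      + t ^ 2 * Af φ := by
    intro n; unfold Af; rw [var_G (h.tf n) hφ, var_G (h.tf n) hφ]; ring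
  have eP : ∀ n, pf c (u n) = p0 + t * (-c * (prg (w n) (pd φ 0)).im) + t ^ 2 * pf c φ := by
    intro n
    have := h.hp n
    unfold pf at this ⊢
    rw [var_Mo (h.tf n) hφ, ← this]; ring
  have eV : ∀ n, Vp (u n) ≤ Vp (w n) + t * (-(epr (w n) φ).re) + t ^ 2 * C := by
    intro n
    refine (var_Vp (h.tf n) hφ (t := t) (by rw [abs_of_pos ht]; exact ht1)).trans ?_
    have := h.Vp_le n
    rw [hC]; gcongr
  have hlim : Tendsto (fun n => (Kf (w n) + t * (-(prg (w n) (pd (pd φ 0) 0)).re) + t ^ 2 * Kf φ) +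
      (1 + t * θ) ^ 2 * (Vp (w n) + t * (-(epr (w n) φ).re) + t ^ 2 * C) -
      (1 + t * θ) * (p0 + t * (-c * (prg (w n) (pd φ 0)).im) + t ^ 2 * pf c φ)) atTop
      (𝓝 ((K + t * (-(prg V (pd (pd φ 0) 0)).re) + t ^ 2 * Kf φ) +
      (1 + t * θ) ^ 2 * (V0 + t * (-(epr V φ).re) + t ^ 2 * C) -
      (1 + t * θ) * (p0 + t * (-c * (prg V (pd φ 0)).im) + t ^ 2 * pf c φ))) := by
    refine Tendsto.sub (Tendsto.add (Tendsto.add (h.hK.add ((cre _ ((hφ.pd 0).pd 0)).neg.const_mul t))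
      tendsto_const_nhds) ((Tendsto.add (h.hV.add (cep.neg.const_mul t)) tendsto_const_nhds).const_mul _))
      (Tendsto.const_mul _ (Tendsto.add (Tendsto.const_add _ (((cim _ (hφ.pd 0)).const_mul _).const_mul t))
        tendsto_const_nhds))
  have hev := hlim.eventually (gt_mem_nhds hneg)
  have hAl : Tendsto (fun n => (1 + t * θ) * (Af (w n) + t * (-(prg (w n) (pd (pd φ 1) 1)).re -
      (prg (w n) (pd (pd φ 2) 2)).re) + t ^ 2 * Af φ)) atTop
      (𝓝 ((1 + t * θ) * (T + t * (-(prg V (pd (pd φ 1) 1)).re - (prg V (pd (pd φ 2) 2)).re) + t ^ 2 * Af φ))) :=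
    Tendsto.const_mul _ (Tendsto.add (h.hA.add (Tendsto.const_mul t
      ((cre _ ((hφ.pd 1).pd 1)).neg.sub (cre _ ((hφ.pd 2).pd 2))))) tendsto_const_nhds)
  refine ge_of_tendsto hAl (hev.mono fun n hn => ?_)
  have hsT : TF (sc (1 + t * θ) 1 (u n)) := (hu n).sc hs one_pos
  have := h.inf _ hsT (by
    unfold Bf
    rw [Kf_sc hs one_pos (hu n), Vp_sc hs one_pos, pf_sc c hs one_pos (hu n), eK, eP]
    have hV' := eV n
    set X := Kf (w n) + t * (-(prg (w n) (pd (pd φ 0) 0)).re) + t ^ 2 * Kf φ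
    set Y := p0 + t * (-c * (prg (w n) (pd φ 0)).im) + t ^ 2 * pf c φ
    set s := 1 + t * θ
    have h1 : s ^ 2 * Vp (u n) ≤ s ^ 2 * (Vp (w n) + t * (-(epr (w n) φ).re) + t ^ 2 * C) := by gcongr
    have h2 : 1 ^ 2 / s * X + s * 1 ^ 2 * Vp (u n) - 1 ^ 2 * Y = (X + s ^ 2 * Vp (u n) - s * Y) / s := by
      field_simp
    rw [h2]
    exact div_neg_of_neg_of_pos (by linarith) hs)
  rw [Af_sc hs one_pos (hu n), eA] at this
  exact this

/-! ### Rigidity -/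

/-- An integrable function invariant under all translations in a fixed direction vanishes almost
everywhere. -/
lemma invar_zero {E : Type*} [NormedAddCommGroup E] [NormedSpace ℝ E] [MeasurableSpace E] [BorelSpace E]
    {μ : Measure E} [μ.IsAddRightInvariant] {g : E → ℝ} (hg : Integrable g μ)
    (h0 : ∀ x, 0 ≤ g x) {e : E} (he : e ≠ 0) (hi : ∀ τ : ℝ, ∀ᵐ x ∂μ, g (x + τ • e) = g x) :
    ∀ᵐ x ∂μ, g x = 0 := by
  have key : ∀ R : ℝ, ∫ x in closedBall 0 R, g x ∂μ = 0 := by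
    intro R
    have h1 : ∀ n : ℕ, ∫ x, (closedBall (0:E) R).indicator (fun _ => (1:ℝ)) (x - (n:ℝ) • e) * g x ∂μ =
        ∫ x in closedBall 0 R, g x ∂μ := by
      intro n
      rw [← integral_indicator isClosed_closedBall.measurableSet,
        ← integral_add_right_eq_self (fun x => (closedBall (0:E) R).indicator (fun _ => (1:ℝ))
          (x - (n:ℝ) • e) * g x) ((n:ℝ) • e)]
      refine integral_congr_ae ((hi n).mono fun x hx => ?_)
      simp only [add_sub_cancel_right, hx]
      by_cases hxR : x ∈ closedBall (0:E) R
      · simp [Set.indicator_of_mem hxR]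
      · simp [Set.indicator_of_notMem hxR]
    have h2 : Tendsto (fun n : ℕ => ∫ x, (closedBall (0:E) R).indicator (fun _ => (1:ℝ))
        (x - (n:ℝ) • e) * g x ∂μ) atTop (𝓝 (∫ x, (0:ℝ) ∂μ)) := by
      refine tendsto_integral_of_dominated_convergence g (fun n => ?_) hg (fun n => ?_) ?_
      · have hm : Measurable (fun x : E => (closedBall (0:E) R).indicator (fun _ => (1:ℝ)) (x - (n:ℝ) • e)) :=
          (measurable_const.indicator isClosed_closedBall.measurableSet).comp (measurable_id.sub_const _)
        exact hm.aestronglyMeasurable.mul hg.1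
      · refine Eventually.of_forall fun x => ?_
        rw [norm_mul, Real.norm_of_nonneg (h0 x)]
        refine mul_le_of_le_one_left (h0 x) ?_
        by_cases hxR : x - (n:ℝ) • e ∈ closedBall (0:E) R
        · simp [Set.indicator_of_mem hxR]
        · simp [Set.indicator_of_notMem hxR]
      · refine Eventually.of_forall fun x => ?_
        refine tendsto_const_nhds.congr' ?_
        have he' : 0 < ‖e‖ := norm_pos_iff.2 he
        obtain ⟨N, hN⟩ := exists_nat_gt ((R + ‖x‖) / ‖e‖)
        filter_upwards [eventually_ge_atTop N] with n hn
        rw [Set.indicator_of_notMem, zero_mul]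
        rw [mem_closedBall, dist_zero_right]
        push Not
        have h3 : (R + ‖x‖) < n * ‖e‖ := by
          rw [div_lt_iff₀ he'] at hN
          refine hN.trans_le ?_
          gcongr
        have h4 : ‖(n:ℝ) • e‖ = n * ‖e‖ := by rw [norm_smul]; simp
        have h5 := norm_sub_norm_le ((n:ℝ) • e) x
        rw [norm_sub_rev] at h5
        linarith
    simp only [h1, integral_zero] at h2
    exact tendsto_nhds_unique tendsto_const_nhds h2
  have h3 : ∀ n : ℕ, ∀ᵐ x ∂μ, x ∈ closedBall (0:E) n → g x = 0 := by
    intro n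
    rw [← ae_restrict_iff' isClosed_closedBall.measurableSet]
    have := (setIntegral_eq_zero_iff_of_nonneg_ae (Eventually.of_forall h0) hg.integrableOn).1 (key n)
    exact this
  filter_upwards [ae_all_iff.2 h3] with x hx
  obtain ⟨n, hn⟩ := exists_nat_gt ‖x‖
  exact hx n (by rw [mem_closedBall, dist_zero_right]; exact hn.le)

/-- A measurable function that is invariant under every translation is almost everywhere constant. -/
lemma ae_const {V : Ed 3 → ℂ} (hV : StronglyMeasurable V)
    (h : ∀ (i : Fin 3) (τ : ℝ), ∀ᵐ x, V (x + τ • ee i) = V x) : ∃ a, ∀ᵐ x, V x = a := by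
  have hz : ∀ z : Ed 3, ∀ᵐ x, V (x + z) = V x := by
    intro z
    have e : z = z 0 • ee 0 + z 1 • ee 1 + z 2 • ee 2 := by
      ext i; fin_cases i <;> simp [ee]
    have h0 := h 0 (z 0)
    have h1 := ae_shift (h 1 (z 1)) (z 0 • ee 0)
    have h2 := ae_shift (h 2 (z 2)) (z 0 • ee 0 + z 1 • ee 1)
    filter_upwards [h0, h1, h2] with x a0 a1 a2
    rw [← a0, ← a1, add_assoc, ← a2, e]
    simp [ee, add_assoc]
  have hm : MeasurableSet {p : Ed 3 × Ed 3 | V (p.2 + p.1) = V p.2} :=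
    measurableSet_eq_fun (hV.measurable.comp (measurable_snd.add measurable_fst))
      (hV.measurable.comp measurable_snd)
  have h2 := (Measure.ae_ae_comm (μ := (volume : Measure (Ed 3))) (ν := (volume : Measure (Ed 3)))
    (p := fun z x => V (x + z) = V x) hm).1 (Eventually.of_forall hz)
  obtain ⟨x, hx⟩ := h2.exists
  refine ⟨V x, ?_⟩
  have h3 : ∀ᵐ z : Ed 3, V (x + (z + -x)) = V x := ae_shift hx (-x)
  filter_upwards [h3] with z hz
  rwa [add_comm z, add_neg_cancel_left] at hz

/-- Rigidity: a finite energy field which is invariant in one direction is a constant of modulus one. -/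
lemma rig {V : Ed 3 → ℂ} (hV : StronglyMeasurable V)
    (h : ∀ (i : Fin 3) (τ : ℝ), Integrable (fun x => ‖V (x + τ • ee i) - V x‖ ^ 2)) {i0 : Fin 3}
    (hi : ∀ τ : ℝ, ∀ᵐ x, V (x + τ • ee i0) = V x)
    (hη : Integrable (fun x => (1 - ‖1 + V x‖ ^ 2) ^ 2)) : ∃ a : ℂ, ‖a‖ = 1 ∧ ∀ᵐ x, 1 + V x = a := by
  have he : ee i0 ≠ 0 := by simp [ee]
  obtain ⟨a, ha⟩ := ae_const hV (fun i τ => by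
    refine (invar_zero (h i τ) (fun x => by positivity) he fun σ => ?_).mono fun x hx => ?_
    · filter_upwards [hi σ, ae_shift (hi σ) (τ • ee i)] with x h1 h2
      rw [h1, add_right_comm, h2]
    · have := pow_eq_zero_iff (two_ne_zero) |>.1 hx
      exact sub_eq_zero.1 (norm_eq_zero.1 this))
  refine ⟨1 + a, ?_, ha.mono fun x hx => by rw [hx]⟩
  have h1 : Integrable (fun _ : Ed 3 => (1 - ‖1 + a‖ ^ 2) ^ 2) :=
    hη.congr (ha.mono fun x hx => by simp only [hx])
  rw [integrable_const_iff] at h1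
  rcases h1 with h1 | h1
  · have h2 := pow_eq_zero_iff (two_ne_zero) |>.1 h1
    nlinarith [norm_nonneg (1 + a)]
  · exact absurd h1.measure_univ_lt_top (by simp)

/-! ### Minimising sequence and weak equation -/

/-- By scaling in the transverse variables the momentum term can be given any positive value. -/
lemma rescale {c p0 : ℝ} (hp0 : 0 < p0) {v : Ed 3 → ℂ} (hv : TF v) (hB : Bf c v < 0) :
    ∃ u, TF u ∧ Bf c u < 0 ∧ Af u = Af v ∧ pf c u = p0 := by
  have hp : 0 < pf c v := by
    unfold Bf at hB; linarith [Kf_nonneg v, Vp_nonneg v]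
  have hl : 0 < Real.sqrt (p0 / pf c v) := Real.sqrt_pos.2 (by positivity)
  have hl2 : Real.sqrt (p0 / pf c v) ^ 2 = p0 / pf c v := Real.sq_sqrt (by positivity)
  refine ⟨sc 1 (Real.sqrt (p0 / pf c v)) v, hv.sc one_pos hl, ?_, ?_, ?_⟩
  · unfold Bf at hB ⊢
    rw [Kf_sc one_pos hl hv, Vp_sc one_pos hl, pf_sc c one_pos hl hv, hl2]
    have : p0 / pf c v / 1 * Kf v + 1 * (p0 / pf c v) * Vp v - p0 / pf c v * pf c v =
        (p0 / pf c v) * (Kf v + Vp v - pf c v) := by ring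
    rw [this]
    exact mul_neg_of_pos_of_neg (by positivity) hB
  · rw [Af_sc one_pos hl hv, one_mul]
  · rw [pf_sc c one_pos hl hv, hl2]; field_simp

/-- A sequence with prescribed functionals can be translated and refined into a `MinSeq` with nontrivial
limit. -/
lemma build {c T p0 K V0 : ℝ} (hc : 0 < c) (hc2 : c < Real.sqrt 2) (hp0 : 0 < p0)
    {v : ℕ → Ed 3 → ℂ} (hv : ∀ n, TF (v n)) (inf : ∀ v, TF v → Bf c v < 0 → T ≤ Af v)
    (neg : ∀ n, Bf c (v n) < 0) (hA : Tendsto (fun n => Af (v n)) atTop (𝓝 T))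
    (hK : Tendsto (fun n => Kf (v n)) atTop (𝓝 K)) (hV : Tendsto (fun n => Vp (v n)) atTop (𝓝 V0))
    (hp : ∀ n, pf c (v n) = p0) :
    ∃ w V, MinSeq c T p0 K V0 w V ∧ ¬ ∃ a : ℂ, ‖a‖ = 1 ∧ ∀ᵐ x, 1 + V x = a := by
  obtain ⟨M, hM⟩ := hA.bddAbove_range
  have hM' : ∀ n, Af (v n) ≤ M := fun n => hM ⟨n, rfl⟩
  obtain ⟨φ, w, V, hφ, hw, hs, hae, hl, hn⟩ := limit_exists hc hc2 hp0
    ((Af_nonneg (v 0)).trans (hM' 0)) hv hM'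
    (fun n => by have := neg n; unfold Bf at this; linarith) hp
  have eA : ∀ n, Af (w n) = Af (v (φ n)) := fun n => by
    unfold Af; rw [(hw n).2.1, (hw n).2.1]
  have eK : ∀ n, Kf (w n) = Kf (v (φ n)) := fun n => by
    unfold Kf; rw [(hw n).2.1]
  have eV : ∀ n, Vp (w n) = Vp (v (φ n)) := fun n => (hw n).2.2.1
  have ep : ∀ n, pf c (w n) = pf c (v (φ n)) := fun n => (hw n).2.2.2
  refine ⟨w, V, ⟨fun n => (hw n).1, inf, fun n => ?_, ?_, ?_, ?_, fun n => (ep n).trans (hp _),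
    hs, hae, hl⟩, hn⟩
  · have := neg (φ n)
    unfold Bf at this ⊢
    rw [eK, eV, ep]; exact this
  · simp only [eA]; exact hA.comp hφ.tendsto_atTop
  · simp only [eK]; exact hK.comp hφ.tendsto_atTop
  · simp only [eV]; exact hV.comp hφ.tendsto_atTop

lemma MinSeq.G_bdd {c T p0 K V0 : ℝ} {w : ℕ → Ed 3 → ℂ} {V : Ed 3 → ℂ} (h : MinSeq c T p0 K V0 w V)
    (i : Fin 3) : ∃ g, ∀ n, G i (w n) ≤ g := by
  obtain ⟨M, hM⟩ := h.hA.bddAbove_range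
  obtain ⟨N, hN⟩ := h.hK.bddAbove_range
  refine ⟨2 * M + 2 * N, fun n => ?_⟩
  have h1 : Af (w n) ≤ M := hM ⟨n, rfl⟩
  have h2 : Kf (w n) ≤ N := hN ⟨n, rfl⟩
  unfold Af at h1
  unfold Kf at h2
  have := G_nonneg 0 (w n)
  have := G_nonneg 1 (w n)
  have := G_nonneg 2 (w n)
  fin_cases i <;> simp <;> linarith

lemma lim_shift_le {w : ℕ → Ed 3 → ℂ} (hw : ∀ n, TF (w n)) {V : Ed 3 → ℂ} (hV : StronglyMeasurable V)
    (hl : ∀ᵐ x, Tendsto (fun n => w n x) atTop (𝓝 (V x))) {i : Fin 3} {g : ℝ}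
    (hg : ∀ n, G i (w n) ≤ g) (τ : ℝ) :
    Integrable (fun x => ‖V (x + τ • ee i) - V x‖ ^ 2) ∧
      ∫ x, ‖V (x + τ • ee i) - V x‖ ^ 2 ≤ τ ^ 2 * g := by
  obtain ⟨a, -, φ, hφ, ha⟩ := (isCompact_Icc (a := 0) (b := g)).tendsto_subseq
    (x := fun n => G i (w n)) (fun n => ⟨G_nonneg _ _, hg n⟩)
  obtain ⟨h1, h2⟩ := lim_shift (w := fun n => w (φ n)) (fun n => hw _) hV
    (hl.mono fun x hx => hx.comp hφ.tendsto_atTop) ha τ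
  refine ⟨h1, h2.trans ?_⟩
  gcongr
  exact le_of_tendsto' ha fun n => hg _

lemma MinSeq.shift {c T p0 K V0 : ℝ} {w : ℕ → Ed 3 → ℂ} {V : Ed 3 → ℂ} (h : MinSeq c T p0 K V0 w V)
    (i : Fin 3) : ∃ g, ∀ τ, Integrable (fun x => ‖V (x + τ • ee i) - V x‖ ^ 2) ∧
      ∫ x, ‖V (x + τ • ee i) - V x‖ ^ 2 ≤ τ ^ 2 * g := by
  obtain ⟨g, hg⟩ := h.G_bdd i
  exact ⟨g, lim_shift_le h.tf h.sm h.ae hg⟩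

lemma MinSeq.eta {c T p0 K V0 : ℝ} {w : ℕ → Ed 3 → ℂ} {V : Ed 3 → ℂ} (h : MinSeq c T p0 K V0 w V) :
    Integrable (fun x => (1 - ‖1 + V x‖ ^ 2) ^ 2) := lim_eta h.tf h.sm h.ae h.Vp_le

/-- The infimum is positive: otherwise the limit would be invariant in a transverse direction. -/
lemma MinSeq.T_pos {c T p0 K V0 : ℝ} {w : ℕ → Ed 3 → ℂ} {V : Ed 3 → ℂ} (h : MinSeq c T p0 K V0 w V)
    (hn : ¬ ∃ a : ℂ, ‖a‖ = 1 ∧ ∀ᵐ x, 1 + V x = a) : 0 < T := by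
  have h0 : 0 ≤ T := ge_of_tendsto' h.hA fun n => Af_nonneg _
  refine h0.lt_of_ne fun hT => hn ?_
  have hG : Tendsto (fun n => G 1 (w n)) atTop (𝓝 0) := by
    have h2 := h.hA.const_mul 2
    rw [← hT, mul_zero] at h2
    refine squeeze_zero (fun n => G_nonneg _ _) (fun n => ?_) h2
    have := G_nonneg 2 (w n)
    unfold Af; linarith
  refine rig h.sm (fun i τ => ((h.shift i).choose_spec τ).1) (i0 := 1) (fun τ => ?_) h.eta
  obtain ⟨h1, h2⟩ := lim_shift h.tf h.sm h.ae hG τ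
  rw [mul_zero] at h2
  have h3 := (integral_eq_zero_iff_of_nonneg (fun x => by positivity) h1).1
    (le_antisymm h2 (integral_nonneg fun x => by positivity))
  refine h3.mono fun x hx => ?_
  have := pow_eq_zero_iff (two_ne_zero) |>.1 hx
  exact sub_eq_zero.1 (norm_eq_zero.1 this)

/-- Longitudinal dilation by `s < 1` maps `K`, `V`, `A` to `K / s`, `s V`, `s A`; since it lowers `A` it must
violate the constraint. -/
lemma MinSeq.KV {c T p0 K V0 : ℝ} {w : ℕ → Ed 3 → ℂ} {V : Ed 3 → ℂ} (h : MinSeq c T p0 K V0 w V)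
    (hT : 0 < T) : K + V0 = p0 ∧ V0 ≤ K := by
  have hle : K + V0 ≤ p0 := by
    refine le_of_tendsto' (h.hK.add h.hV) fun n => ?_
    have := h.neg n
    unfold Bf at this
    linarith [h.hp n]
  -- The dilated field would have `B < 0` and a value of `A` below the infimum.
  have hs : ∀ s : ℝ, 0 < s → s < 1 → 0 ≤ K + s ^ 2 * V0 - s * p0 := by
    intro s hs hs1
    by_contra hcon
    push Not at hcon
    have hl : Tendsto (fun n => Kf (w n) + s ^ 2 * Vp (w n) - s * p0) atTop
        (𝓝 (K + s ^ 2 * V0 - s * p0)) := (h.hK.add (h.hV.const_mul _)).sub_const _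
    have hev := hl.eventually (gt_mem_nhds hcon)
    have h2 : T ≤ s * T := by
      refine ge_of_tendsto (h.hA.const_mul s) (hev.mono fun n hn => ?_)
      have := h.inf _ ((h.tf n).sc hs one_pos) (by
        unfold Bf
        rw [Kf_sc hs one_pos (h.tf n), Vp_sc hs one_pos, pf_sc c hs one_pos (h.tf n), h.hp]
        have e : 1 ^ 2 / s * Kf (w n) + s * 1 ^ 2 * Vp (w n) - 1 ^ 2 * p0 =
          (Kf (w n) + s ^ 2 * Vp (w n) - s * p0) / s := by field_simp
        rw [e]
        exact div_neg_of_neg_of_pos hn hs)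
      rwa [Af_sc hs one_pos (h.tf n)] at this
    nlinarith
  have hlim : ∀ f : ℝ → ℝ, Continuous f → (∀ s, 0 < s → s < 1 → 0 ≤ f s) → 0 ≤ f 1 := by
    intro f hf hp
    have h1 : Tendsto f (𝓝[<] 1) (𝓝 (f 1)) := (hf.tendsto 1).mono_left nhdsWithin_le_nhds
    refine ge_of_tendsto h1 ?_
    filter_upwards [Ioo_mem_nhdsLT (zero_lt_one (α := ℝ))] with s hs using hp s hs.1 hs.2
  have e1 := hlim _ (by fun_prop : Continuous fun s : ℝ => K + s ^ 2 * V0 - s * p0) hs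
  have e2 : K + V0 = p0 := by linarith
  refine ⟨e2, ?_⟩
  have e3 := hlim (fun s => K - s * V0) (by fun_prop) (fun s h0 h1 => by
    have := hs s h0 h1
    rw [← e2] at this
    have e : K + s ^ 2 * V0 - s * (K + V0) = (1 - s) * (K - s * V0) := by ring
    rw [e] at this
    exact nonneg_of_mul_nonneg_right this (by linarith))
  simp at e3; linarith

/-- Existence of a minimising sequence with nontrivial limit, normalised by a transverse dilation so that
`K - V0`, the coefficient of the longitudinal dilation in `MinSeq.EL`, equals `T` unless it vanishes. -/
lemma min_exists {c : ℝ} (hc : 0 < c) (hc2 : c < Real.sqrt 2) :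
    ∃ T p0 K V0 w V, MinSeq c T p0 K V0 w V ∧ 0 < T ∧ K + V0 = p0 ∧ (K - V0 = T ∨ K - V0 = 0) ∧
      ¬ ∃ a : ℂ, ‖a‖ = 1 ∧ ∀ᵐ x, 1 + V x = a := by
  let S : Set ℝ := {a | ∃ v, TF v ∧ Bf c v < 0 ∧ Af v = a}
  have hSn : S.Nonempty := by
    obtain ⟨v, h1, h2⟩ := exists_Bf_neg hc
    exact ⟨_, v, h1, h2, rfl⟩
  have hSb : BddBelow S := ⟨0, by rintro _ ⟨v, -, -, rfl⟩; exact Af_nonneg v⟩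
  obtain ⟨u, -, hu, huS⟩ := exists_seq_tendsto_sInf hSn hSb
  set T := sInf S
  have inf : ∀ v, TF v → Bf c v < 0 → T ≤ Af v := fun v h1 h2 => csInf_le hSb ⟨v, h1, h2, rfl⟩
  choose v0 hv0 hB0 hA0 using huS
  choose v hv hB hA hp using fun n => rescale one_pos (hv0 n) (hB0 n)
  have hKb : ∀ n, (Kf (v n), Vp (v n)) ∈ Set.Icc (0:ℝ) 1 ×ˢ Set.Icc (0:ℝ) 1 := fun n => by
    have := hB n
    unfold Bf at this
    rw [hp] at this
    have := Kf_nonneg (v n)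
    have := Vp_nonneg (v n)
    exact ⟨⟨by assumption, by dsimp only; linarith⟩, ⟨by assumption, by dsimp only; linarith⟩⟩
  obtain ⟨⟨K, V0⟩, -, φ, hφ, hl⟩ := (isCompact_Icc.prod isCompact_Icc).tendsto_subseq hKb
  have hK : Tendsto (fun n => Kf (v (φ n))) atTop (𝓝 K) := (continuous_fst.tendsto _).comp hl
  have hV : Tendsto (fun n => Vp (v (φ n))) atTop (𝓝 V0) := (continuous_snd.tendsto _).comp hl
  have hAT : Tendsto (fun n => Af (v (φ n))) atTop (𝓝 T) := by
    simp only [hA, hA0]; exact hu.comp hφ.tendsto_atTop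
  obtain ⟨w, V, hm, hn⟩ := build hc hc2 one_pos (fun n => hv (φ n)) inf (fun n => hB _) hAT hK hV
    (fun n => hp _)
  have hT := hm.T_pos hn
  obtain ⟨e1, e2⟩ := hm.KV hT
  rcases e2.eq_or_lt with h | h
  · exact ⟨T, 1, K, V0, w, V, hm, hT, e1, Or.inr (by linarith), hn⟩
  -- A transverse dilation multiplies `K`, `V` and the momentum by `l²` and keeps `A`, so `K - V0` can be made
  -- equal to `T`.
  have hκ : 0 < K - V0 := by linarith
  have hl : 0 < Real.sqrt (T / (K - V0)) := Real.sqrt_pos.2 (by positivity)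
  have hl2 : Real.sqrt (T / (K - V0)) ^ 2 = T / (K - V0) := Real.sq_sqrt (by positivity)
  set l := Real.sqrt (T / (K - V0))
  have eK : ∀ n, Kf (sc 1 l (w n)) = l ^ 2 * Kf (w n) := fun n => by
    rw [Kf_sc one_pos hl (hm.tf n), div_one]
  have eV : ∀ n, Vp (sc 1 l (w n)) = l ^ 2 * Vp (w n) := fun n => by
    rw [Vp_sc one_pos hl, one_mul]
  have eA : ∀ n, Af (sc 1 l (w n)) = Af (w n) := fun n => by
    rw [Af_sc one_pos hl (hm.tf n), one_mul]
  have ep : ∀ n, pf c (sc 1 l (w n)) = l ^ 2 * pf c (w n) := fun n => pf_sc c one_pos hl (hm.tf n)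
  obtain ⟨w', V', hm', hn'⟩ := build (p0 := l ^ 2) (K := l ^ 2 * K) (V0 := l ^ 2 * V0) hc hc2
    (by positivity) (fun n => (hm.tf n).sc one_pos hl) inf (fun n => by
      have := hm.neg n
      unfold Bf at this ⊢
      rw [eK, eV, ep]
      have h3 : 0 < l ^ 2 := by positivity
      nlinarith) (by simp only [eA]; exact hm.hA) (by simp only [eK]; exact hm.hK.const_mul _)
    (by simp only [eV]; exact hm.hV.const_mul _) (fun n => by rw [ep, hm.hp, mul_one])
  refine ⟨T, _, _, _, w', V', hm', hT, by rw [← mul_add, e1, mul_one], Or.inl ?_, hn'⟩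
  rw [← mul_sub, hl2]; field_simp

lemma pd_cmul' {φ : Ed 3 → ℂ} (h : TF φ) (a : ℂ) (i : Fin 3) :
    pd (fun x => a * φ x) i = fun x => a * pd φ i x := by
  ext x; exact pd_cmul a (h.diff x) i

lemma prg_cmul (V φ : Ed 3 → ℂ) (a : ℂ) : prg V (fun x => a * φ x) = a * prg V φ := by
  unfold prg
  rw [← integral_const_mul]
  exact integral_congr_ae (Eventually.of_forall fun x => by ring)

lemma epr_cmul (V φ : Ed 3 → ℂ) (a : ℂ) : epr V (fun x => a * φ x) = a * epr V φ := by
  unfold epr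
  rw [← integral_const_mul]
  exact integral_congr_ae (Eventually.of_forall fun x => by ring)

/-- The weak form of the operator: `∂₀² + ε (∂₁² + ∂₂²) + i c ∂₀` applied to the test function, together
with the nonlinearity, paired with the conjugate of the field; `ε` is the transverse coefficient. -/
def Wk (c ε : ℝ) (V φ : Ed 3 → ℂ) : ℂ :=
  prg V (pd (pd φ 0) 0) + ε * (prg V (pd (pd φ 1) 1) + prg V (pd (pd φ 2) 2)) + epr V φ +
    I * c * prg V (pd φ 0)

lemma Wk_cmul (c ε : ℝ) (V : Ed 3 → ℂ) {φ : Ed 3 → ℂ} (h : TF φ) (a : ℂ) :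
    Wk c ε V (fun x => a * φ x) = a * Wk c ε V φ := by
  unfold Wk
  have e : ∀ i, pd (pd (fun x => a * φ x) i) i = fun x => a * pd (pd φ i) i x := fun i => by
    rw [pd_cmul' h, pd_cmul' (h.pd i)]
  rw [e, e, e, pd_cmul' h, prg_cmul, prg_cmul, prg_cmul, prg_cmul, epr_cmul]
  ring

/-- The weak equation, from the Euler–Lagrange inequality applied to `φ`, `-φ` and `± i φ`. -/
lemma Wk_zero {c T p0 K V0 : ℝ} {w : ℕ → Ed 3 → ℂ} {V : Ed 3 → ℂ} (h : MinSeq c T p0 K V0 w V)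
    (hT : 0 < T) (hKV : K + V0 = p0) (hκ : K - V0 = T ∨ K - V0 = 0) :
    ∃ ε : ℝ, (ε = 0 ∨ ε = 1) ∧ ∀ φ, TF φ → Wk c ε V φ = 0 := by
  obtain ⟨ε, hε, hpos⟩ : ∃ ε : ℝ, (ε = 0 ∨ ε = 1) ∧ ∀ φ, TF φ → (Wk c ε V φ).re ≤ 0 := by
    rcases hκ with hκ | hκ
    · refine ⟨1, Or.inr rfl, fun φ hφ => ?_⟩
      have key : 0 ≤ (-(prg V (pd (pd φ 0) 0)).re + -(epr V φ).re - -c * (prg V (pd φ 0)).im) +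
          (-(prg V (pd (pd φ 1) 1)).re - (prg V (pd (pd φ 2) 2)).re) := by
        set b := -(prg V (pd (pd φ 0) 0)).re + -(epr V φ).re - -c * (prg V (pd φ 0)).im
        refine le_of_forall_pos_le_add fun δ hδ => ?_
        have := h.EL hKV hφ (θ := (b + δ) / T) (by
          rw [hκ]
          have : -((b + δ) / T) * T = -(b + δ) := by field_simp
          rw [this]; simp only [b]; linarith)
        rw [div_mul_cancel₀ _ hT.ne'] at this
        linarith
      simp only [Wk, add_re, mul_re, I_re, I_im, ofReal_re, ofReal_im, mul_im]
      simp; linarith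
    · refine ⟨0, Or.inl rfl, fun φ hφ => ?_⟩
      have key : 0 ≤ (-(prg V (pd (pd φ 0) 0)).re + -(epr V φ).re - -c * (prg V (pd φ 0)).im) := by
        by_contra hcon
        push Not at hcon
        set a := (-(prg V (pd (pd φ 1) 1)).re - (prg V (pd (pd φ 2) 2)).re) with ha
        have := h.EL hKV hφ (θ := (-a - 1) / T) (by rw [hκ, mul_zero, zero_add]; exact hcon)
        rw [div_mul_cancel₀ _ hT.ne'] at this
        linarith
      simp only [Wk, add_re, mul_re, I_re, I_im, ofReal_re, ofReal_im, mul_im]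
      simp; linarith
  refine ⟨ε, hε, fun φ hφ => ?_⟩
  have h1 := hpos _ hφ
  have h2 := hpos _ (hφ.cmul (-1))
  have h3 := hpos _ (hφ.cmul I)
  have h4 := hpos _ (hφ.cmul (-I))
  rw [Wk_cmul c ε V hφ] at h2 h3 h4
  simp at h2 h3 h4
  apply Complex.ext <;> simp <;> linarith

/-! ### One-dimensional weak solutions -/

/-- Integration by parts against the primitive of a locally integrable real function. -/
lemma ibp_prim_real {G : ℝ → ℝ} (hG : LocallyIntegrable G) {γ : ℝ → ℝ} (hγ : ContDiff ℝ 1 γ)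
    (hc : HasCompactSupport γ) :
    ∫ t, (∫ s in (0:ℝ)..t, G s) * deriv γ t = -∫ t, G t * γ t := by
  obtain ⟨R, hR⟩ := hc.isCompact.isBounded.subset_closedBall 0
  set a := |R| + 1 with ha
  have ha0 : 0 < a := by positivity
  have hz : ∀ t, t ∉ Set.Ioo (-a) a → t ∉ tsupport γ := by
    intro t ht h
    have := hR h
    rw [mem_closedBall, dist_zero_right, Real.norm_eq_abs] at this
    have h2 := (this.trans (le_abs_self R)).trans_lt (lt_add_one _)
    exact ht (abs_lt.1 h2)
  have h0 : ∀ t, t ∉ Set.Ioo (-a) a → γ t = 0 := fun t ht => image_eq_zero_of_notMem_tsupport (hz t ht)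
  have h0' : ∀ t, t ∉ Set.Ioo (-a) a → deriv γ t = 0 := fun t ht =>
    image_eq_zero_of_notMem_tsupport fun h => hz t ht (tsupport_deriv_subset h)
  have hI : IntervalIntegrable G volume (-a) a :=
    (hG.integrableOn_isCompact isCompact_uIcc).intervalIntegrable
  have hac := hI.absolutelyContinuousOnInterval_intervalIntegral (c := 0)
    (by rw [Set.uIcc_of_le (by linarith)]; constructor <;> linarith)
  have hγac : AbsolutelyContinuousOnInterval γ (-a) a := hγ.contDiffOn.absolutelyContinuousOnInterval
  have key := hac.integral_mul_deriv_eq_deriv_mul hγac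
  rw [h0 a (by simp), h0 (-a) (by simp), mul_zero, mul_zero, sub_zero, zero_sub] at key
  have hle : -a ≤ a := by linarith
  have hmem : ∀ t, t ∉ Set.Ioc (-a) a → t ∉ Set.Ioo (-a) a := fun t ht h => ht ⟨h.1, h.2.le⟩
  rw [intervalIntegral.integral_of_le hle, intervalIntegral.integral_of_le hle] at key
  rw [setIntegral_eq_integral_of_forall_compl_eq_zero (fun t ht => by rw [h0' t (hmem t ht), mul_zero]),
    setIntegral_eq_integral_of_forall_compl_eq_zero (fun t ht => by rw [h0 t (hmem t ht), mul_zero])] at key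
  rw [key]
  congr 1
  refine integral_congr_ae ?_
  filter_upwards [_root_.LocallyIntegrable.ae_hasDerivAt_integral hG] with t ht
  rw [(ht 0).deriv]

/-- Complex form of `ibp_prim_real`. -/
lemma ibp_prim {G : ℝ → ℂ} (hG : LocallyIntegrable G) {γ : ℝ → ℝ} (hγ : ContDiff ℝ 1 γ)
    (hc : HasCompactSupport γ) :
    ∫ t, ((deriv γ t : ℝ) : ℂ) * (∫ s in (0:ℝ)..t, G s) = -∫ t, ((γ t : ℝ) : ℂ) * G t := by
  have hGi : ∀ a b, IntervalIntegrable G volume a b := fun a b =>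
    (hG.integrableOn_isCompact isCompact_uIcc).intervalIntegrable
  have hcH : Continuous fun t => ∫ s in (0:ℝ)..t, G s :=
    intervalIntegral.continuous_primitive hGi 0
  have i1 : Integrable fun t => ((deriv γ t : ℝ) : ℂ) * (∫ s in (0:ℝ)..t, G s) := by
    refine Continuous.integrable_of_hasCompactSupport ?_ ?_
    · have := hγ.continuous_deriv le_rfl
      fun_prop
    · exact HasCompactSupport.mul_right (hc.deriv.comp_left (g := fun r : ℝ => (r : ℂ)) (by simp))
  have i2 : Integrable fun t => ((γ t : ℝ) : ℂ) * G t := by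
    have : Integrable fun t => (γ t) • G t := hG.integrable_smul_left_of_hasCompactSupport hγ.continuous hc
    simpa [Complex.real_smul] using this
  have hre : LocallyIntegrable (fun t => (G t).re) := fun x => by
    obtain ⟨U, hU, h⟩ := hG x; exact ⟨U, hU, h.re⟩
  have him : LocallyIntegrable (fun t => (G t).im) := fun x => by
    obtain ⟨U, hU, h⟩ := hG x; exact ⟨U, hU, h.im⟩
  have er : ∀ t, ∫ s in (0:ℝ)..t, (G s).re = (∫ s in (0:ℝ)..t, G s).re := fun t =>
    ((Complex.reCLM).intervalIntegral_comp_comm (hGi 0 t))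
  have ei : ∀ t, ∫ s in (0:ℝ)..t, (G s).im = (∫ s in (0:ℝ)..t, G s).im := fun t =>
    ((Complex.imCLM).intervalIntegral_comp_comm (hGi 0 t))
  have k1 := ibp_prim_real hre hγ hc
  have k2 := ibp_prim_real him hγ hc
  simp only [er] at k1
  simp only [ei] at k2
  apply Complex.ext
  · rw [neg_re, ← integral_re' i1, ← integral_re' i2]
    simp only [mul_re, ofReal_re, ofReal_im, zero_mul, sub_zero]
    simpa only [mul_comm] using k1
  · rw [neg_im, ← integral_im' i1, ← integral_im' i2]
    simp only [mul_im, ofReal_re, ofReal_im, zero_mul, add_zero]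
    simpa only [mul_comm] using k2

/-- A one dimensional weak solution of `U'' = -G`, tested against shifts of a family of bumps, is
almost everywhere given by the twice integrated formula. -/
lemma weak_ode {U G : ℝ → ℂ} (hU : LocallyIntegrable U) (hG : LocallyIntegrable G)
    {b : ℕ → ContDiffBump (0 : ℝ)} (hb : Tendsto (fun n => (b n).rOut) atTop (𝓝 0))
    (hb' : ∀ n, (b n).rOut ≤ 2 * (b n).rIn)
    (hw : ∀ n (r : ℚ), ∫ t, ((deriv (deriv ((b n).normed volume)) (r - t) : ℝ) : ℂ) * U t =
      -∫ t, (((b n).normed volume (r - t) : ℝ) : ℂ) * G t) :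
    ∃ A B : ℂ, ∀ᵐ t, U t = A + t * B - ∫ s in (0:ℝ)..t, ∫ σ in (0:ℝ)..s, G σ := by
  have hGi : ∀ a b, IntervalIntegrable G volume a b := fun a b =>
    (hG.integrableOn_isCompact isCompact_uIcc).intervalIntegrable
  set H : ℝ → ℂ := fun t => ∫ s in (0:ℝ)..t, G s with hH
  have hcH : Continuous H := intervalIntegral.continuous_primitive hGi 0
  set L : ℝ → ℂ := fun t => ∫ s in (0:ℝ)..t, H s with hL
  have hcL : Continuous L := intervalIntegral.continuous_primitive (fun a b => hcH.intervalIntegrable a b) 0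
  set E : ℝ → ℂ := fun t => U t + L t with hE
  have hEl : LocallyIntegrable E := hU.add hcL.locallyIntegrable
  set β : ℕ → ℝ → ℝ := fun n => (b n).normed volume with hβ
  have hβs : ∀ n, ContDiff ℝ (⊤ : ℕ∞) (β n) := fun n => (b n).contDiff_normed
  have hβc : ∀ n, HasCompactSupport (β n) := fun n => (b n).hasCompactSupport_normed
  have hβ' : ∀ n, ContDiff ℝ (⊤ : ℕ∞) (deriv (β n)) := fun n =>
    (contDiff_infty_iff_deriv.1 (hβs n)).2
  have hβ'' : ∀ n, ContDiff ℝ (⊤ : ℕ∞) (deriv (deriv (β n))) := fun n =>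
    (contDiff_infty_iff_deriv.1 (hβ' n)).2
  have hzero : ∀ n (r : ℝ), (convolution (deriv (deriv (β n))) E (ContinuousLinearMap.lsmul ℝ ℝ) volume) r = 0 := by
    intro n
    have hcont : Continuous (convolution (deriv (deriv (β n))) E (ContinuousLinearMap.lsmul ℝ ℝ) volume) :=
      (hβc n).deriv.deriv.continuous_convolution_left _ (hβ'' n).continuous hEl
    have hrat : ∀ r : ℚ, (convolution (deriv (deriv (β n))) E (ContinuousLinearMap.lsmul ℝ ℝ) volume) (r:ℝ) = 0 := by
      intro r
      rw [convolution_eq_swap]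
      simp only [ContinuousLinearMap.lsmul_apply, Complex.real_smul, hE, mul_add]
      have hsub : ∀ f : ℝ → ℝ, HasCompactSupport f → HasCompactSupport fun t => f ((r:ℝ) - t) := fun f hf =>
        hf.comp_homeomorph (Homeomorph.subLeft (r:ℝ))
      have iU : Integrable fun t => ((deriv (deriv (β n)) (r - t) : ℝ) : ℂ) * U t := by
        have : Integrable fun t => (deriv (deriv (β n)) (r - t)) • U t :=
          hU.integrable_smul_left_of_hasCompactSupport
            ((hβ'' n).continuous.comp (continuous_const.sub continuous_id)) (hsub _ (hβc n).deriv.deriv)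
        simpa [Complex.real_smul] using this
      have cs : ∀ f : ℝ → ℝ, HasCompactSupport f → HasCompactSupport fun t => ((f ((r:ℝ) - t) : ℝ) : ℂ) :=
        fun f hf => (hsub f hf).comp_left (g := fun r : ℝ => (r : ℂ)) (by simp)
      have iL : Integrable fun t => ((deriv (deriv (β n)) (r - t) : ℝ) : ℂ) * L t := by
        refine Continuous.integrable_of_hasCompactSupport ?_ ((cs _ (hβc n).deriv.deriv).mul_right)
        have := (hβ'' n).continuous
        fun_prop
      rw [integral_add iU iL, hw]
      set γ : ℝ → ℝ := fun t => β n (r - t) with hγ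
      have d0 : ∀ t, HasDerivAt (fun t : ℝ => (r:ℝ) - t) (-1) t := fun t =>
        (hasDerivAt_id t).const_sub (r:ℝ)
      have d1 : ∀ t, HasDerivAt γ (-(deriv (β n) (r - t))) t := fun t =>
        ((((hβs n).differentiable (by simp)) _).hasDerivAt.comp t (d0 t)).congr_deriv (by ring)
      have d2 : ∀ t, HasDerivAt (fun t => ((-(deriv (β n) (r - t)) : ℝ) : ℂ))
          ((deriv (deriv (β n)) (r - t) : ℝ) : ℂ) t := fun t =>
        (HasDerivAt.ofReal_comp ((((hβ' n).differentiable (by simp)) _).hasDerivAt.comp t (d0 t)).neg).congr_deriv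
          (by push_cast; ring)
      have d3 : ∀ t, HasDerivAt L (H t) t := fun t =>
        intervalIntegral.integral_hasDerivAt_right (hcH.intervalIntegrable _ _)
          hcH.aestronglyMeasurable.stronglyMeasurableAtFilter hcH.continuousAt
      have hc1 : HasCompactSupport fun t => ((-(deriv (β n) (r - t)) : ℝ) : ℂ) :=
        (hsub _ (hβc n).deriv).comp_left (g := fun r : ℝ => ((-r : ℝ) : ℂ)) (by simp)
      have k1 : ∫ t, L t * ((deriv (deriv (β n)) (r - t) : ℝ) : ℂ) =
          -∫ t, H t * ((-(deriv (β n) (r - t)) : ℝ) : ℂ) := by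
        have c1 := (hβ' n).continuous
        have c2 := (hβ'' n).continuous
        refine integral_mul_deriv_eq_deriv_mul_of_integrable (fun t _ => d3 t) (fun t _ => d2 t) ?_ ?_ ?_
        · exact Continuous.integrable_of_hasCompactSupport (by fun_prop) ((cs _ (hβc n).deriv.deriv).mul_left)
        · exact Continuous.integrable_of_hasCompactSupport (by fun_prop) hc1.mul_left
        · exact Continuous.integrable_of_hasCompactSupport (by fun_prop) hc1.mul_left
      have k2 := ibp_prim hG (γ := γ) (((hβs n).comp (contDiff_const.sub contDiff_id)).of_le (by exact_mod_cast le_top))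
        (hsub _ (hβc n))
      have k3 : ∀ t, deriv γ t = -(deriv (β n) (r - t)) := fun t => (d1 t).deriv
      simp only [k3] at k2
      have k2' : ∫ t, H t * ((-(deriv (β n) (r - t)) : ℝ) : ℂ) = -∫ t, ((γ t : ℝ) : ℂ) * G t := by
        rw [← k2]
        exact integral_congr_ae (Eventually.of_forall fun t => mul_comm _ _)
      simp only [mul_comm _ (L _)]
      rw [k1, k2']
      simp [hγ, hβ]
    have := Continuous.ext_on Rat.denseRange_cast hcont continuous_const
      (by rintro _ ⟨r, rfl⟩; exact hrat r)
    exact fun r => congrFun this r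
  have haff : ∀ n, ∃ A B : ℂ, ∀ t, (convolution (β n) E (ContinuousLinearMap.lsmul ℝ ℝ) volume) t = A + t * B := by
    intro n
    have e1 : ∀ t, HasDerivAt (convolution (β n) E (ContinuousLinearMap.lsmul ℝ ℝ) volume)
        (convolution (deriv (β n)) E (ContinuousLinearMap.lsmul ℝ ℝ) volume t) t := fun t =>
      (hβc n).hasDerivAt_convolution_left _ ((hβs n).of_le (by exact_mod_cast le_top)) hEl t
    have e2 : ∀ t, HasDerivAt (convolution (deriv (β n)) E (ContinuousLinearMap.lsmul ℝ ℝ) volume) 0 t := fun t => by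
      have := (hβc n).deriv.hasDerivAt_convolution_left (ContinuousLinearMap.lsmul ℝ ℝ)
        ((hβ' n).of_le (by exact_mod_cast le_top)) hEl t
      rwa [hzero] at this
    set F := convolution (β n) E (ContinuousLinearMap.lsmul ℝ ℝ) volume
    set F' := convolution (deriv (β n)) E (ContinuousLinearMap.lsmul ℝ ℝ) volume
    have h2 : ∀ t, F' t = F' 0 := fun t =>
      is_const_of_deriv_eq_zero (fun t => (e2 t).differentiableAt) (fun t => (e2 t).deriv) t 0
    have e3 : ∀ t, HasDerivAt (fun t : ℝ => F t - t * F' 0) 0 t := fun t => by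
      have := (e1 t).sub (((Complex.ofRealCLM.hasDerivAt (x := t)).mul_const (F' 0)))
      refine this.congr_deriv ?_
      rw [h2 t]; simp
    have h3 : ∀ t, F t - t * F' 0 = F 0 - (0:ℝ) * F' 0 := fun t =>
      is_const_of_deriv_eq_zero (fun t => (e3 t).differentiableAt) (fun t => (e3 t).deriv) t 0
    refine ⟨F 0, F' 0, fun t => ?_⟩
    have := h3 t
    simp at this
    rw [← this]; ring
  choose A B hAB using haff
  have hconv := ContDiffBump.ae_convolution_tendsto_right_of_locallyIntegrable (φ := b) (K := 2) hb
    (Eventually.of_forall hb') hEl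
  have hconv' : ∀ᵐ t : ℝ, Tendsto (fun n => A n + t * B n) atTop (𝓝 (E t)) := by
    filter_upwards [hconv] with t ht
    simpa only [hβ] using ht.congr fun n => hAB n t
  obtain ⟨t1, h1⟩ := hconv'.exists
  obtain ⟨t2, h2, h12⟩ : ∃ t2 : ℝ, Tendsto (fun n => A n + t2 * B n) atTop (𝓝 (E t2)) ∧ t2 ≠ t1 := by
    have : ∀ᵐ t : ℝ, t ≠ t1 := by simp [ae_iff, measure_singleton]
    obtain ⟨t2, h⟩ := (hconv'.and this).exists
    exact ⟨t2, h⟩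
  have h12' : ((t2 : ℂ) - t1) ≠ 0 := by
    rw [sub_ne_zero]; exact_mod_cast h12
  have hB : Tendsto B atTop (𝓝 ((E t2 - E t1) / (t2 - t1))) := by
    refine ((h2.sub h1).div_const ((t2:ℂ) - t1)).congr fun n => ?_
    field_simp; ring
  have hA : Tendsto A atTop (𝓝 (E t1 - t1 * ((E t2 - E t1) / (t2 - t1)))) := by
    refine (h1.sub (hB.const_mul (t1:ℂ))).congr fun n => ?_
    ring
  refine ⟨E t1 - t1 * ((E t2 - E t1) / (t2 - t1)), (E t2 - E t1) / (t2 - t1), ?_⟩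
  filter_upwards [hconv'] with t ht
  have := tendsto_nhds_unique ht (hA.add (hB.const_mul (t:ℂ)))
  simp only [hE] at this
  rw [← this]
  simp [hL]

/-! ### Energy gap on the line -/

/-- A nonnegative constant below an integrable function on `ℝ` vanishes. -/
lemma const_zero_of_le {a : ℝ} (ha : 0 ≤ a) {F : ℝ → ℝ} (hF : Integrable F) (h : ∀ t, a ≤ F t) : a = 0 := by
  have : Integrable (fun _ : ℝ => a) := hF.mono' aestronglyMeasurable_const
    (Eventually.of_forall fun t => by rw [Real.norm_of_nonneg ha]; exact h t)
  rw [integrable_const_iff] at this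
  rcases this with h | h
  · exact h
  · exact absurd h.measure_univ_lt_top (by simp)

/-- A nonnegative integrable convex function on the line vanishes. -/
lemma convex_int_zero {F F' F'' : ℝ → ℝ} (h1 : ∀ t, HasDerivAt F (F' t) t) (h2 : ∀ t, HasDerivAt F' (F'' t) t)
    (h0 : ∀ t, 0 ≤ F'' t) (hp : ∀ t, 0 ≤ F t) (hi : Integrable F) (t : ℝ) : F t = 0 := by
  have hm : Monotone F' := monotone_of_hasDerivAt_nonneg h2 h0
  have hd : deriv F = F' := funext fun t => (h1 t).deriv
  have hc : ConvexOn ℝ Set.univ F := Monotone.convexOn_univ_of_deriv (fun t => (h1 t).differentiableAt) (by rwa [hd])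
  have hs : ∀ s, 2 * F t ≤ F (t + s) + F (t - s) := fun s => by
    have := hc.2 (Set.mem_univ (t + s)) (Set.mem_univ (t - s))
      (show (0:ℝ) ≤ 1 / 2 by norm_num) (show (0:ℝ) ≤ 1 / 2 by norm_num) (by norm_num)
    simp only [smul_eq_mul] at this
    rw [show 1 / 2 * (t + s) + 1 / 2 * (t - s) = t by ring] at this
    linarith
  have := const_zero_of_le (by have := hp t; positivity) ((hi.comp_add_left t).add (hi.comp_sub_left t)) hs
  linarith

/-- Real form of the gap dichotomy for one-dimensional finite energy travelling waves. -/
lemma ode_gap_real {c : ℝ} (hc2 : c ^ 2 < 2) {x y u v : ℝ → ℝ}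
    (hx : ∀ t, HasDerivAt x (u t) t) (hy : ∀ t, HasDerivAt y (v t) t)
    (hu : ∀ t, HasDerivAt u (c * v t - (1 - (x t ^ 2 + y t ^ 2)) * x t) t)
    (hv : ∀ t, HasDerivAt v (-c * u t - (1 - (x t ^ 2 + y t ^ 2)) * y t) t)
    (h1 : Integrable fun t => u t ^ 2 + v t ^ 2)
    (h2 : Integrable fun t => (1 - (x t ^ 2 + y t ^ 2)) ^ 2) :
    (∀ t, 1 - (x t ^ 2 + y t ^ 2) = 0 ∧ u t = 0 ∧ v t = 0) ∨
      ((2 - c ^ 2) / 10) ^ 3 ≤ ∫ t, ((1 - (x t ^ 2 + y t ^ 2)) / (1 + (x t ^ 2 + y t ^ 2))) ^ 2 := by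
  set η : ℝ → ℝ := fun t => 1 - (x t ^ 2 + y t ^ 2) with hη
  set w : ℝ → ℝ := fun t => -2 * (x t * u t + y t * v t) with hw
  have hd : ∀ t, HasDerivAt η (w t) t := fun t =>
    ((((hx t).pow 2).add ((hy t).pow 2)).const_sub 1).congr_deriv (by simp [hw]; ring)
  -- Conservation of energy; the constant vanishes by integrability.
  have hE1 : ∀ t, 1 / 2 * (u t ^ 2 + v t ^ 2) - 1 / 4 * η t ^ 2 = 1 / 2 * (u 0 ^ 2 + v 0 ^ 2) - 1 / 4 * η 0 ^ 2 := by
    have : ∀ t, HasDerivAt (fun t => 1 / 2 * (u t ^ 2 + v t ^ 2) - 1 / 4 * η t ^ 2) 0 t := fun t =>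
      ((((hu t).pow 2).add ((hv t).pow 2)).const_mul (1/2) |>.sub (((hd t).pow 2).const_mul (1/4))).congr_deriv
        (by simp [hw, hη]; ring)
    exact fun t => is_const_of_deriv_eq_zero (fun t => (this t).differentiableAt) (fun t => (this t).deriv) t 0
  -- Conservation of angular momentum.
  have hE2 : ∀ t, x t * v t - y t * u t - c / 2 * η t = x 0 * v 0 - y 0 * u 0 - c / 2 * η 0 := by
    have : ∀ t, HasDerivAt (fun t => x t * v t - y t * u t - c / 2 * η t) 0 t := fun t =>
      ((((hx t).mul (hv t)).sub ((hy t).mul (hu t))).sub ((hd t).const_mul (c/2))).congr_deriv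
        (by simp [hw]; ring)
    exact fun t => is_const_of_deriv_eq_zero (fun t => (this t).differentiableAt) (fun t => (this t).deriv) t 0
  have hI1 : Integrable fun t => 1 / 2 * (u t ^ 2 + v t ^ 2) - 1 / 4 * η t ^ 2 :=
    (h1.const_mul _).sub (h2.const_mul _)
  have e1 : ∀ t, u t ^ 2 + v t ^ 2 = 1 / 2 * η t ^ 2 := by
    have h0 := const_zero_of_le (abs_nonneg (1 / 2 * (u 0 ^ 2 + v 0 ^ 2) - 1 / 4 * η 0 ^ 2)) hI1.norm
      (fun t => by rw [hE1 t, Real.norm_eq_abs])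
    intro t
    have := hE1 t
    rw [abs_eq_zero.1 h0] at this
    linarith
  have hsmall : ∀ δ, 0 < δ → ∃ t, η t ^ 2 < δ := by
    intro δ hδ
    by_contra hcon
    push Not at hcon
    exact hδ.ne' (const_zero_of_le hδ.le h2 hcon)
  have e2 : ∀ t, x t * v t - y t * u t = c / 2 * η t := by
    set e := x 0 * v 0 - y 0 * u 0 - c / 2 * η 0 with he
    suffices e = 0 by intro t; have := hE2 t; linarith
    by_contra hne
    have he2 : 0 < e ^ 2 := by positivity
    obtain ⟨t, ht⟩ := hsmall (min 1 (e ^ 2 / 4)) (by positivity)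
    have hh1 := ht.trans_le (min_le_left _ _)
    have hh2 := ht.trans_le (min_le_right _ _)
    have hab := (sq_lt_one_iff_abs_lt_one (η t)).1 hh1
    have hn := abs_lt.1 hab
    have hr : x t ^ 2 + y t ^ 2 ≤ 2 := by simp only [hη] at hn; linarith [hn.1]
    have hcs : (x t * v t - y t * u t) ^ 2 ≤ (x t ^ 2 + y t ^ 2) * (u t ^ 2 + v t ^ 2) := by
      nlinarith [sq_nonneg (x t * u t + y t * v t)]
    rw [e1 t] at hcs
    have hcs2 : (x t * v t - y t * u t) ^ 2 ≤ η t ^ 2 := by nlinarith [sq_nonneg (η t)]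
    have := hE2 t
    have h4 : e ^ 2 ≤ 2 * (x t * v t - y t * u t) ^ 2 + 2 * (c / 2 * η t) ^ 2 := by
      clear_value e
      rw [← this]; nlinarith [sq_nonneg (x t * v t - y t * u t + c / 2 * η t)]
    nlinarith [sq_nonneg (η t)]
  set q := 2 - c ^ 2 with hq
  have hq0 : 0 < q := by linarith
  -- The reduced first order equation `η'² = η² (q - 2η)`.
  have hwsq : ∀ t, w t ^ 2 = η t ^ 2 * (q - 2 * η t) := fun t => by
    have a1 : w t ^ 2 = 4 * ((x t ^ 2 + y t ^ 2) * (u t ^ 2 + v t ^ 2) - (x t * v t - y t * u t) ^ 2) := by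
      simp only [hw]; ring
    rw [a1, e1, e2, show x t ^ 2 + y t ^ 2 = 1 - η t by simp [hη]]
    simp only [hq]; ring
  have hdw : ∀ t, HasDerivAt w (q * η t - 3 * η t ^ 2) t := fun t => by
    refine ((((hx t).mul (hu t)).add ((hy t).mul (hv t))).const_mul (-2)).congr_deriv ?_
    have a1 := e1 t
    have a2 := e2 t
    have a3 : x t ^ 2 + y t ^ 2 = 1 - η t := by simp [hη]
    change -2 * (u t * u t + x t * (c * v t - η t * x t) + (v t * v t + y t * (-c * u t - η t * y t))) = _
    linear_combination (-2) * a1 - 2 * c * a2 + 2 * η t * a3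
  -- If `η ≤ 2q/5` everywhere then `η²` is convex and integrable, hence zero. Otherwise `η / (1 + |P|²)` is at
  -- least `q/5` somewhere, and being Lipschitz it is bounded below on an interval of fixed length.
  by_cases hall : ∀ t, η t ≤ 2 * q / 5
  · left
    have z : ∀ t, η t ^ 2 = 0 := by
      refine convex_int_zero (F' := fun t => 2 * η t * w t) (F'' := fun t => η t ^ 2 * (4 * q - 10 * η t))
        (fun t => ((hd t).pow 2).congr_deriv (by simp)) (fun t => ?_) (fun t => ?_) (fun t => sq_nonneg _) h2
      · refine (((hd t).const_mul 2).mul (hdw t)).congr_deriv ?_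
        have := hwsq t
        linear_combination 2 * this
      · have := hall t
        exact mul_nonneg (sq_nonneg _) (by linarith)
    intro t
    have a1 := e1 t
    rw [z t] at a1
    refine ⟨by have := z t; exact pow_eq_zero_iff (two_ne_zero) |>.1 this, ?_, ?_⟩ <;> nlinarith [sq_nonneg (u t), sq_nonneg (v t)]
  · right
    push Not at hall
    obtain ⟨t0, ht0⟩ := hall
    set f : ℝ → ℝ := fun t => η t / (1 + (x t ^ 2 + y t ^ 2)) with hf
    have hpos : ∀ t, 0 < 1 + (x t ^ 2 + y t ^ 2) := fun t => by positivity
    have hfd : ∀ t, HasDerivAt f (2 * w t / (1 + (x t ^ 2 + y t ^ 2)) ^ 2) t := fun t => by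
      refine ((hd t).div ((((hx t).pow 2).add ((hy t).pow 2)).const_add 1) (hpos t).ne').congr_deriv ?_
      congr 1
      simp [hη, hw]; ring
    have hfb : ∀ t, |2 * w t / (1 + (x t ^ 2 + y t ^ 2)) ^ 2| ≤ 2 := fun t => by
      apply abs_le_of_sq_le_sq _ (by norm_num)
      rw [div_pow, mul_pow, hwsq t, div_le_iff₀ (by have := hpos t; positivity)]
      have a3 : η t = 1 - (x t ^ 2 + y t ^ 2) := rfl
      rw [a3]
      set r := x t ^ 2 + y t ^ 2
      have hr : 0 ≤ r := by positivity
      have b1 : (1 - r) ^ 2 ≤ (1 + r) ^ 2 := by nlinarith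
      have b2 : q - 2 * (1 - r) ≤ (1 + r) ^ 2 := by nlinarith [sq_nonneg c, sq_nonneg (1 - r)]
      have b3 : (1 - r) ^ 2 * (q - 2 * (1 - r)) ≤ (1 + r) ^ 2 * (1 + r) ^ 2 :=
        (mul_le_mul_of_nonneg_left b2 (sq_nonneg _)).trans (mul_le_mul_of_nonneg_right b1 (sq_nonneg _))
      nlinarith
    have hlip : ∀ t s, |f t - f s| ≤ 2 * |t - s| := fun t s => by
      have := Convex.norm_image_sub_le_of_norm_hasDerivWithin_le (f := f) (s := Set.univ) (C := 2)
        (fun t _ => (hfd t).hasDerivWithinAt) (fun t _ => by rw [Real.norm_eq_abs]; exact hfb t)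
        convex_univ (Set.mem_univ s) (Set.mem_univ t)
      simpa [Real.norm_eq_abs] using this
    have hf0 : q / 5 ≤ f t0 := by
      rw [hf]; simp only
      rw [le_div_iff₀ (hpos _)]
      have a3 : x t0 ^ 2 + y t0 ^ 2 = 1 - η t0 := by simp [hη]
      have : 0 ≤ x t0 ^ 2 + y t0 ^ 2 := by positivity
      rw [a3] at this ⊢
      nlinarith
    set a := q / 10 with ha
    have ha0 : 0 < a := by positivity
    have hfc : Continuous f := continuous_iff_continuousAt.2 fun t => (hfd t).continuousAt
    have hfi : Integrable fun t => f t ^ 2 := by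
      refine h2.mono' (hfc.pow 2).aestronglyMeasurable (Eventually.of_forall fun t => ?_)
      rw [Real.norm_of_nonneg (sq_nonneg _), hf]; simp only
      rw [div_pow]
      refine div_le_self (sq_nonneg _) ?_
      have : 0 ≤ x t ^ 2 + y t ^ 2 := by positivity
      nlinarith
    calc a ^ 3 = ∫ t in Set.Icc (t0 - a / 2) (t0 + a / 2), a ^ 2 := by
          rw [setIntegral_const, measureReal_def, Real.volume_Icc, ENNReal.toReal_ofReal (by linarith), smul_eq_mul]; ring
      _ ≤ ∫ t in Set.Icc (t0 - a / 2) (t0 + a / 2), f t ^ 2 := by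
          refine setIntegral_mono_on (integrableOn_const (by simp)) hfi.integrableOn measurableSet_Icc fun t ht => ?_
          have h3 := hlip t t0
          have h4 : |t - t0| ≤ a / 2 := abs_le.2 ⟨by linarith [ht.1], by linarith [ht.2]⟩
          have h5 := (abs_le.1 h3).1
          exact pow_le_pow_left₀ ha0.le (by linarith) 2
      _ ≤ ∫ t, f t ^ 2 := setIntegral_le_integral hfi (Eventually.of_forall fun t => sq_nonneg _)

/-- Gap: a finite energy solution of `P'' + i c P' + (1 - |P|²) P = 0` on the line is either constant
of modulus one or carries at least a fixed amount of `∫ ((1 - |P|²) / (1 + |P|²))²`. -/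
lemma ode_gap {c : ℝ} (hc2 : c ^ 2 < 2) {P P1 : ℝ → ℂ} (hP : ∀ t, HasDerivAt P (P1 t) t)
    (hP1 : ∀ t, HasDerivAt P1 (-(I * c * P1 t) - ((1 - ‖P t‖ ^ 2 : ℝ) : ℂ) * P t) t)
    (h1 : Integrable fun t => ‖P1 t‖ ^ 2) (h2 : Integrable fun t => (1 - ‖P t‖ ^ 2) ^ 2) :
    (∀ t, 1 - ‖P t‖ ^ 2 = 0 ∧ P1 t = 0) ∨
      ((2 - c ^ 2) / 10) ^ 3 ≤ ∫ t, ((1 - ‖P t‖ ^ 2) / (1 + ‖P t‖ ^ 2)) ^ 2 := by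
  have hn : ∀ z : ℂ, ‖z‖ ^ 2 = z.re ^ 2 + z.im ^ 2 := fun z => by
    rw [← Complex.normSq_eq_norm_sq, Complex.normSq_apply]; ring
  simp only [hn] at h1 h2 ⊢
  have hre : ∀ {f : ℝ → ℂ} {f' : ℂ} {t}, HasDerivAt f f' t → HasDerivAt (fun t => (f t).re) f'.re t :=
    fun h => Complex.reCLM.hasFDerivAt.comp_hasDerivAt _ h
  have him : ∀ {f : ℝ → ℂ} {f' : ℂ} {t}, HasDerivAt f f' t → HasDerivAt (fun t => (f t).im) f'.im t :=
    fun h => Complex.imCLM.hasFDerivAt.comp_hasDerivAt _ h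
  rcases ode_gap_real hc2 (fun t => hre (hP t)) (fun t => him (hP t))
    (fun t => (hre (hP1 t)).congr_deriv (by rw [hn]; simp only [sub_re, neg_re, mul_re, mul_im, I_re, I_im, ofReal_re, ofReal_im]; ring))
    (fun t => (him (hP1 t)).congr_deriv (by rw [hn]; simp only [sub_im, neg_im, mul_re, mul_im, I_re, I_im, ofReal_re, ofReal_im]; ring)) h1 h2 with h | h
  · left
    exact fun t => ⟨(h t).1, Complex.ext (h t).2.1 (h t).2.2⟩
  · exact Or.inr h

/-! ### Slices parallel to the direction of propagation -/

/-- Coordinates on `ℝ³` separating the transverse variables from the direction of propagation. -/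
def Jm : ((Fin 2 → ℝ) × ℝ) ≃ᵐ Ed 3 :=
  MeasurableEquiv.prodComm.trans
    ((MeasurableEquiv.piFinSuccAbove (fun _ : Fin 3 => ℝ) 0).symm.trans (MeasurableEquiv.toLp 2 (Fin 3 → ℝ)))

lemma Jm_mp : MeasurePreserving Jm (volume : Measure ((Fin 2 → ℝ) × ℝ)) volume := by
  have h1 := (EuclideanSpace.volume_preserving_symm_measurableEquiv_toLp (Fin 3)).symm
  have h2 := (volume_preserving_piFinSuccAbove (fun _ : Fin 3 => ℝ) 0).symm
  have h3 : MeasurePreserving (Prod.swap : (Fin 2 → ℝ) × ℝ → ℝ × (Fin 2 → ℝ)) volume volume :=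
    Measure.measurePreserving_swap
  exact h1.comp (h2.comp h3)

@[simp] lemma Jm_zero (p : (Fin 2 → ℝ) × ℝ) : Jm p 0 = p.2 := by
  simp [Jm, MeasurableEquiv.piFinSuccAbove, MeasurableEquiv.prodComm]
@[simp] lemma Jm_succ (p : (Fin 2 → ℝ) × ℝ) (j : Fin 2) : Jm p j.succ = p.1 j := by
  simp [Jm, MeasurableEquiv.piFinSuccAbove, MeasurableEquiv.prodComm]

lemma Jm_ext {x y : Ed 3} (h0 : x 0 = y 0) (h : ∀ j : Fin 2, x j.succ = y j.succ) : x = y := by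
  ext i
  refine Fin.cases h0 h i

lemma Jm_add_zero (y : Fin 2 → ℝ) (t τ : ℝ) : Jm (y, t) + τ • ee 0 = Jm (y, t + τ) := by
  apply Jm_ext
  · simp [ee]
  · intro j; simp [ee]

lemma Jm_add_succ (y : Fin 2 → ℝ) (t τ : ℝ) (j : Fin 2) :
    Jm (y, t) + τ • ee j.succ = Jm (y + τ • Pi.single j 1, t) := by
  apply Jm_ext
  · simp [ee, (Fin.succ_ne_zero _).symm]
  · intro k
    rw [Jm_succ, PiLp.add_apply, Jm_succ]
    by_cases h : k = j
    · subst h; simp [ee]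
    · simp [ee, h]

lemma Jm_int {E : Type*} [NormedAddCommGroup E] [NormedSpace ℝ E] (f : Ed 3 → E) :
    ∫ p, f (Jm p) = ∫ x, f x := Jm_mp.integral_comp' f

lemma Jm_integrable {E : Type*} [NormedAddCommGroup E] {f : Ed 3 → E} :
    Integrable (fun p => f (Jm p)) ↔ Integrable f :=
  Jm_mp.integrable_comp_emb Jm.measurableEmbedding

/-- The test function `a(x₀) ξ(x₁,x₂)`. -/
def tp (a : ℝ → ℂ) (ξ : (Fin 2 → ℝ) → ℝ) (x : Ed 3) : ℂ := a (x 0) * (ξ fun j => x j.succ : ℝ)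

lemma tp_Jm (a : ℝ → ℂ) (ξ : (Fin 2 → ℝ) → ℝ) (y : Fin 2 → ℝ) (t : ℝ) :
    tp a ξ (Jm (y, t)) = a t * ξ y := by
  simp [tp]

lemma tp_TF {a : ℝ → ℂ} {ξ : (Fin 2 → ℝ) → ℝ} (ha : ContDiff ℝ (⊤ : ℕ∞) a) (hac : HasCompactSupport a)
    (hξ : ContDiff ℝ (⊤ : ℕ∞) ξ) (hξc : HasCompactSupport ξ) : TF (tp a ξ) := by
  constructor
  · refine (ha.comp (coord_contDiff 0)).mul (Complex.ofRealCLM.contDiff.comp (hξ.comp ?_))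
    exact contDiff_pi.2 fun j => coord_contDiff j.succ
  · have hK : IsCompact ((tsupport ξ) ×ˢ (tsupport a)) := hξc.isCompact.prod hac.isCompact
    have hJ : Continuous Jm := by
      have : (Jm : _ → Ed 3) = fun p => WithLp.toLp 2 (Fin.cons p.2 p.1) := by
        ext p i; refine Fin.cases ?_ (fun j => ?_) i
        · simp
        · simp
      rw [this]
      refine (PiLp.continuous_toLp 2 _).comp (continuous_pi fun i => ?_)
      refine Fin.cases ?_ (fun j => ?_) i
      · exact continuous_snd
      · exact (continuous_apply j).comp continuous_fst
    refine HasCompactSupport.intro (hK.image hJ) fun x hx => ?_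
    have hx' : ((Jm.symm x).1, (Jm.symm x).2) ∉ (tsupport ξ) ×ˢ (tsupport a) := fun h =>
      hx ⟨_, h, by simp⟩
    have e : x = Jm ((Jm.symm x).1, (Jm.symm x).2) := by simp
    rw [e, tp_Jm]
    rw [Set.mem_prod, not_and_or] at hx'
    rcases hx' with h | h
    · rw [image_eq_zero_of_notMem_tsupport h]; simp
    · rw [image_eq_zero_of_notMem_tsupport h]; simp

lemma pd_tp {a : ℝ → ℂ} {ξ : (Fin 2 → ℝ) → ℝ} (ha : ContDiff ℝ (⊤ : ℕ∞) a) (h : TF (tp a ξ)) :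
    pd (tp a ξ) 0 = tp (deriv a) ξ := by
  ext x
  have h1 := hasDerivAt_line (h.diff x) 0
  refine h1.unique ?_
  have e : ∀ t : ℝ, tp a ξ (x + t • ee 0) = a (x 0 + t) * (ξ fun j => x j.succ : ℝ) := fun t => by
    simp [tp, ee]
  simp only [e]
  have h2 : HasDerivAt (fun t : ℝ => a (x 0 + t)) (deriv a (x 0)) 0 := by
    have := (ha.differentiable (by simp)) (x 0 + 0) |>.hasDerivAt.comp_const_add (x 0) 0
    simpa using this
  exact h2.mul_const _

lemma psi_bound (z : ℂ) : ‖z‖ ≤ 3 + 2 * (1 - ‖z‖ ^ 2) ^ 2 := by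
  nlinarith [norm_nonneg z, sq_nonneg (‖z‖ - 1), sq_nonneg (1 - ‖z‖ ^ 2 + 1)]

lemma eta_psi_bound (z : ℂ) : ‖(((1 - ‖z‖ ^ 2 : ℝ)) : ℂ) * z‖ ≤ 3 + 2 * (1 - ‖z‖ ^ 2) ^ 2 := by
  rw [norm_mul, Complex.norm_real, Real.norm_eq_abs]
  nlinarith [sq_nonneg (|1 - ‖z‖ ^ 2| - ‖z‖), sq_abs (1 - ‖z‖ ^ 2), sq_nonneg (1 - ‖z‖ ^ 2 + 1)]

lemma locInt_of_bound {X E : Type*} [TopologicalSpace X] [MeasurableSpace X] [OpensMeasurableSpace X]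
    [NormedAddCommGroup E] {μ : Measure X} [IsLocallyFiniteMeasure μ]
    {f : X → E} (hf : AEStronglyMeasurable f μ) {g : X → ℝ} (hg : Integrable g μ)
    (h : ∀ x, ‖f x‖ ≤ 3 + 2 * g x) : LocallyIntegrable f μ := by
  have h1 : LocallyIntegrable (fun x => 3 + 2 * g x) μ :=
    (locallyIntegrable_const (3 : ℝ)).add (hg.const_mul 2).locallyIntegrable
  exact h1.mono hf (Eventually.of_forall fun x => (h x).trans (le_abs_self _))

lemma loc_mul {X : Type*} [TopologicalSpace X] [MeasurableSpace X] [OpensMeasurableSpace X] [T2Space X]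
    [SecondCountableTopology X]
    {μ : Measure X} {u : X → ℂ} (hu : LocallyIntegrable u μ) {φ : X → ℂ} (hφ : Continuous φ)
    (hc : HasCompactSupport φ) : Integrable (fun x => u x * φ x) μ := by
  obtain ⟨C, hC⟩ := hφ.bounded_above_of_compact_support hc
  have h1 : IntegrableOn (fun x => u x * φ x) (tsupport φ) μ :=
    (hu.integrableOn_isCompact hc.isCompact).mul_bdd (c := C) hφ.aestronglyMeasurable
      (Eventually.of_forall hC)
  refine (integrableOn_iff_integrable_of_support_subset (s := tsupport φ) ?_).1 h1
  intro x hx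
  by_contra h
  exact hx (by simp [image_eq_zero_of_notMem_tsupport h])

/-- For a fixed one-dimensional test function, almost every line satisfies the weak equation, which has
no transverse derivatives. -/
lemma slice_weak {c : ℝ} {V : Ed 3 → ℂ} (hs : StronglyMeasurable V)
    (hη : Integrable (fun x => (1 - ‖1 + V x‖ ^ 2) ^ 2)) (hW : ∀ φ, TF φ → Wk c 0 V φ = 0)
    {a : ℝ → ℂ} (ha : ContDiff ℝ (⊤ : ℕ∞) a) (hac : HasCompactSupport a) :
    ∀ᵐ y, ∫ t, ((starRingEnd ℂ) (1 + V (Jm (y, t))) * (deriv (deriv a) t + I * c * deriv a t) +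
      ((1 - ‖1 + V (Jm (y, t))‖ ^ 2 : ℝ) : ℂ) * (starRingEnd ℂ) (1 + V (Jm (y, t))) * a t) = 0 := by
  have hψm : StronglyMeasurable fun x => (starRingEnd ℂ) (1 + V x) :=
    Complex.continuous_conj.comp_stronglyMeasurable (stronglyMeasurable_const.add hs)
  have hηm : StronglyMeasurable fun x => ((1 - ‖1 + V x‖ ^ 2 : ℝ) : ℂ) :=
    Complex.continuous_ofReal.comp_stronglyMeasurable
      (stronglyMeasurable_const.sub ((stronglyMeasurable_const.add hs).norm.pow 2))
  have ha' : ContDiff ℝ (⊤ : ℕ∞) (deriv a) := (contDiff_infty_iff_deriv.1 ha).2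
  have ha'' : ContDiff ℝ (⊤ : ℕ∞) (deriv (deriv a)) := (contDiff_infty_iff_deriv.1 ha').2
  have hb1 : ∀ z : ℂ, ‖(starRingEnd ℂ) z‖ ≤ 3 + 2 * (1 - ‖z‖ ^ 2) ^ 2 := fun z => by
    rw [RCLike.norm_conj]; exact psi_bound z
  have hb2 : ∀ z : ℂ, ‖((1 - ‖z‖ ^ 2 : ℝ) : ℂ) * (starRingEnd ℂ) z‖ ≤ 3 + 2 * (1 - ‖z‖ ^ 2) ^ 2 := fun z => by
    rw [norm_mul, RCLike.norm_conj, ← norm_mul]; exact eta_psi_bound z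
  -- the weak formulation in three dimensions, for a product test function
  have l1 : LocallyIntegrable (fun x => (starRingEnd ℂ) (1 + V x)) :=
    locInt_of_bound hψm.aestronglyMeasurable hη fun x => hb1 _
  have l2 : LocallyIntegrable (fun x => ((1 - ‖1 + V x‖ ^ 2 : ℝ) : ℂ) * (starRingEnd ℂ) (1 + V x)) :=
    locInt_of_bound (hηm.mul hψm).aestronglyMeasurable hη fun x => hb2 _
  have h3 : ∀ ξ : (Fin 2 → ℝ) → ℝ, ContDiff ℝ (⊤ : ℕ∞) ξ → HasCompactSupport ξ →
      ∫ x, ((starRingEnd ℂ) (1 + V x) * tp (deriv (deriv a)) ξ x +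
        I * c * ((starRingEnd ℂ) (1 + V x) * tp (deriv a) ξ x) +
        ((1 - ‖1 + V x‖ ^ 2 : ℝ) : ℂ) * (starRingEnd ℂ) (1 + V x) * tp a ξ x) = 0 := by
    intro ξ hξ hξc
    have t0 := tp_TF ha hac hξ hξc
    have t1 := tp_TF ha' hac.deriv hξ hξc
    have t2 := tp_TF ha'' hac.deriv.deriv hξ hξc
    have hw := hW _ t0
    unfold Wk at hw
    rw [pd_tp ha t0, pd_tp ha' t1] at hw
    have z1 := integral_pd t0 0
    have z2 := integral_pd t1 0
    rw [pd_tp ha t0] at z1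
    rw [pd_tp ha' t1] at z2
    have i1 := loc_mul l1 t1.cont t1.2
    have i2 := loc_mul l1 t2.cont t2.2
    have i3 := loc_mul l2 t0.cont t0.2
    have e : ∀ φ : Ed 3 → ℂ, TF φ → ∫ x, φ x = 0 →
        ∫ x, (starRingEnd ℂ) (1 + V x) * φ x = prg V φ := by
      intro φ hφ h0
      have h1 := loc_mul l1 hφ.cont hφ.2
      have : ∀ x, (starRingEnd ℂ) (V x) * φ x = (starRingEnd ℂ) (1 + V x) * φ x - φ x := fun x => by
        simp; ring
      unfold prg
      rw [integral_congr_ae (Eventually.of_forall this), integral_sub h1 hφ.integrable, h0, sub_zero]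
    have e3 : ∫ x, ((1 - ‖1 + V x‖ ^ 2 : ℝ) : ℂ) * (starRingEnd ℂ) (1 + V x) * tp a ξ x = epr V (tp a ξ) := by
      unfold epr
      exact integral_congr_ae (Eventually.of_forall fun x => by push_cast; ring)
    have i12 : Integrable (fun x => (starRingEnd ℂ) (1 + V x) * tp (deriv (deriv a)) ξ x +
        I * c * ((starRingEnd ℂ) (1 + V x) * tp (deriv a) ξ x)) := i2.add (i1.const_mul _)
    rw [integral_add i12 i3, integral_add i2 (i1.const_mul _), integral_const_mul,
      e _ t2 z2, e _ t1 z1, e3, ← hw]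
    simp only [ofReal_zero, zero_mul, add_zero]
    ring
  -- the function on the product
  set F : ((Fin 2 → ℝ) × ℝ) → ℂ := fun p =>
    (starRingEnd ℂ) (1 + V (Jm p)) * (deriv (deriv a) p.2 + I * c * deriv a p.2) +
      ((1 - ‖1 + V (Jm p)‖ ^ 2 : ℝ) : ℂ) * (starRingEnd ℂ) (1 + V (Jm p)) * a p.2 with hF
  have hηJ : Integrable (fun p => (1 - ‖1 + V (Jm p)‖ ^ 2) ^ 2) := Jm_integrable.2 hη
  have m1 : LocallyIntegrable (fun p => (starRingEnd ℂ) (1 + V (Jm p))) :=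
    locInt_of_bound (hψm.comp_measurable Jm.measurable).aestronglyMeasurable hηJ fun x => hb1 _
  have m2 : LocallyIntegrable
      (fun p => ((1 - ‖1 + V (Jm p)‖ ^ 2 : ℝ) : ℂ) * (starRingEnd ℂ) (1 + V (Jm p))) :=
    locInt_of_bound ((hηm.mul hψm).comp_measurable Jm.measurable).aestronglyMeasurable hηJ fun x => hb2 _
  have c1 : Continuous fun t => deriv (deriv a) t + I * c * deriv a t :=
    ha''.continuous.add (continuous_const.mul ha'.continuous)
  have b1 : HasCompactSupport fun t => deriv (deriv a) t + I * c * deriv a t :=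
    hac.deriv.deriv.add (hac.deriv.mul_left)
  have hFi : ∀ K, IsCompact K → IntegrableOn F (K ×ˢ (tsupport a)) := by
    intro K hK
    obtain ⟨C1, hC1⟩ := c1.bounded_above_of_compact_support b1
    obtain ⟨C2, hC2⟩ := ha.continuous.bounded_above_of_compact_support hac
    have hKK := hK.prod hac.isCompact
    exact ((m1.integrableOn_isCompact hKK).mul_bdd (c := C1)
        (c1.comp continuous_snd).aestronglyMeasurable (Eventually.of_forall fun p => hC1 _)).add
      ((m2.integrableOn_isCompact hKK).mul_bdd (c := C2)
        (ha.continuous.comp continuous_snd).aestronglyMeasurable (Eventually.of_forall fun p => hC2 _))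
  have hF0 : ∀ y t, t ∉ tsupport a → F (y, t) = 0 := by
    intro y t ht
    have k0 := image_eq_zero_of_notMem_tsupport ht
    have k1 : deriv a t = 0 := image_eq_zero_of_notMem_tsupport fun h => ht (tsupport_deriv_subset h)
    have k2 : deriv (deriv a) t = 0 := image_eq_zero_of_notMem_tsupport fun h =>
      ht (tsupport_deriv_subset (tsupport_deriv_subset h))
    simp [hF, k0, k1, k2]
  have hh : ∀ y, ∫ t, F (y, t) = ∫ t in tsupport a, F (y, t) := fun y =>
    (setIntegral_eq_integral_of_forall_compl_eq_zero (hF0 y)).symm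
  have hloc : LocallyIntegrable (fun y => ∫ t, F (y, t)) := by
    rw [locallyIntegrable_iff]
    intro K hK
    have h1 := hFi K hK
    rw [IntegrableOn, Measure.volume_eq_prod, ← Measure.prod_restrict] at h1
    have h2 := h1.integral_prod_left
    simp only [hh]
    exact h2
  refine ae_eq_zero_of_integral_contDiff_smul_eq_zero hloc fun ξ hξ hξc => ?_
  have h4 := h3 ξ hξ hξc
  rw [← Jm_int] at h4
  have e : ∀ p : (Fin 2 → ℝ) × ℝ, ((starRingEnd ℂ) (1 + V (Jm p)) * tp (deriv (deriv a)) ξ (Jm p) +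
        I * c * ((starRingEnd ℂ) (1 + V (Jm p)) * tp (deriv a) ξ (Jm p)) +
        ((1 - ‖1 + V (Jm p)‖ ^ 2 : ℝ) : ℂ) * (starRingEnd ℂ) (1 + V (Jm p)) * tp a ξ (Jm p)) = ξ p.1 • F p := by
    rintro ⟨y, t⟩
    rw [tp_Jm, tp_Jm, tp_Jm, Complex.real_smul]
    simp only [hF]; ring
  rw [integral_congr_ae (Eventually.of_forall e)] at h4
  have hi : Integrable (fun p : (Fin 2 → ℝ) × ℝ => ξ p.1 • F p) := by
    obtain ⟨C, hC⟩ := hξ.continuous.bounded_above_of_compact_support hξc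
    have h1 : IntegrableOn (fun p : (Fin 2 → ℝ) × ℝ => ξ p.1 • F p) ((tsupport ξ) ×ˢ (tsupport a)) :=
      (hFi _ hξc.isCompact).bdd_smul C (hξ.continuous.comp continuous_fst).aestronglyMeasurable
        (Eventually.of_forall fun p => hC _)
    refine (integrableOn_iff_integrable_of_support_subset ?_).1 h1
    rintro ⟨y, t⟩ hx
    by_contra h
    rw [Set.mem_prod, not_and_or] at h
    apply hx
    rcases h with h | h
    · simp [image_eq_zero_of_notMem_tsupport h]
    · simp only [hF0 y t h, smul_zero]
  rw [Measure.volume_eq_prod] at h4 hi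
  rw [integral_prod _ hi] at h4
  rw [← h4]
  exact integral_congr_ae (Eventually.of_forall fun y => (integral_smul (ξ y) (fun t => F (y, t))).symm)

/-- One-dimensional test function: a reflected bump times a phase removing the first order term. -/
def ta (c : ℝ) (β : ℝ → ℝ) (r t : ℝ) : ℂ := cexp (-(I * c / 2) * t) * (β (r - t) : ℝ)

lemma cexp_lin (k : ℂ) (t : ℝ) : HasDerivAt (fun t : ℝ => cexp (k * t)) (k * cexp (k * t)) t :=
  ((((Complex.ofRealCLM.hasDerivAt (x := t)).const_mul k)).cexp).congr_deriv (by simp; ring)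

lemma ta_contDiff (c : ℝ) {β : ℝ → ℝ} (hβ : ContDiff ℝ (⊤ : ℕ∞) β) (r : ℝ) : ContDiff ℝ (⊤ : ℕ∞) (ta c β r) := by
  unfold ta
  exact (contDiff_const.mul Complex.ofRealCLM.contDiff).cexp.mul
    (Complex.ofRealCLM.contDiff.comp (hβ.comp (contDiff_const.sub contDiff_id)))

lemma ta_hcs (c : ℝ) {β : ℝ → ℝ} (hβ : HasCompactSupport β) (r : ℝ) : HasCompactSupport (ta c β r) := by
  have h1 : HasCompactSupport fun t => β (r - t) := hβ.comp_homeomorph (Homeomorph.subLeft r)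
  exact HasCompactSupport.mul_left (h1.comp_left (g := fun r : ℝ => (r : ℂ)) (by simp))

lemma ta_deriv (c : ℝ) {β : ℝ → ℝ} (hβ : Differentiable ℝ β) (r : ℝ) :
    deriv (ta c β r) = fun t => -ta c (deriv β) r t - I * c / 2 * ta c β r t := by
  ext t
  have d0 : HasDerivAt (fun t : ℝ => r - t) (-1) t := (hasDerivAt_id t).const_sub r
  have d1 : HasDerivAt (fun t => ((β (r - t) : ℝ) : ℂ)) (-(deriv β (r - t) : ℝ)) t :=
    (HasDerivAt.ofReal_comp ((hβ _).hasDerivAt.comp t d0)).congr_deriv (by push_cast; ring)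
  exact (((cexp_lin (-(I * c / 2)) t).mul d1).congr_deriv (by unfold ta; ring)).deriv

/-- The phase removes the first order term of the operator. -/
lemma ta_comb (c : ℝ) {β : ℝ → ℝ} (hβ : ContDiff ℝ (⊤ : ℕ∞) β) (r t : ℝ) :
    deriv (deriv (ta c β r)) t + I * c * deriv (ta c β r) t =
      ta c (deriv (deriv β)) r t + c ^ 2 / 4 * ta c β r t := by
  have hβ' : ContDiff ℝ (⊤ : ℕ∞) (deriv β) := (contDiff_infty_iff_deriv.1 hβ).2
  have e : deriv (deriv (ta c β r)) t = ta c (deriv (deriv β)) r t + I * c * ta c (deriv β) r t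
      - c ^ 2 / 4 * ta c β r t := by
    have k1 : HasDerivAt (ta c (deriv β) r) _ t :=
      ((ta_contDiff c hβ' r).differentiable (by simp) t).hasDerivAt
    have k2 : HasDerivAt (ta c β r) _ t :=
      ((ta_contDiff c hβ r).differentiable (by simp) t).hasDerivAt
    rw [ta_deriv c (hβ.differentiable (by simp))] at *
    have := (k1.neg.sub (k2.const_mul (I * c / 2))).deriv
    refine Eq.trans this ?_
    rw [ta_deriv c (hβ'.differentiable (by simp))]
    ring_nf
    rw [I_sq]; ring
  rw [e, ta_deriv c (hβ.differentiable (by simp))]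
  ring_nf
  rw [I_sq]; ring

/-- A one-dimensional weak solution agrees almost everywhere with a classical one. The sign of `c` is
reversed because the equation is satisfied by the conjugate of the field. -/
lemma slice_ode {c : ℝ} {Q : ℝ → ℂ} (hm : AEStronglyMeasurable Q)
    (hη : Integrable fun t => (1 - ‖Q t‖ ^ 2) ^ 2) {b : ℕ → ContDiffBump (0 : ℝ)}
    (hb : Tendsto (fun n => (b n).rOut) atTop (𝓝 0)) (hb' : ∀ n, (b n).rOut ≤ 2 * (b n).rIn)
    (hw : ∀ n (r : ℚ), ∫ t, (Q t * (deriv (deriv (ta c ((b n).normed volume) r)) t +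
      I * c * deriv (ta c ((b n).normed volume) r) t) +
      ((1 - ‖Q t‖ ^ 2 : ℝ) : ℂ) * Q t * ta c ((b n).normed volume) r t) = 0) :
    ∃ P P1 : ℝ → ℂ, (∀ᵐ t, Q t = P t) ∧ (∀ t, HasDerivAt P (P1 t) t) ∧
      ∀ t, HasDerivAt P1 (-(I * ((-c : ℝ) : ℂ) * P1 t) - ((1 - ‖P t‖ ^ 2 : ℝ) : ℂ) * P t) t := by
  set e : ℝ → ℂ := fun t => cexp (-(I * c / 2) * t) with he
  have hec : Continuous e := by fun_prop
  have hen : ∀ t, ‖e t‖ = 1 := fun t => by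
    have : -(I * c / 2) * t = ((-(c / 2 * t) : ℝ) : ℂ) * I := by push_cast; ring
    simp only [he]; rw [this, norm_exp_ofReal_mul_I]
  set U : ℝ → ℂ := fun t => Q t * e t with hU
  have hUn : ∀ t, ‖U t‖ = ‖Q t‖ := fun t => by simp [hU, hen]
  set g : ℂ → ℂ := fun z => ((c ^ 2 / 4 + (1 - ‖z‖ ^ 2) : ℝ) : ℂ) * z with hg
  have hgc : Continuous g := by fun_prop
  have lQ : LocallyIntegrable Q := locInt_of_bound hm hη fun t => psi_bound _
  have hUm : AEStronglyMeasurable U := hm.mul hec.aestronglyMeasurable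
  have lU : LocallyIntegrable U := locInt_of_bound hUm hη fun t => by rw [hUn]; exact psi_bound _
  have lηU : LocallyIntegrable fun t => ((1 - ‖U t‖ ^ 2 : ℝ) : ℂ) * U t :=
    locInt_of_bound (by
      have := hUm.norm
      exact ((Complex.continuous_ofReal.comp_aestronglyMeasurable
        (aestronglyMeasurable_const.sub (this.pow 2)))).mul hUm) hη
      fun t => by rw [← hUn]; exact eta_psi_bound _
  have lG : LocallyIntegrable fun t => g (U t) := by
    have h1 : LocallyIntegrable (fun t => ((c ^ 2 / 4 : ℝ) : ℂ) * U t + ((1 - ‖U t‖ ^ 2 : ℝ) : ℂ) * U t) :=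
      (lU.smul ((c ^ 2 / 4 : ℝ) : ℂ)).add lηU
    have : (fun t => g (U t)) = (fun t => ((c ^ 2 / 4 : ℝ) : ℂ) * U t + ((1 - ‖U t‖ ^ 2 : ℝ) : ℂ) * U t) := by
      ext t; simp only [hg]; push_cast; ring
    rw [this]; exact h1
  obtain ⟨A, B, hAB⟩ := weak_ode lU lG hb hb' (by
    intro n r
    set β : ℝ → ℝ := (b n).normed volume with hβ
    have hβs : ContDiff ℝ (⊤ : ℕ∞) β := (b n).contDiff_normed
    have hβc : HasCompactSupport β := (b n).hasCompactSupport_normed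
    have hβ' : ContDiff ℝ (⊤ : ℕ∞) (deriv β) := (contDiff_infty_iff_deriv.1 hβs).2
    have hβ'' : ContDiff ℝ (⊤ : ℕ∞) (deriv (deriv β)) := (contDiff_infty_iff_deriv.1 hβ').2
    have hcs : ∀ f : ℝ → ℝ, HasCompactSupport f → HasCompactSupport fun t => ((f ((r:ℝ) - t) : ℝ) : ℂ) :=
        fun f hf => (hf.comp_homeomorph (Homeomorph.subLeft (r:ℝ))).comp_left (g := fun r : ℝ => (r : ℂ)) (by simp)
    have hcc : ∀ f : ℝ → ℝ, Continuous f → Continuous fun t => ((f ((r:ℝ) - t) : ℝ) : ℂ) :=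
        fun f hf => by fun_prop
    have i1 := loc_mul lU (hcc _ hβ''.continuous) (hcs _ hβc.deriv.deriv)
    have i2 := loc_mul lG (hcc _ hβs.continuous) (hcs _ hβc)
    have h1 := hw n r
    have h2 : ∀ t, Q t * (deriv (deriv (ta c ((b n).normed volume) r)) t +
      I * c * deriv (ta c ((b n).normed volume) r) t) +
      ((1 - ‖Q t‖ ^ 2 : ℝ) : ℂ) * Q t * ta c ((b n).normed volume) r t =
      U t * ((deriv (deriv β) (r - t) : ℝ) : ℂ) + g (U t) * ((β (r - t) : ℝ) : ℂ) := fun t => by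
      have h3 := hUn t
      rw [← hβ, ta_comb c hβs]
      simp only [hg, h3]
      simp only [hU, ta, he]
      push_cast
      ring
    rw [integral_congr_ae (Eventually.of_forall h2), integral_add i1 i2] at h1
    simp only [mul_comm _ (U _), mul_comm _ (g (U _))]
    exact eq_neg_of_add_eq_zero_left h1)
  have hGi : ∀ a b, IntervalIntegrable (fun t => g (U t)) volume a b := fun a b =>
    (lG.integrableOn_isCompact isCompact_uIcc).intervalIntegrable
  have hHc : Continuous fun s => ∫ σ in (0:ℝ)..s, g (U σ) := intervalIntegral.continuous_primitive hGi 0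
  set H : ℝ → ℂ := fun s => ∫ σ in (0:ℝ)..s, g (U σ) with hH
  set u : ℝ → ℂ := fun t => A + t * B - ∫ s in (0:ℝ)..t, H s with hu
  have du : ∀ t, HasDerivAt u (B - H t) t := fun t => by
    have h1 : HasDerivAt (fun t => ∫ s in (0:ℝ)..t, H s) (H t) t :=
      intervalIntegral.integral_hasDerivAt_right (hHc.intervalIntegrable _ _)
        hHc.aestronglyMeasurable.stronglyMeasurableAtFilter hHc.continuousAt
    exact ((((Complex.ofRealCLM.hasDerivAt (x := t)).mul_const B).const_add A).sub h1).congr_deriv (by simp)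
  have huc : Continuous u := continuous_iff_continuousAt.2 fun t => (du t).continuousAt
  have hgu : Continuous fun t => g (u t) := hgc.comp huc
  have hH' : ∀ s, H s = ∫ σ in (0:ℝ)..s, g (u σ) := fun s =>
    intervalIntegral.integral_congr_ae (hAB.mono fun t ht _ => by rw [ht])
  have dH : ∀ t, HasDerivAt H (g (u t)) t := fun t => by
    rw [show H = fun s => ∫ σ in (0:ℝ)..s, g (u σ) from funext hH']
    exact intervalIntegral.integral_hasDerivAt_right (hgu.intervalIntegrable _ _)
        hgu.aestronglyMeasurable.stronglyMeasurableAtFilter hgu.continuousAt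
  set k : ℂ := I * c / 2 with hk
  have hee : ∀ t : ℝ, e t * cexp (k * t) = 1 := fun t => by
    simp only [he]; rw [← Complex.exp_add]; simp
  have hkn : ∀ t : ℝ, ‖cexp (k * t)‖ = 1 := fun t => by
    have := congrArg norm (hee t)
    rwa [norm_mul, hen, one_mul, norm_one] at this
  refine ⟨fun t => u t * cexp (k * t), fun t => (B - H t) * cexp (k * t) + u t * (k * cexp (k * t)), ?_, ?_, ?_⟩
  · filter_upwards [hAB] with t ht
    have : Q t = U t * cexp (k * t) := by simp only [hU]; rw [mul_assoc, hee, mul_one]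
    rw [this, ht]
  · exact fun t => (du t).mul (cexp_lin k t)
  · intro t
    refine (((dH t).const_sub B).mul (cexp_lin k t) |>.add ((du t).mul ((cexp_lin k t).const_mul k))).congr_deriv ?_
    rw [norm_mul, hkn, mul_one]
    simp only [hg, hk]
    push_cast
    ring_nf
    rw [I_sq]; ring

/-! ### Exclusion of the degenerate case -/

/-- The bounded density `(1 - |z|²)/(1 + |z|²)`, whose square is dominated by the potential. -/
def fz (z : ℂ) : ℝ := (1 - ‖z‖ ^ 2) / (1 + ‖z‖ ^ 2)

lemma fz_cont : Continuous fz := by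
  unfold fz
  exact Continuous.div (by fun_prop) (by fun_prop) fun z => by positivity

lemma fz_sq_le (z : ℂ) : fz z ^ 2 ≤ (1 - ‖z‖ ^ 2) ^ 2 := by
  unfold fz
  rw [div_pow]
  exact div_le_self (sq_nonneg _) (by nlinarith [sq_nonneg ‖z‖])

lemma fz_lip (z w : ℂ) : (fz z - fz w) ^ 2 ≤ 4 * ‖z - w‖ ^ 2 := by
  unfold fz
  set a := ‖z‖
  set b := ‖w‖
  have h0 : (a - b) ^ 2 ≤ ‖z - w‖ ^ 2 := by
    rw [← sq_abs (a - b)]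
    exact pow_le_pow_left₀ (abs_nonneg _) (abs_norm_sub_norm_le z w) 2
  have e : (1 - a ^ 2) / (1 + a ^ 2) - (1 - b ^ 2) / (1 + b ^ 2) =
      2 * (b - a) * ((a + b) / ((1 + a ^ 2) * (1 + b ^ 2))) := by
    field_simp; ring
  have ha : 0 ≤ a := norm_nonneg z
  have hb : 0 ≤ b := norm_nonneg w
  have h1 : (a + b) / ((1 + a ^ 2) * (1 + b ^ 2)) ≤ 1 := by
    rw [div_le_one (by positivity)]
    nlinarith [sq_nonneg (a - 1), sq_nonneg (b - 1), mul_nonneg (sq_nonneg a) (sq_nonneg b)]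
  have h2 : 0 ≤ (a + b) / ((1 + a ^ 2) * (1 + b ^ 2)) := by positivity
  rw [e, mul_pow]
  have h3 : ((a + b) / ((1 + a ^ 2) * (1 + b ^ 2))) ^ 2 ≤ 1 := pow_le_one₀ h2 h1
  nlinarith [sq_nonneg (b - a)]

lemma fz_conj (z : ℂ) : fz ((starRingEnd ℂ) z) = fz z := by simp [fz]

/-- For almost every line parallel to the direction of propagation, the difference quotients have an
integrable limit inferior. -/
lemma slice_liminf {V : Ed 3 → ℂ} (hs : StronglyMeasurable V) {g : ℝ}
    (hsh : ∀ τ : ℝ, Integrable (fun x => ‖V (x + τ • ee 0) - V x‖ ^ 2) ∧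
      (∫ x, ‖V (x + τ • ee 0) - V x‖ ^ 2) ≤ τ ^ 2 * g) :
    ∀ᵐ y : Fin 2 → ℝ, (∫⁻ t : ℝ, liminf (fun n : ℕ => ENNReal.ofReal
      (((n:ℝ) + 1) ^ 2 * ‖V (Jm (y, t + ((n:ℝ) + 1)⁻¹)) - V (Jm (y, t))‖ ^ 2)) atTop) < ⊤ := by
  set q : ℕ → Ed 3 → ENNReal := fun n x => ENNReal.ofReal
      (((n:ℝ) + 1) ^ 2 * ‖V (x + ((n:ℝ) + 1)⁻¹ • ee 0) - V x‖ ^ 2) with hq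
  have hqm : ∀ n, Measurable (q n) := fun n => by
    have := (hs.measurable.comp (measurable_id.add_const (((n:ℝ) + 1)⁻¹ • ee 0))).sub hs.measurable
    exact ((this.norm.pow_const 2).const_mul _).ennreal_ofReal
  have hL : Measurable fun x => liminf (fun n => q n x) atTop := Measurable.liminf hqm
  have h1 : (∫⁻ x, liminf (fun n => q n x) atTop) ≤ ENNReal.ofReal g := by
    refine (lintegral_liminf_le hqm).trans ?_
    have : ∀ n, (∫⁻ x, q n x) ≤ ENNReal.ofReal g := fun n => by
      have hp : (0:ℝ) < (n:ℝ) + 1 := by positivity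
      simp only [hq]
      rw [← ofReal_integral_eq_lintegral_ofReal ((hsh _).1.const_mul _)
        (Eventually.of_forall fun x => by positivity), integral_const_mul]
      refine ENNReal.ofReal_le_ofReal ?_
      have := mul_le_mul_of_nonneg_left (hsh (((n:ℝ) + 1)⁻¹)).2 (sq_nonneg ((n:ℝ) + 1))
      refine this.trans (le_of_eq ?_)
      field_simp
    exact (liminf_le_liminf (Eventually.of_forall this)).trans (by simp)
  have h2 : (∫⁻ p : (Fin 2 → ℝ) × ℝ, liminf (fun n => q n (Jm p)) atTop) ≤ ENNReal.ofReal g := by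
    rw [Jm_mp.lintegral_comp hL]; exact h1
  have hLm : Measurable fun p : (Fin 2 → ℝ) × ℝ => liminf (fun n => q n (Jm p)) atTop := hL.comp Jm.measurable
  rw [show (volume : Measure ((Fin 2 → ℝ) × ℝ)) = Measure.prod volume volume from rfl,
    lintegral_prod _ hLm.aemeasurable] at h2
  have h3 := ae_lt_top hLm.lintegral_prod_right' (h2.trans_lt ENNReal.ofReal_lt_top).ne
  filter_upwards [h3] with y hy
  simpa only [hq, Jm_add_zero] using hy

/-- Almost every line carries either no energy, and then the field is constant on it, or at least a fixed
amount. -/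
lemma slice_dich {c : ℝ} (hc2 : c ^ 2 < 2) {V : Ed 3 → ℂ} (hs : StronglyMeasurable V) {g : ℝ}
    (hsh : ∀ τ : ℝ, Integrable (fun x => ‖V (x + τ • ee 0) - V x‖ ^ 2) ∧
      (∫ x, ‖V (x + τ • ee 0) - V x‖ ^ 2) ≤ τ ^ 2 * g)
    (hη : Integrable (fun x => (1 - ‖1 + V x‖ ^ 2) ^ 2)) (hW : ∀ φ, TF φ → Wk c 0 V φ = 0) :
    ∀ᵐ y : Fin 2 → ℝ, ((∃ a, ∀ᵐ t : ℝ, V (Jm (y, t)) = a) ∧ ∀ᵐ t : ℝ, fz (1 + V (Jm (y, t))) = 0) ∨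
      ((2 - c ^ 2) / 10) ^ 3 ≤ ∫ t : ℝ, fz (1 + V (Jm (y, t))) ^ 2 := by
  let b : ℕ → ContDiffBump (0 : ℝ) := fun n =>
    ⟨((n:ℝ) + 1)⁻¹, 2 * ((n:ℝ) + 1)⁻¹, by positivity, by
      have : (0:ℝ) < ((n:ℝ) + 1)⁻¹ := by positivity
      linarith⟩
  have hb : Tendsto (fun n => (b n).rOut) atTop (𝓝 0) := by
    have := (tendsto_one_div_add_atTop_nhds_zero_nat (𝕜 := ℝ)).const_mul 2
    simpa [b] using this
  have hb' : ∀ n, (b n).rOut ≤ 2 * (b n).rIn := fun n => le_rfl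
  have hw : ∀ᵐ y : Fin 2 → ℝ, ∀ (n : ℕ) (r : ℚ), _ := ae_all_iff.2 fun n => ae_all_iff.2 fun r =>
    slice_weak hs hη hW (ta_contDiff c (β := (b n).normed volume) (b n).contDiff_normed r)
      (ta_hcs c (b n).hasCompactSupport_normed r)
  have hη2 : ∀ᵐ y : Fin 2 → ℝ, Integrable fun t : ℝ => (1 - ‖1 + V (Jm (y, t))‖ ^ 2) ^ 2 :=
    (Jm_integrable.2 hη).prod_right_ae
  filter_upwards [hw, hη2, slice_liminf hs hsh] with y h1 h2 h3
  have hm : Measurable fun t : ℝ => V (Jm (y, t)) :=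
    hs.measurable.comp (Jm.measurable.comp measurable_prodMk_left)
  have hcn : ∀ z : ℂ, ‖(starRingEnd ℂ) z‖ = ‖z‖ := fun z => RCLike.norm_conj z
  obtain ⟨P, P1, hQ, hP, hP1⟩ := slice_ode (c := c) (Q := fun t => (starRingEnd ℂ) (1 + V (Jm (y, t))))
    (Complex.continuous_conj.measurable.comp (hm.const_add 1)).aestronglyMeasurable
    (by simpa only [hcn] using h2) hb hb' (fun n r => by simp only [hcn]; exact h1 n r)
  have hcont : Continuous P := continuous_iff_continuousAt.2 fun t => (hP t).continuousAt
  have hcont1 : Continuous P1 := continuous_iff_continuousAt.2 fun t => (hP1 t).continuousAt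
  have hQn : ∀ᵐ t, ‖P t‖ = ‖1 + V (Jm (y, t))‖ := hQ.mono fun t ht => by
    rw [← ht, hcn]
  -- the derivative of the continuous representative is square integrable
  have i1 : Integrable fun t => ‖P1 t‖ ^ 2 := by
    refine ⟨(hcont1.norm.pow 2).aestronglyMeasurable, ?_⟩
    rw [hasFiniteIntegral_iff_ofReal (Eventually.of_forall fun t => by positivity)]
    refine lt_of_eq_of_lt (lintegral_congr_ae ?_) h3
    have hsft : ∀ᵐ t : ℝ, ∀ n : ℕ, (starRingEnd ℂ) (1 + V (Jm (y, t + ((n:ℝ) + 1)⁻¹))) = P (t + ((n:ℝ) + 1)⁻¹) :=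
      ae_all_iff.2 fun n => (measurePreserving_add_right volume (((n:ℝ) + 1)⁻¹)).quasiMeasurePreserving.ae hQ
    filter_upwards [hsft, hQ] with t ht1 ht2
    have e : ∀ n : ℕ, ((n:ℝ) + 1) ^ 2 * ‖V (Jm (y, t + ((n:ℝ) + 1)⁻¹)) - V (Jm (y, t))‖ ^ 2 =
        ‖(((n:ℝ) + 1)⁻¹)⁻¹ • (P (t + ((n:ℝ) + 1)⁻¹) - P t)‖ ^ 2 := fun n => by
      rw [← ht1 n, ← ht2, ← map_sub, norm_smul, hcn, mul_pow, inv_inv, add_sub_add_left_eq_sub,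
        Real.norm_of_nonneg (by positivity)]
    simp only [e]
    have h4 : Tendsto (fun n : ℕ => ((n:ℝ) + 1)⁻¹) atTop (𝓝[≠] 0) := by
      refine tendsto_nhdsWithin_iff.2 ⟨?_, Eventually.of_forall fun n => ?_⟩
      · simpa using tendsto_one_div_add_atTop_nhds_zero_nat (𝕜 := ℝ)
      · have : (0:ℝ) < ((n:ℝ) + 1)⁻¹ := by positivity
        exact this.ne'
    have h5 := (hasDerivAt_iff_tendsto_slope_zero.1 (hP t)).comp h4
    exact ((ENNReal.tendsto_ofReal (h5.norm.pow 2)).liminf_eq).symm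
  have i2 : Integrable fun t => (1 - ‖P t‖ ^ 2) ^ 2 := h2.congr (hQn.mono fun t ht => by simp only [ht])
  rcases ode_gap (c := -c) (by simpa using hc2) hP hP1 i1 i2 with h | h
  · left
    have hconst : ∀ t, P t = P 0 := fun t => is_const_of_deriv_eq_zero
      (fun t => (hP t).differentiableAt) (fun t => by rw [(hP t).deriv, (h t).2]) t 0
    constructor
    · refine ⟨(starRingEnd ℂ) (P 0) - 1, hQ.mono fun t ht => ?_⟩
      rw [← hconst t, ← ht]; simp
    · refine hQn.mono fun t ht => ?_
      unfold fz
      rw [← ht, (h t).1, zero_div]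
  · right
    rw [neg_sq] at h
    refine h.trans (le_of_eq (integral_congr_ae (hQn.mono fun t ht => ?_)))
    simp only [fz, ht]

/-- An integrable function on the plane whose translation modulus is quadratic in the step is
invariant: subdividing a translation into `n` equal steps gains a factor `1/n`. -/
lemma invar_of_sq {θ : (Fin 2 → ℝ) → ℝ} (hθ : Integrable θ) {e : Fin 2 → ℝ} {C : ℝ}
    (h : ∀ τ : ℝ, (∫ y, |θ (y + τ • e) - θ y|) ≤ C * τ ^ 2) (τ : ℝ) :
    ∀ᵐ y, θ (y + τ • e) = θ y := by
  have hi : ∀ z, Integrable fun y => θ (y + z) := fun z => hθ.comp_add_right z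
  have hd : ∀ z z', Integrable fun y => |θ (y + z) - θ (y + z')| := fun z z' => ((hi z).sub (hi z')).abs
  have hd0 : ∀ z, Integrable fun y => |θ (y + z) - θ y| := fun z => ((hi z).sub hθ).abs
  have step : ∀ (σ : ℝ) (n : ℕ), (∫ y, |θ (y + ((n:ℝ) * σ) • e) - θ y|) ≤ n * (C * σ ^ 2) := by
    intro σ n
    induction n with
    | zero => simp
    | succ n ih =>
      have e1 : (∫ y, |θ (y + (((n+1:ℕ):ℝ) * σ) • e) - θ (y + ((n:ℝ) * σ) • e)|) =
          ∫ y, |θ (y + σ • e) - θ y| := by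
        rw [← integral_add_right_eq_self (fun y => |θ (y + σ • e) - θ y|) (((n:ℝ) * σ) • e)]
        refine integral_congr_ae (Eventually.of_forall fun y => ?_)
        simp only [add_assoc, ← add_smul]
        push_cast; ring_nf
      have e2 : (∫ y, |θ (y + (((n+1:ℕ):ℝ) * σ) • e) - θ y|) ≤
          ∫ y, (|θ (y + (((n+1:ℕ):ℝ) * σ) • e) - θ (y + ((n:ℝ) * σ) • e)| +
            |θ (y + ((n:ℝ) * σ) • e) - θ y|) :=
        integral_mono (hd0 _) ((hd _ _).add (hd0 _)) fun y => abs_sub_le _ _ _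
      rw [integral_add (hd _ _) (hd0 _), e1] at e2
      have := h σ
      push_cast at *
      linarith
  have h0 : (∫ y, |θ (y + τ • e) - θ y|) ≤ 0 := by
    have h1 : ∀ n : ℕ, (∫ y, |θ (y + τ • e) - θ y|) ≤ (C * τ ^ 2) * (1 / ((n:ℝ) + 1)) := fun n => by
      have hp : ((n:ℝ) + 1) ≠ 0 := by positivity
      have := step (τ / ((n:ℝ) + 1)) (n + 1)
      push_cast at this
      rw [mul_div_cancel₀ _ hp] at this
      refine this.trans (le_of_eq ?_)
      field_simp
    have h2 := (tendsto_one_div_add_atTop_nhds_zero_nat (𝕜 := ℝ)).const_mul (C * τ ^ 2)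
    rw [mul_zero] at h2
    exact ge_of_tendsto' h2 h1
  have h1 := (integral_eq_zero_iff_of_nonneg (fun y => abs_nonneg _) (hd0 _)).1
    (le_antisymm h0 (integral_nonneg fun y => abs_nonneg _))
  exact h1.mono fun y hy => sub_eq_zero.1 (abs_eq_zero.1 hy)

/-- A finite energy weak solution of the travelling wave equation without transverse dispersion is
constant: its transverse slices carry either no energy or at least a fixed amount of it, so the set
of charged slices has finite measure and is translation invariant. -/
lemma degenerate {c : ℝ} (hc2 : c ^ 2 < 2) {V : Ed 3 → ℂ} (hs : StronglyMeasurable V)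
    (hsh : ∀ i, ∃ g : ℝ, ∀ τ : ℝ, Integrable (fun x => ‖V (x + τ • ee i) - V x‖ ^ 2) ∧
      (∫ x, ‖V (x + τ • ee i) - V x‖ ^ 2) ≤ τ ^ 2 * g)
    (hη : Integrable (fun x => (1 - ‖1 + V x‖ ^ 2) ^ 2)) (hW : ∀ φ, TF φ → Wk c 0 V φ = 0) :
    ∃ a : ℂ, ‖a‖ = 1 ∧ ∀ᵐ x, 1 + V x = a := by
  obtain ⟨g0, hg0⟩ := hsh 0
  have hm0 : 0 < ((2 - c ^ 2) / 10) ^ 3 := pow_pos (by linarith) 3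
  have hD := slice_dich hc2 hs hg0 hη hW
  set m : ℝ := ((2 - c ^ 2) / 10) ^ 3 with hm
  set F : Ed 3 → ℝ := fun x => fz (1 + V x) with hF
  have hFm : StronglyMeasurable F := fz_cont.comp_stronglyMeasurable (stronglyMeasurable_const.add hs)
  have hFi : Integrable fun x => F x ^ 2 := hη.mono' (hFm.pow 2).aestronglyMeasurable
    (Eventually.of_forall fun x => by
      rw [Real.norm_of_nonneg (sq_nonneg _)]; exact fz_sq_le _)
  set N : (Fin 2 → ℝ) → ℝ := fun y => ∫ t : ℝ, F (Jm (y, t)) ^ 2 with hN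
  have hFJ : StronglyMeasurable fun p : (Fin 2 → ℝ) × ℝ => F (Jm p) ^ 2 :=
    (hFm.comp_measurable Jm.measurable).pow 2
  have hNm : StronglyMeasurable N := hFJ.integral_prod_right'
  have hNi : Integrable N := (Jm_integrable.2 hFi).integral_prod_left
  have hN0 : ∀ y, 0 ≤ N y := fun y => integral_nonneg fun t => sq_nonneg _
  -- The slices carrying energy.
  set S : Set (Fin 2 → ℝ) := {y | m ≤ N y} with hS
  have hSm : MeasurableSet S := measurableSet_le measurable_const hNm.measurable
  set θ : (Fin 2 → ℝ) → ℝ := S.indicator fun _ => 1 with hθ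
  have hθ0 : ∀ y, 0 ≤ θ y := fun y => Set.indicator_nonneg (fun _ _ => zero_le_one) y
  have hθi : Integrable θ := by
    refine (hNi.const_mul m⁻¹).mono' (measurable_const.indicator hSm).aestronglyMeasurable
      (Eventually.of_forall fun y => ?_)
    rw [Real.norm_of_nonneg (hθ0 y)]
    by_cases hy : y ∈ S
    · rw [hθ, Set.indicator_of_mem hy, inv_mul_eq_div, one_le_div hm0]; exact hy
    · rw [hθ, Set.indicator_of_notMem hy]; have := hN0 y; positivity
  have hinv : ∀ (j : Fin 2) (τ : ℝ), ∀ᵐ y, θ (y + τ • Pi.single j 1) = θ y := by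
    intro j
    obtain ⟨gj, hgj⟩ := hsh j.succ
    refine invar_of_sq (C := 4 * gj / m) hθi fun τ => ?_
    have i1 : Integrable fun x => (F (x + τ • ee j.succ) - F x) ^ 2 := by
      refine ((hgj τ).1.const_mul 4).mono'
        (((hFm.comp_measurable (measurable_id.add_const _)).sub hFm).pow 2).aestronglyMeasurable
        (Eventually.of_forall fun x => ?_)
      rw [Real.norm_of_nonneg (sq_nonneg _)]
      refine (fz_lip _ _).trans (le_of_eq ?_)
      rw [add_sub_add_left_eq_sub]
    have i2 : (∫ x, (F (x + τ • ee j.succ) - F x) ^ 2) ≤ 4 * (τ ^ 2 * gj) := by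
      refine (integral_mono i1 ((hgj τ).1.const_mul 4) fun x => ?_).trans ?_
      · refine (fz_lip _ _).trans (le_of_eq ?_)
        rw [add_sub_add_left_eq_sub]
      · rw [integral_const_mul]; linarith [(hgj τ).2]
    have i3 := Jm_integrable.2 i1
    rw [← Jm_int] at i2
    rw [show (volume : Measure ((Fin 2 → ℝ) × ℝ)) = Measure.prod volume volume from rfl] at i2 i3
    rw [integral_prod _ i3] at i2
    simp only [Jm_add_succ] at i2
    have i4 : Integrable fun y : Fin 2 → ℝ =>
        ∫ t : ℝ, (F (Jm (y + τ • Pi.single j 1, t)) - F (Jm (y, t))) ^ 2 := by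
      simpa only [Jm_add_succ] using i3.integral_prod_left
    -- Where the indicator jumps, one slice is uncharged and the other has norm squared at least `m`.
    have pw : ∀ᵐ y : Fin 2 → ℝ, |θ (y + τ • Pi.single j 1) - θ y| ≤
        m⁻¹ * ∫ t : ℝ, (F (Jm (y + τ • Pi.single j 1, t)) - F (Jm (y, t))) ^ 2 := by
      have hD' := (measurePreserving_add_right (volume : Measure (Fin 2 → ℝ))
        (τ • Pi.single j 1)).quasiMeasurePreserving.ae hD
      have zero_of : ∀ y, (∀ᵐ t : ℝ, F (Jm (y, t)) = 0) → N y = 0 := fun y hy => by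
        rw [hN]
        exact integral_eq_zero_of_ae (hy.mono fun t ht => by simp [ht])
      filter_upwards [hD, hD'] with y h1 h2
      have hpos : 0 ≤ m⁻¹ * ∫ t : ℝ, (F (Jm (y + τ • Pi.single j 1, t)) - F (Jm (y, t))) ^ 2 :=
        mul_nonneg (inv_nonneg.2 hm0.le) (integral_nonneg fun t => sq_nonneg _)
      rcases h1 with ⟨_, h1⟩ | h1 <;> rcases h2 with ⟨_, h2⟩ | h2
      · have a1 : y ∉ S := by
          rw [hS, Set.mem_ofPred_eq, zero_of _ h1]; exact not_le.2 hm0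
        have a2 : y + τ • Pi.single j 1 ∉ S := by
          rw [hS, Set.mem_ofPred_eq, zero_of _ h2]; exact not_le.2 hm0
        rw [hθ, Set.indicator_of_notMem a1, Set.indicator_of_notMem a2]; simpa using hpos
      · have a1 : y ∉ S := by
          rw [hS, Set.mem_ofPred_eq, zero_of _ h1]; exact not_le.2 hm0
        have a2 : y + τ • Pi.single j 1 ∈ S := h2
        rw [hθ, Set.indicator_of_notMem a1, Set.indicator_of_mem a2, sub_zero, abs_one,
          inv_mul_eq_div, one_le_div hm0]
        refine h2.trans (le_of_eq (integral_congr_ae (h1.mono fun t ht => ?_)))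
        simp only [hF, ht, sub_zero]
      · have a1 : y ∈ S := h1
        have a2 : y + τ • Pi.single j 1 ∉ S := by
          rw [hS, Set.mem_ofPred_eq, zero_of _ h2]; exact not_le.2 hm0
        rw [hθ, Set.indicator_of_mem a1, Set.indicator_of_notMem a2, zero_sub, abs_neg, abs_one,
          inv_mul_eq_div, one_le_div hm0]
        refine h1.trans (le_of_eq (integral_congr_ae (h2.mono fun t ht => ?_)))
        simp only [hF, ht, zero_sub, neg_sq]
      · have a1 : y ∈ S := h1
        have a2 : y + τ • Pi.single j 1 ∈ S := h2
        rw [hθ, Set.indicator_of_mem a1, Set.indicator_of_mem a2]; simpa using hpos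
    refine (integral_mono_ae ((hθi.comp_add_right _).sub hθi).abs (i4.const_mul m⁻¹) pw).trans ?_
    rw [integral_const_mul]
    have := mul_le_mul_of_nonneg_left i2 (inv_nonneg.2 hm0.le)
    refine this.trans (le_of_eq ?_)
    field_simp
  have hθz : ∀ᵐ y, θ y = 0 := invar_zero hθi hθ0 (e := Pi.single 0 1) (by simp) (hinv 0)
  -- almost every slice is constant
  have hcst : ∀ᵐ y : Fin 2 → ℝ, ∃ a, ∀ᵐ t : ℝ, V (Jm (y, t)) = a := by
    filter_upwards [hD, hθz] with y h1 h2
    rcases h1 with h1 | h1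
    · exact h1.1
    · rw [hθ, Set.indicator_of_mem (show y ∈ S from h1)] at h2; exact absurd h2 one_ne_zero
  have hi : ∀ τ : ℝ, ∀ᵐ x, V (x + τ • ee 0) = V x := by
    intro τ
    have hms : MeasurableSet {x : Ed 3 | V (x + τ • ee 0) = V x} :=
      measurableSet_eq_fun (hs.measurable.comp (measurable_id.add_const _)) hs.measurable
    have h1 : ∀ᵐ p : (Fin 2 → ℝ) × ℝ, V (Jm p + τ • ee 0) = V (Jm p) := by
      rw [show (volume : Measure ((Fin 2 → ℝ) × ℝ)) = Measure.prod volume volume from rfl]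
      refine (Measure.ae_prod_iff_ae_ae (p := fun p => V (Jm p + τ • ee 0) = V (Jm p))
        (Jm.measurable hms)).2 ?_
      filter_upwards [hcst] with y ⟨a, ha⟩
      have ha' := (measurePreserving_add_right (volume : Measure ℝ) τ).quasiMeasurePreserving.ae ha
      filter_upwards [ha, ha'] with t t1 t2
      rw [Jm_add_zero, t1, t2]
    rw [← Jm_mp.map_eq]
    exact (ae_map_iff Jm.measurable.aemeasurable hms).2 h1
  exact rig hs (fun i τ => (hsh i).choose_spec τ |>.1) hi hη

/-! ### Parametrix and interior estimates -/

/-- A radial kernel `ρ` of mass one for which `z ρ(z)` is the gradient of a compactly supported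
function. -/
lemma kernel_exists : ∃ q ρ : Ed 3 → ℂ, TF q ∧ TF ρ ∧ (∀ z, 2 ≤ ‖z‖ → q z = 0 ∧ ρ z = 0) ∧
    (∫ z, ρ z = 1) ∧ ∀ i z, pd q i z = ρ z * (z i : ℂ) := by
  let b : ContDiffBump (0 : ℝ) := ⟨1, 2, by norm_num, by norm_num⟩
  have hb0 : ∀ s : ℝ, 2 ≤ s → b s = 0 := fun s hs => by
    apply b.zero_of_le_dist
    rw [Real.dist_eq, sub_zero]; exact hs.trans (le_abs_self s)
  set B : ℝ → ℝ := fun s => ∫ t in (2:ℝ)..s, b t with hB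
  have dB : ∀ s, HasDerivAt B (b s) s := fun s =>
    intervalIntegral.integral_hasDerivAt_right (b.continuous.intervalIntegrable _ _)
      b.continuous.aestronglyMeasurable.stronglyMeasurableAtFilter b.continuous.continuousAt
  have hBs : ContDiff ℝ (⊤ : ℕ∞) B := by
    rw [contDiff_infty_iff_deriv]
    refine ⟨fun s => (dB s).differentiableAt, ?_⟩
    rw [show deriv B = b from funext fun s => (dB s).deriv]
    exact b.contDiff
  have hB0 : ∀ s : ℝ, 2 ≤ s → B s = 0 := fun s hs => by
    rw [hB]
    refine (intervalIntegral.integral_congr fun t ht => ?_).trans intervalIntegral.integral_zero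
    rw [Set.uIcc_of_le hs] at ht
    exact hb0 t ht.1
  have hsq : ContDiff ℝ (⊤ : ℕ∞) fun z : Ed 3 => ‖z‖ ^ 2 := contDiff_norm_sq ℝ
  have hge : ∀ z : Ed 3, 2 ≤ ‖z‖ → 2 ≤ ‖z‖ ^ 2 := fun z hz => by nlinarith
  set p : Ed 3 → ℝ := fun z => b (‖z‖ ^ 2) with hp
  have hps : ContDiff ℝ (⊤ : ℕ∞) p := b.contDiff.comp hsq
  have hpc : HasCompactSupport p := HasCompactSupport.intro (isCompact_closedBall 0 2) fun z hz => by
    rw [mem_closedBall, dist_zero_right, not_le] at hz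
    exact hb0 _ (hge z hz.le)
  have hpi : 0 < ∫ z, p z := by
    refine (integral_pos_iff_support_of_nonneg (fun z => b.nonneg) (hps.continuous.integrable_of_hasCompactSupport hpc)).2 ?_
    have : (Function.support p).Nonempty := ⟨0, by
      have : b 0 = 1 := b.one_of_mem_closedBall (by simpa using b.rIn_pos.le)
      simp [hp, this]⟩
    exact (hps.continuous.isOpen_support).measure_pos _ this
  set κ : ℝ := (∫ z, p z)⁻¹ with hκ
  refine ⟨fun z => ((κ / 2 * B (‖z‖ ^ 2) : ℝ) : ℂ), fun z => ((κ * p z : ℝ) : ℂ), ⟨?_, ?_⟩, ⟨?_, ?_⟩, ?_, ?_, ?_⟩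
  · exact Complex.ofRealCLM.contDiff.comp (contDiff_const.mul (hBs.comp hsq))
  · refine HasCompactSupport.intro (isCompact_closedBall 0 2) fun z hz => ?_
    rw [mem_closedBall, dist_zero_right, not_le] at hz
    rw [hB0 _ (hge z hz.le)]; simp
  · exact Complex.ofRealCLM.contDiff.comp (contDiff_const.mul hps)
  · exact (hpc.mul_left (f := fun _ => κ)).comp_left (g := fun r : ℝ => (r : ℂ)) (by simp)
  · intro z hz
    simp [hB0 _ (hge z hz), hp, hb0 _ (hge z hz)]
  · rw [integral_complex_ofReal, integral_const_mul, inv_mul_cancel₀ hpi.ne']; simp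
  · intro i z
    have h1 : HasFDerivAt (fun z : Ed 3 => ‖z‖ ^ 2) (2 • innerSL ℝ z) z := (hasStrictFDerivAt_norm_sq z).hasFDerivAt
    have h2 := ((dB (‖z‖ ^ 2)).comp_hasFDerivAt z h1).const_mul (κ / 2)
    have h3 := Complex.ofRealCLM.hasFDerivAt.comp z h2
    unfold pd
    rw [show (fun z : Ed 3 => ((κ / 2 * B (‖z‖ ^ 2) : ℝ) : ℂ)) = Complex.ofRealCLM ∘ (fun z : Ed 3 => κ / 2 * (B ∘ fun z => ‖z‖ ^ 2) z) from rfl, h3.fderiv]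
    have h4 : inner ℝ z (EuclideanSpace.single i (1:ℝ)) = z i := by
      rw [EuclideanSpace.inner_single_right]; simp
    simp [hp, h4]
    ring

lemma lap_eq (w : Ed 3 → ℂ) (x : Ed 3) : lap w x = ∑ i, pd (pd w i) i x := rfl

lemma pd_comp_sub {w : Ed 3 → ℂ} (hw : ContDiff ℝ 1 w) (x : Ed 3) (r : ℝ) (i : Fin 3) (z : Ed 3) :
    pd (fun z => w (x - r • z)) i z = -(r : ℂ) * pd w i (x - r • z) := by
  have h1 : HasFDerivAt (fun z : Ed 3 => x - r • z) (-(r • ContinuousLinearMap.id ℝ (Ed 3))) z :=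
    ((hasFDerivAt_id z).const_smul r).const_sub x
  have h2 := (hw.differentiable (by simp) (x - r • z)).hasFDerivAt.comp z h1
  unfold pd
  rw [show (fun z => w (x - r • z)) = w ∘ (fun z : Ed 3 => x - r • z) from rfl, h2.fderiv]
  simp

/-- Local representation of a smooth function through its average and its Laplacian. -/
lemma parametrix {q ρ : Ed 3 → ℂ} (hq : TF q) (hρ : TF ρ) (h1 : ∫ z, ρ z = 1)
    (hqρ : ∀ i z, pd q i z = ρ z * (z i : ℂ)) {w : Ed 3 → ℂ} (hw : ContDiff ℝ (⊤ : ℕ∞) w) (x : Ed 3) :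
    w x = (∫ z, ρ z * w (x - z)) + ∫ r in Set.Ioc (0:ℝ) 1, (r : ℂ) * ∫ z, q z * lap w (x - r • z) := by
  have hw1 : ContDiff ℝ 1 w := hw.of_le (by exact_mod_cast le_top)
  have hwc := hw.continuous
  have hρc := hρ.cont
  have hpd : ∀ i, Continuous (pd w i) := fun i => (contDiff_pd hw i).continuous
  set Φ : Ed 3 → ℝ → ℂ := fun z r => ∑ i, pd q i z * pd w i (x - r • z) with hΦ
  have hΦc : Continuous (Function.uncurry Φ) := by
    have : ∀ i, Continuous (pd q i) := fun i => (hq.pd i).cont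
    simp only [hΦ, Function.uncurry_def]
    fun_prop
  have e1 : ∀ z, ρ z * (w x - w (x - z)) = ∫ r in Set.Ioc (0:ℝ) 1, Φ z r := by
    intro z
    have hd : ∀ r : ℝ, HasDerivAt (fun r : ℝ => -(ρ z * w (x - r • z))) (Φ z r) r := fun r => by
      have k1 : HasDerivAt (fun r : ℝ => x - r • z) (-z) r := by
        simpa using ((hasDerivAt_id r).smul_const z).const_sub x
      have k2 := (hw1.differentiable (by simp) (x - r • z)).hasFDerivAt.comp_hasDerivAt r k1
      refine (k2.const_mul (ρ z)).neg.congr_deriv ?_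
      rw [fderiv_apply_sum, hΦ]
      simp only [hqρ, PiLp.neg_apply, Finset.mul_sum]
      push_cast
      rw [← Finset.sum_neg_distrib]
      exact Finset.sum_congr rfl fun i _ => by ring
    have hc : Continuous (Φ z) := hΦc.comp (Continuous.prodMk_right z)
    rw [← intervalIntegral.integral_of_le zero_le_one,
      intervalIntegral.integral_eq_sub_of_hasDerivAt (fun r _ => hd r) (hc.intervalIntegrable _ _)]
    simp; ring
  have e2 : ∀ r : ℝ, ∫ z, Φ z r = (r : ℂ) * ∫ z, q z * lap w (x - r • z) := by
    intro r
    have hcd : ∀ i, ContDiff ℝ (⊤ : ℕ∞) fun z => pd w i (x - r • z) := fun i =>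
      (contDiff_pd hw i).comp (contDiff_const.sub (contDiff_id.const_smul r))
    have hi : ∀ i, Integrable fun z => pd q i z * pd w i (x - r • z) := fun i =>
      (((hq.pd i).cont).mul (hcd i).continuous).integrable_of_hasCompactSupport (hq.pd i).2.mul_right
    simp only [hΦ]
    rw [integral_finsetSum _ fun i _ => hi i]
    have hi2 : ∀ i, Integrable fun z => q z * pd (pd w i) i (x - r • z) := fun i =>
      ((hq.cont).mul ((contDiff_pd (contDiff_pd hw i) i).continuous.comp
        (continuous_const.sub (continuous_id.const_smul r)))).integrable_of_hasCompactSupport hq.2.mul_right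
    simp only [lap_eq, Finset.mul_sum]
    rw [integral_finsetSum _ fun i _ => hi2 i, Finset.mul_sum]
    refine Finset.sum_congr rfl fun i _ => ?_
    have k1 := ibp (f := fun z => pd w i (x - r • z)) (g := q) ((hcd i).of_le (by exact_mod_cast le_top)) hq.c1 hq.2 i
    simp only [mul_comm (pd q i _)]
    rw [k1, ← integral_neg, ← integral_const_mul]
    refine integral_congr_ae (Eventually.of_forall fun z => ?_)
    simp only [pd_comp_sub ((contDiff_pd hw i).of_le (by exact_mod_cast le_top))]
    ring
  have i1 : Integrable fun z => ρ z * w (x - z) :=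
    (hρc.mul (by fun_prop)).integrable_of_hasCompactSupport hρ.2.mul_right
  have i2 : Integrable fun z => ρ z * w x := hρ.integrable.mul_const _
  have e3 : (∫ z, ρ z * (w x - w (x - z))) = w x - ∫ z, ρ z * w (x - z) := by
    simp only [mul_sub]
    rw [integral_sub i2 i1, integral_mul_const, h1, one_mul]
  have hI : Integrable (Function.uncurry Φ) (volume.prod (volume.restrict (Set.Ioc (0:ℝ) 1))) := by
    have hK : IsCompact (tsupport q ×ˢ Set.Icc (0:ℝ) 1) := hq.2.isCompact.prod isCompact_Icc
    have k1 : IntegrableOn (Function.uncurry Φ) (tsupport q ×ˢ Set.Icc (0:ℝ) 1) (volume.prod volume) :=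
      hΦc.continuousOn.integrableOn_compact hK
    have k2 := k1.mono_set (Set.prod_mono_right (s := tsupport q) (Set.Ioc_subset_Icc_self (a := (0:ℝ)) (b := 1)))
    have k3 : IntegrableOn (Function.uncurry Φ) (tsupport q ×ˢ Set.univ) (volume.prod (volume.restrict (Set.Ioc (0:ℝ) 1))) := by
      rw [IntegrableOn, ← Measure.prod_restrict, Measure.restrict_univ, Measure.prod_restrict]
      exact k2
    refine (integrableOn_iff_integrable_of_support_subset ?_).1 k3
    intro p hp
    refine ⟨?_, trivial⟩
    by_contra hn
    refine hp ?_
    have : ∀ i, pd q i p.1 = 0 := fun i => image_eq_zero_of_notMem_tsupport fun h => hn (by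
      have hs : tsupport (pd q i) ⊆ tsupport q := by
        refine closure_minimal ?_ (isClosed_tsupport q)
        intro y hy
        by_contra hny
        refine hy ?_
        have := (notMem_tsupport_iff_eventuallyEq.1 hny)
        unfold pd
        rw [this.fderiv_eq]; simp
      exact hs h)
    simp [Function.uncurry_def, hΦ, this]
  rw [← sub_eq_iff_eq_add', ← e3]
  simp only [e1, ← e2]
  exact integral_integral_swap hI

/-- Supremum bound for the averages in the parametrix formula. -/
lemma conv_sup {a h : Ed 3 → ℂ} (ha : Integrable a) (ha0 : ∀ z, 2 < ‖z‖ → a z = 0) {M : ℝ} {x : Ed 3}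
    (hM : ∀ y ∈ closedBall x 2, ‖h y‖ ≤ M) {r : ℝ} (h0 : 0 ≤ r) (hr : r ≤ 1) :
    ‖∫ z, a z * h (x - r • z)‖ ≤ (∫ z, ‖a z‖) * M := by
  rw [← integral_mul_const]
  refine norm_integral_le_of_norm_le (ha.norm.mul_const M) (Eventually.of_forall fun z => ?_)
  rw [norm_mul]
  by_cases hz : 2 < ‖z‖
  · simp [ha0 z hz]
  · refine mul_le_mul_of_nonneg_left (hM _ ?_) (norm_nonneg _)
    rw [mem_closedBall, dist_eq_norm, sub_sub_cancel_left, norm_neg, norm_smul, Real.norm_of_nonneg h0]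
    push Not at hz
    nlinarith [norm_nonneg z]

/-- `L²` bound for the averages in the parametrix formula; the factor `r^{-1/2}` is integrable at zero in
dimension three. -/
lemma conv_L2 {a h : Ed 3 → ℂ} (ha : TF a) (ha0 : ∀ z, 2 ≤ ‖z‖ → a z = 0) (hh : Continuous h) (x : Ed 3)
    {r : ℝ} (h0 : 0 < r) (hr : r ≤ 1) :
    ‖(r : ℂ) * ∫ z, a z * h (x - r • z)‖ ≤
      (Real.sqrt r)⁻¹ * ((∫ z, ‖a z‖ ^ 2) + ∫ y in closedBall x 2, ‖h y‖ ^ 2) := by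
  have hs : 0 < Real.sqrt r := Real.sqrt_pos.2 h0
  set s := Real.sqrt r with hsd
  have hsr : r = s ^ 2 := (Real.sq_sqrt h0.le).symm
  set g : Ed 3 → ℝ := (closedBall x 2).indicator fun y => ‖h y‖ ^ 2 with hg
  have hgi : Integrable g := by
    rw [hg, integrable_indicator_iff isClosed_closedBall.measurableSet]
    exact (hh.norm.pow 2).continuousOn.integrableOn_compact (isCompact_closedBall x 2)
  have hgi2 : Integrable fun z => g (x - r • z) :=
    (hgi.comp_sub_left x).comp_smul h0.ne'
  have e1 : ∫ z, g (x - r • z) = (r ^ 3)⁻¹ * ∫ y in closedBall x 2, ‖h y‖ ^ 2 := by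
    rw [Measure.integral_comp_smul volume (fun y => g (x - y)) r, integral_sub_left_eq_self g volume x,
      hg, integral_indicator isClosed_closedBall.measurableSet]
    simp [abs_of_pos h0]
  have e2 : ∀ z, ‖a z * h (x - r • z)‖ ≤ s⁻¹ ^ 3 * ‖a z‖ ^ 2 + s ^ 3 * g (x - r • z) := by
    intro z
    rw [norm_mul]
    by_cases hz : 2 ≤ ‖z‖
    · rw [ha0 z hz]
      have : 0 ≤ g (x - r • z) := Set.indicator_nonneg (fun _ _ => by positivity) _
      simp; positivity
    · have hm : x - r • z ∈ closedBall x 2 := by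
        rw [mem_closedBall, dist_eq_norm, sub_sub_cancel_left, norm_neg, norm_smul, Real.norm_of_nonneg h0.le]
        push Not at hz
        nlinarith [norm_nonneg z]
      rw [hg, Set.indicator_of_mem hm]
      set A := ‖a z‖
      set B := ‖h (x - r • z)‖
      have hA : 0 ≤ A := norm_nonneg _
      have hB : 0 ≤ B := norm_nonneg _
      have hs3 : 0 < s ^ 3 := by positivity
      rw [inv_pow]
      have k : (s ^ 3)⁻¹ * s ^ 3 = 1 := inv_mul_cancel₀ hs3.ne'
      have k2 : 0 < (s ^ 3)⁻¹ := by positivity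
      have k3 := mul_nonneg k2.le (sq_nonneg (A - s ^ 3 * B))
      have k4 : (s ^ 3)⁻¹ * (A - s ^ 3 * B) ^ 2 = (s ^ 3)⁻¹ * A ^ 2 - 2 * A * B + s ^ 3 * B ^ 2 := by
        field_simp
        ring
      nlinarith [mul_nonneg hA hB]
  have e3 := norm_integral_le_of_norm_le ((ha.int_normsq.const_mul (s⁻¹ ^ 3)).add (hgi2.const_mul (s ^ 3)))
    (Eventually.of_forall e2)
  simp only [Pi.add_apply] at e3
  rw [integral_add (ha.int_normsq.const_mul (s⁻¹ ^ 3)) (hgi2.const_mul (s ^ 3)), integral_const_mul,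
    integral_const_mul, e1] at e3
  rw [norm_mul, Complex.norm_real, Real.norm_of_nonneg h0.le]
  refine (mul_le_mul_of_nonneg_left e3 h0.le).trans (le_of_eq ?_)
  rw [hsr]
  field_simp

lemma pd_lap {w : Ed 3 → ℂ} (hw : ContDiff ℝ (⊤ : ℕ∞) w) (i : Fin 3) (x : Ed 3) :
    lap (pd w i) x = pd (lap w) i x := by
  have h2 : ∀ j, ContDiff ℝ (⊤ : ℕ∞) (pd (pd w j) j) := fun j => contDiff_pd (contDiff_pd hw j) j
  have e : pd (lap w) i x = ∑ j, pd (pd (pd w j) j) i x := by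
    rw [show lap w = fun x => ∑ j, pd (pd w j) j x from rfl]
    have := congrArg (fun L => L (EuclideanSpace.single i (1:ℝ))) (fderiv_fun_sum (u := Finset.univ)
      (A := fun j => pd (pd w j) j) (x := x) fun j _ => ((h2 j).differentiable (by simp)) x)
    refine Eq.trans this ?_
    simp only [ContinuousLinearMap.coe_sum', Finset.sum_apply]
    rfl
  rw [e, lap_eq]
  refine Finset.sum_congr rfl fun j _ => ?_
  rw [show pd (pd w i) j = pd (pd w j) i from funext fun y => pd_comm hw i j y,
    pd_comm (contDiff_pd hw j) i j]

lemma contDiff_lap {w : Ed 3 → ℂ} (hw : ContDiff ℝ (⊤ : ℕ∞) w) : ContDiff ℝ (⊤ : ℕ∞) (lap w) := by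
  rw [show lap w = fun x => ∑ j, pd (pd w j) j x from rfl]
  exact ContDiff.sum fun j _ => contDiff_pd (contDiff_pd hw j) j

/-- Interior estimates for smooth functions in terms of the Laplacian: values are controlled by local
`L²` norms, first derivatives by local suprema. -/
lemma interior_est : ∃ C : ℝ, 0 ≤ C ∧ ∀ w : Ed 3 → ℂ, ContDiff ℝ (⊤ : ℕ∞) w → ∀ x,
    (‖w x‖ ≤ C * (1 + (∫ y in closedBall x 2, ‖w y‖ ^ 2) + ∫ y in closedBall x 2, ‖lap w y‖ ^ 2)) ∧
    ∀ M, (∀ y ∈ closedBall x 2, ‖w y‖ ≤ M) → (∀ y ∈ closedBall x 2, ‖lap w y‖ ≤ M) →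
      ∀ i, ‖pd w i x‖ ≤ C * M := by
  obtain ⟨q, ρ, hq, hρ, h0, h1, hqρ⟩ := kernel_exists
  set S : ℝ := ∫ r in Set.Ioc (0:ℝ) 1, (Real.sqrt r)⁻¹ with hS
  have hS0 : 0 ≤ S := integral_nonneg fun r => by positivity
  have hSi : IntegrableOn (fun r : ℝ => (Real.sqrt r)⁻¹) (Set.Ioc (0:ℝ) 1) := by
    have := (intervalIntegral.intervalIntegrable_rpow' (a := 0) (b := 1) (r := -(1/2)) (by norm_num)).1
    refine this.congr_fun (fun r hr => ?_) measurableSet_Ioc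
    simp only [Real.rpow_neg hr.1.le, Real.sqrt_eq_rpow]
  set A : ℝ := ∫ z, ‖ρ z‖ ^ 2 with hA
  set B : ℝ := ∫ z, ‖q z‖ ^ 2 with hB
  have hA0 : 0 ≤ A := integral_nonneg fun r => by positivity
  have hB0 : 0 ≤ B := integral_nonneg fun r => by positivity
  set D : Fin 3 → ℝ := fun i => (∫ z, ‖pd ρ i z‖) + ∫ z, ‖pd q i z‖ with hD
  have hD0 : ∀ i, 0 ≤ D i := fun i => by
    have a1 : 0 ≤ ∫ z, ‖pd ρ i z‖ := integral_nonneg fun r => norm_nonneg _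
    have a2 : 0 ≤ ∫ z, ‖pd q i z‖ := integral_nonneg fun r => norm_nonneg _
    simp only [hD]; positivity
  have hDs : ∀ i, D i ≤ ∑ j, D j := fun i => Finset.single_le_sum (fun j _ => hD0 j) (Finset.mem_univ i)
  have hDn : 0 ≤ ∑ j, D j := Finset.sum_nonneg fun j _ => hD0 j
  refine ⟨(1 + A + S * (1 + B)) + ∑ i, D i, by positivity, fun w hw x => ⟨?_, ?_⟩⟩
  · set a : ℝ := ∫ y in closedBall x 2, ‖w y‖ ^ 2 with ha
    set b : ℝ := ∫ y in closedBall x 2, ‖lap w y‖ ^ 2 with hb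
    have ha0 : 0 ≤ a := integral_nonneg fun r => by positivity
    have hb0 : 0 ≤ b := integral_nonneg fun r => by positivity
    have k1 : ‖∫ z, ρ z * w (x - z)‖ ≤ A + a := by
      have := conv_L2 hρ (fun z hz => (h0 z hz).2) hw.continuous x one_pos le_rfl
      simpa using this
    have k2 : ‖∫ r in Set.Ioc (0:ℝ) 1, (r : ℂ) * ∫ z, q z * lap w (x - r • z)‖ ≤ S * (B + b) := by
      rw [hS, ← integral_mul_const]
      refine norm_integral_le_of_norm_le (hSi.mul_const _) ?_
      filter_upwards [ae_restrict_mem measurableSet_Ioc] with r hr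
      exact conv_L2 hq (fun z hz => (h0 z hz).1) (contDiff_lap hw).continuous x hr.1 hr.2
    have k3 := parametrix hq hρ h1 hqρ hw x
    have k4 : ‖w x‖ ≤ (A + a) + S * (B + b) := by
      rw [k3]; exact (norm_add_le _ _).trans (add_le_add k1 k2)
    refine k4.trans ?_
    nlinarith [mul_nonneg hA0 ha0, mul_nonneg hA0 hb0, mul_nonneg hS0 hB0, mul_nonneg hS0 ha0, mul_nonneg hS0 hb0,
      mul_nonneg (mul_nonneg hS0 hB0) ha0, mul_nonneg (mul_nonneg hS0 hB0) hb0, mul_nonneg hDn ha0, mul_nonneg hDn hb0]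
  · intro M hM1 hM2 i
    have hM0 : 0 ≤ M := (norm_nonneg _).trans (hM1 x (mem_closedBall_self (by norm_num)))
    have hwi := contDiff_pd hw i
    -- integration by parts moves the derivative to the kernel
    have move : ∀ (a : Ed 3 → ℂ), TF a → ∀ h : Ed 3 → ℂ, ContDiff ℝ (⊤ : ℕ∞) h → ∀ r : ℝ,
        (r : ℂ) * ∫ z, a z * pd h i (x - r • z) = ∫ z, pd a i z * h (x - r • z) := by
      intro a ha h hh r
      have hc : ContDiff ℝ (⊤ : ℕ∞) fun z => h (x - r • z) :=
        hh.comp (contDiff_const.sub (contDiff_id.const_smul r))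
      have k1 := ibp (f := fun z => h (x - r • z)) (g := a) (hc.of_le (by exact_mod_cast le_top)) ha.c1 ha.2 i
      simp only [mul_comm (pd a i _)]
      rw [k1, ← integral_neg, ← integral_const_mul]
      refine integral_congr_ae (Eventually.of_forall fun z => ?_)
      simp only [pd_comp_sub (hh.of_le (by exact_mod_cast le_top))]
      ring
    have pq : ∀ z, 2 < ‖z‖ → pd q i z = 0 := fun z hz => by rw [hqρ, (h0 z hz.le).2, zero_mul]
    have pρ : ∀ z, 2 < ‖z‖ → pd ρ i z = 0 := fun z hz => by
      have : ρ =ᶠ[𝓝 z] fun _ => 0 := by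
        filter_upwards [(isOpen_lt continuous_const continuous_norm).mem_nhds hz] with y hy
        exact (h0 y (le_of_lt hy)).2
      unfold pd; rw [this.fderiv_eq]; simp
    have k3 := parametrix hq hρ h1 hqρ hwi x
    simp only [pd_lap hw] at k3
    have m1 := move ρ hρ w hw 1
    simp only [one_smul, ofReal_one, one_mul] at m1
    rw [m1] at k3
    simp only [move q hq _ (contDiff_lap hw)] at k3
    have b1 : ‖∫ z, pd ρ i z * w (x - z)‖ ≤ (∫ z, ‖pd ρ i z‖) * M := by
      have := conv_sup (hρ.pd i).integrable pρ hM1 zero_le_one le_rfl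
      simpa using this
    have b2 : ‖∫ r in Set.Ioc (0:ℝ) 1, ∫ z, pd q i z * lap w (x - r • z)‖ ≤ (∫ z, ‖pd q i z‖) * M := by
      have := norm_setIntegral_le_of_norm_le_const (μ := volume) (s := Set.Ioc (0:ℝ) 1)
        (f := fun r => ∫ z, pd q i z * lap w (x - r • z)) (C := (∫ z, ‖pd q i z‖) * M) (by simp)
        (fun r hr => conv_sup (hq.pd i).integrable pq hM2 hr.1.le hr.2)
      simpa using this
    rw [k3]
    refine (norm_add_le _ _).trans ((add_le_add b1 b2).trans ?_)
    rw [← add_mul]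
    refine mul_le_mul_of_nonneg_right ?_ hM0
    have := hDs i
    simp only [hD] at this ⊢
    have : 0 ≤ 1 + A + S * (1 + B) := by positivity
    linarith

/-! ### Elliptic regularity -/

/-- Convolution of a test function with a locally integrable function. -/
def cv (a u : Ed 3 → ℂ) : Ed 3 → ℂ := convolution a u (ContinuousLinearMap.mul ℝ ℂ) volume

lemma cv_eq (a u : Ed 3 → ℂ) (x : Ed 3) : cv a u x = ∫ y, a (x - y) * u y := by
  rw [cv, convolution_eq_swap]; rfl

lemma cv_smooth {a u : Ed 3 → ℂ} (ha : TF a) (hu : LocallyIntegrable u) :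
    ContDiff ℝ (⊤ : ℕ∞) (cv a u) := ha.2.contDiff_convolution_left _ ha.1 hu

lemma cv_pd {a u : Ed 3 → ℂ} (ha : TF a) (hu : LocallyIntegrable u) (i : Fin 3) :
    pd (cv a u) i = cv (pd a i) u := by
  funext x
  have h1 := (ha.2.hasFDerivAt_convolution_left (ContinuousLinearMap.mul ℝ ℂ) ha.c1 hu x).fderiv
  unfold pd cv
  rw [h1, convolution_def, convolution_def, ContinuousLinearMap.integral_apply]
  · rfl
  · exact ((ha.2.fderiv (𝕜 := ℝ)).convolutionExists_left _
      (ha.c1.continuous_fderiv one_ne_zero) hu x)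

/-- The mollifier as a complex valued test function. -/
def rhoC (k : ℕ) : Ed 3 → ℂ := fun z => (rho k z : ℂ)

lemma rhoC_TF (k : ℕ) : TF (rhoC k) :=
  ⟨Complex.ofRealCLM.contDiff.comp (rho_smooth k), (rho_hcs k).comp_left (g := fun r : ℝ => (r : ℂ)) (by simp)⟩

lemma ml_cv (k : ℕ) (u : Ed 3 → ℂ) : ml k u = cv (rhoC k) u := by
  funext x
  rw [ml_eq', cv_eq]; simp [rhoC]

lemma ml_smooth (k : ℕ) {u : Ed 3 → ℂ} (hu : LocallyIntegrable u) : ContDiff ℝ (⊤ : ℕ∞) (ml k u) := by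
  rw [ml_cv]; exact cv_smooth (rhoC_TF k) hu

lemma TF.refl {a : Ed 3 → ℂ} (ha : TF a) (x : Ed 3) : TF fun y => a (x - y) :=
  ⟨ha.1.comp (contDiff_const.sub contDiff_id), ha.2.comp_homeomorph (Homeomorph.subLeft x)⟩

lemma pd_refl {a : Ed 3 → ℂ} (ha : TF a) (x : Ed 3) (i : Fin 3) :
    _root_.pd (fun y => a (x - y)) i = fun y => -_root_.pd a i (x - y) := by
  funext y
  simpa using pd_comp_sub ha.c1 x 1 i y

lemma lap_refl {a : Ed 3 → ℂ} (ha : TF a) (x y : Ed 3) :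
    lap (fun y => a (x - y)) y = lap a (x - y) := by
  rw [lap_eq, lap_eq]
  refine Finset.sum_congr rfl fun i _ => ?_
  rw [pd_refl ha]
  have : (fun y => -pd a i (x - y)) = fun y => (-1 : ℂ) * pd a i (x - y) := by funext; ring
  rw [this, pd_cmul (-1) (((ha.pd i).refl x).diff _), pd_refl (ha.pd i)]
  simp

/-- `Δu = f` in the sense of distributions. -/
def WLap (u f : Ed 3 → ℂ) : Prop := ∀ φ, TF φ → ∫ x, u x * lap φ x = ∫ x, f x * φ x

lemma lap_ml (k : ℕ) {u f : Ed 3 → ℂ} (hu : LocallyIntegrable u) (h : WLap u f) :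
    lap (ml k u) = ml k f := by
  funext x
  rw [ml_cv, ml_cv, lap_eq]
  have ha := rhoC_TF k
  simp only [cv_pd ha hu, cv_pd (ha.pd _) hu]
  have hi : ∀ i, Integrable fun y => pd (pd (rhoC k) i) i (x - y) * u y := fun i =>
    by
    have := loc_mul hu (((ha.pd i).pd i).refl x).cont (((ha.pd i).pd i).refl x).2
    simpa only [mul_comm] using this
  simp only [cv_eq]
  rw [← integral_finsetSum _ fun i _ => hi i]
  have := h _ (ha.refl x)
  simp only [lap_refl ha] at this
  rw [show (∫ y, rhoC k (x - y) * f y) = ∫ y, f y * rhoC k (x - y) by simp only [mul_comm], ← this]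
  refine integral_congr_ae (Eventually.of_forall fun y => ?_)
  simp only [lap_eq]
  rw [← Finset.sum_mul, mul_comm]

lemma ml_ae {u : Ed 3 → ℂ} (hu : LocallyIntegrable u) :
    ∀ᵐ x, Tendsto (fun k => ml k u x) atTop (𝓝 (u x)) :=
  ContDiffBump.ae_convolution_tendsto_right_of_locallyIntegrable (φ := bmp) (K := 2)
    (by simpa [bmp] using hk_tendsto) (Eventually.of_forall fun k => by simp [bmp]; linarith) hu

lemma ml_dist (k : ℕ) {u : Ed 3 → ℂ} (hu : LocallyIntegrable u) {x : Ed 3} {ε : ℝ}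
    (h : ∀ y ∈ ball x (hk k), dist (u y) (u x) ≤ ε) : dist (ml k u x) (u x) ≤ ε :=
  (bmp k).dist_normed_convolution_le hu.aestronglyMeasurable h

lemma ml_bound (k : ℕ) {u : Ed 3 → ℂ} {x : Ed 3} {M : ℝ}
    (h : ∀ᵐ y, y ∈ ball x (hk k) → ‖u y‖ ≤ M) : ‖ml k u x‖ ≤ M := by
  rw [ml_eq']
  have hi : Integrable fun y => rho k (x - y) * M := ((rho_integrable k).comp_sub_left x).mul_const M
  refine (norm_integral_le_of_norm_le hi ?_).trans (le_of_eq ?_)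
  · filter_upwards [h] with y hy
    rw [norm_smul, Real.norm_of_nonneg (rho_nonneg k _)]
    by_cases hz : hk k ≤ ‖x - y‖
    · simp [rho_zero hz]
    · refine mul_le_mul_of_nonneg_left (hy ?_) (rho_nonneg k _)
      rw [mem_ball', dist_eq_norm]; exact not_le.1 hz
  · rw [integral_mul_const, integral_sub_left_eq_self (rho k) volume x, rho_int, one_mul]

/-- Mollification does not increase the `L²` norm. -/
lemma ml_sq_bound (k : ℕ) {u : Ed 3 → ℂ} (hu : AEStronglyMeasurable u)
    (hu2 : Integrable fun x => ‖u x‖ ^ 2) (s : Set (Ed 3)) :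
    ∫ x in s, ‖ml k u x‖ ^ 2 ≤ ∫ x, ‖u x‖ ^ 2 := by
  have h1 : Integrable (convolution (rho k) (fun x => ‖u x‖ ^ 2) (ContinuousLinearMap.lsmul ℝ ℝ) volume) :=
    (rho_integrable k).integrable_convolution _ hu2
  have h2 := integral_convolution (ContinuousLinearMap.lsmul ℝ ℝ) (rho_integrable k) hu2 (μ := volume) (ν := volume)
  rw [rho_int] at h2
  simp only [ContinuousLinearMap.lsmul_apply, one_smul] at h2
  have h3 := (rho_integrable k).ae_convolution_exists (ContinuousLinearMap.lsmul ℝ ℝ) hu2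
  rw [← h2]
  have h4 : ∀ᵐ x, ‖ml k u x‖ ^ 2 ≤ convolution (rho k) (fun x => ‖u x‖ ^ 2) (ContinuousLinearMap.lsmul ℝ ℝ) volume x := by
    filter_upwards [h3] with x hx
    rw [ml_eq]
    refine (sq_integral_le ?_ ?_).trans (le_of_eq ?_)
    · have : Mp k ≪ volume := withDensity_absolutelyContinuous _ _
      exact (hu.comp_quasiMeasurePreserving (quasiMeasurePreserving_sub_left volume x)).mono_ac this
    · rw [Mp, integrable_withDensity_iff_integrable_smul' (by have := rho_cont k; fun_prop) (by simp)]
      refine hx.congr (Eventually.of_forall fun y => ?_)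
      simp [ENNReal.toReal_ofReal (rho_nonneg k _)]
    · rw [Mp_integral, convolution_def]; rfl
  have h5 : ∀ x, 0 ≤ convolution (rho k) (fun x => ‖u x‖ ^ 2) (ContinuousLinearMap.lsmul ℝ ℝ) volume x := fun x => by
    rw [convolution_def]
    exact integral_nonneg fun y => mul_nonneg (rho_nonneg k _) (by positivity)
  calc _ ≤ ∫ x in s, convolution (rho k) (fun x => ‖u x‖ ^ 2) (ContinuousLinearMap.lsmul ℝ ℝ) volume x :=
        integral_mono_of_nonneg (Eventually.of_forall fun x => by positivity) h1.integrableOn (ae_restrict_of_ae h4)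
    _ ≤ _ := setIntegral_le_integral h1 (Eventually.of_forall h5)

lemma hk_le (k : ℕ) : hk k ≤ 1 := by
  unfold hk
  rw [div_le_one (by positivity)]
  have : (0:ℝ) ≤ k := Nat.cast_nonneg k
  linarith

lemma ml_congr (k : ℕ) {u v : Ed 3 → ℂ} {x : Ed 3} (h : ∀ y, ‖x - y‖ < hk k → u y = v y) :
    ml k u x = ml k v x := by
  rw [ml_eq', ml_eq']
  refine integral_congr_ae (Eventually.of_forall fun y => ?_)
  by_cases hz : hk k ≤ ‖x - y‖
  · simp [rho_zero hz]
  · simp only [h y (not_le.1 hz)]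

/-- Mollification is bounded in `L²` on balls, uniformly in the scale. -/
lemma ml_ball_sq (k : ℕ) {u : Ed 3 → ℂ} (hu : AEStronglyMeasurable u) {R : ℝ}
    (h2 : IntegrableOn (fun x => ‖u x‖ ^ 2) (closedBall 0 (R + 3))) {x : Ed 3} (hx : x ∈ closedBall (0 : Ed 3) R) :
    ∫ y in closedBall x 2, ‖ml k u y‖ ^ 2 ≤ ∫ y in closedBall 0 (R + 3), ‖u y‖ ^ 2 := by
  have hm : MeasurableSet (closedBall (0 : Ed 3) (R + 3)) := isClosed_closedBall.measurableSet
  set v := (closedBall (0 : Ed 3) (R + 3)).indicator u with hv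
  have e : (fun x => ‖v x‖ ^ 2) = (closedBall (0 : Ed 3) (R + 3)).indicator fun x => ‖u x‖ ^ 2 := by
    funext y
    by_cases hy : y ∈ closedBall (0 : Ed 3) (R + 3)
    · simp only [hv, Set.indicator_of_mem hy]
    · simp [hv, Set.indicator_of_notMem hy]
  have h3 := ml_sq_bound k (hu.indicator hm) (by rw [← hv, e, integrable_indicator_iff hm]; exact h2) (closedBall x 2)
  rw [← hv, e, integral_indicator hm] at h3
  refine le_trans (le_of_eq ?_) h3
  refine setIntegral_congr_fun isClosed_closedBall.measurableSet fun y hy => ?_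
  rw [ml_congr k (v := v)]
  intro z hz
  rw [hv, Set.indicator_of_mem]
  rw [mem_closedBall, dist_zero_right] at hx ⊢
  rw [mem_closedBall, dist_eq_norm] at hy
  have h1 := hk_le k
  have : z = x + (y - x) - (y - z) := by abel
  rw [this]
  linarith [norm_sub_le (x + (y - x)) (y - z), norm_add_le x (y - x)]

/-- A locally square integrable function with locally square integrable distributional Laplacian is
locally bounded. -/
lemma loc_bdd {u f : Ed 3 → ℂ} (hu : LocallyIntegrable u) (hf : LocallyIntegrable f)
    (hu2 : ∀ R, IntegrableOn (fun x => ‖u x‖ ^ 2) (closedBall 0 R))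
    (hf2 : ∀ R, IntegrableOn (fun x => ‖f x‖ ^ 2) (closedBall 0 R)) (h : WLap u f) (R : ℝ) :
    ∃ M, ∀ᵐ x, x ∈ closedBall (0 : Ed 3) R → ‖u x‖ ≤ M := by
  obtain ⟨C, hC, hi⟩ := interior_est
  refine ⟨C * (1 + (∫ y in closedBall 0 (R + 3), ‖u y‖ ^ 2) + ∫ y in closedBall 0 (R + 3), ‖f y‖ ^ 2), ?_⟩
  filter_upwards [ml_ae hu] with x hx hxR
  refine le_of_tendsto' hx.norm fun k => ?_
  have h1 := (hi (ml k u) (ml_smooth k hu) x).1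
  rw [lap_ml k hu h] at h1
  refine h1.trans (mul_le_mul_of_nonneg_left ?_ hC)
  have a := ml_ball_sq k hu.aestronglyMeasurable (hu2 (R + 3)) hxR
  have b := ml_ball_sq k hf.aestronglyMeasurable (hf2 (R + 3)) hxR
  linarith

lemma norm_fderiv_le {w : Ed 3 → ℂ} {x : Ed 3} {D : ℝ} (hD : ∀ i, ‖pd w i x‖ ≤ D) :
    ‖fderiv ℝ w x‖ ≤ 3 * D := by
  have hD0 : 0 ≤ D := (norm_nonneg _).trans (hD 0)
  refine ContinuousLinearMap.opNorm_le_bound _ (by positivity) fun z => ?_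
  rw [fderiv_apply_sum, Fin.sum_univ_three]
  have hz : ∀ i, ‖(z i : ℂ) * pd w i x‖ ≤ ‖z‖ * D := fun i => by
    rw [norm_mul, Complex.norm_real]
    exact mul_le_mul (PiLp.norm_apply_le z i) (hD i) (norm_nonneg _) (norm_nonneg _)
  refine (norm_add₃_le).trans ?_
  linarith [hz 0, hz 1, hz 2]

lemma mem_ball_aux {R : ℝ} {x y : Ed 3} {r : ℝ} (hx : x ∈ closedBall (0 : Ed 3) R) (hy : y ∈ closedBall x r) :
    y ∈ closedBall (0 : Ed 3) (R + r) := by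
  rw [mem_closedBall] at *
  linarith [dist_triangle y x 0]

/-- A locally bounded function with locally bounded distributional Laplacian has a continuous
representative. -/
lemma rep_cont {u f : Ed 3 → ℂ} (hu : LocallyIntegrable u) 
    (hub : ∀ R, ∃ M, ∀ᵐ x, x ∈ closedBall (0 : Ed 3) R → ‖u x‖ ≤ M)
    (hfb : ∀ R, ∃ M, ∀ᵐ x, x ∈ closedBall (0 : Ed 3) R → ‖f x‖ ≤ M) (h : WLap u f) :
    ∃ v : Ed 3 → ℂ, Continuous v ∧ u =ᵐ[volume] v := by
  obtain ⟨C, hC, hi⟩ := interior_est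
  have lip : ∀ R, ∃ L, 0 ≤ L ∧ ∀ k, ∀ x ∈ closedBall (0 : Ed 3) R, ∀ y ∈ closedBall (0 : Ed 3) R,
      ‖ml k u x - ml k u y‖ ≤ L * ‖x - y‖ := by
    intro R
    obtain ⟨M1, hM1⟩ := hub (R + 2 + 1)
    obtain ⟨M2, hM2⟩ := hfb (R + 2 + 1)
    set M := max 0 (max M1 M2)
    have k1 : ∀ k, ∀ y ∈ closedBall (0 : Ed 3) (R + 2), ‖ml k u y‖ ≤ M := fun k y hy =>
      ml_bound k (by
        filter_upwards [hM1] with z hz hzy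
        exact (hz (mem_ball_aux hy (ball_subset_closedBall (ball_subset_ball (hk_le k) hzy)))).trans
          ((le_max_left _ _).trans (le_max_right _ _)))
    have k2 : ∀ k, ∀ y ∈ closedBall (0 : Ed 3) (R + 2), ‖ml k f y‖ ≤ M := fun k y hy =>
      ml_bound k (by
        filter_upwards [hM2] with z hz hzy
        exact (hz (mem_ball_aux hy (ball_subset_closedBall (ball_subset_ball (hk_le k) hzy)))).trans
          ((le_max_right _ _).trans (le_max_right _ _)))
    have hM0 : 0 ≤ M := le_max_left _ _
    refine ⟨3 * (C * M), by positivity, fun k x hx y hy => ?_⟩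
    refine (convex_closedBall (0 : Ed 3) R).norm_image_sub_le_of_norm_fderiv_le (𝕜 := ℝ)
      (fun z _ => ((ml_smooth k hu).differentiable (by simp)) z) (fun z hz => ?_) hy hx
    refine norm_fderiv_le ((hi _ (ml_smooth k hu) z).2 M (fun t ht => k1 k t (mem_ball_aux hz ht)) ?_)
    rw [lap_ml k hu h]
    exact fun t ht => k2 k t (mem_ball_aux hz ht)
  have hd : Dense {x | Tendsto (fun k => ml k u x) atTop (𝓝 (u x))} := Measure.dense_of_ae (ml_ae hu)
  have conv : ∀ x, ∃ a, Tendsto (fun k => ml k u x) atTop (𝓝 a) := by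
    intro x
    obtain ⟨L, hL, hl⟩ := lip (‖x‖ + 1)
    refine cauchySeq_tendsto_of_complete (Metric.cauchySeq_iff.2 fun ε hε => ?_)
    obtain ⟨s, hs, hsx⟩ := hd.exists_dist_lt x (ε := min 1 (ε / (3 * (L + 1)))) (by positivity)
    obtain ⟨N, hN⟩ := Metric.cauchySeq_iff.1 (Tendsto.cauchySeq hs) (ε / 3) (by positivity)
    have hsx' : ‖x - s‖ < ε / (3 * (L + 1)) := by
      rw [← dist_eq_norm]; exact hsx.trans_le (min_le_right _ _)
    have hxm : x ∈ closedBall (0 : Ed 3) (‖x‖ + 1) := by simp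
    have hsm : s ∈ closedBall (0 : Ed 3) (‖x‖ + 1) := by
      refine mem_ball_aux (x := x) (by simp) ?_
      rw [mem_closedBall']; exact hsx.le.trans (min_le_left _ _)
    have hb : L * ‖x - s‖ ≤ ε / 3 := by
      calc L * ‖x - s‖ ≤ (L + 1) * (ε / (3 * (L + 1))) := by gcongr; linarith
        _ = ε / 3 := by field_simp
    have hε3 : ∀ k, dist (ml k u x) (ml k u s) ≤ ε / 3 := fun k => by
      rw [dist_eq_norm]; exact (hl k x hxm s hsm).trans hb
    refine ⟨N, fun m hm n hn => ?_⟩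
    have := dist_triangle4 (ml m u x) (ml m u s) (ml n u s) (ml n u x)
    have h1 := hN m hm n hn
    have h2 := hε3 m
    have h3 := hε3 n
    rw [dist_comm (ml n u x)] at h3
    linarith
  choose v hv using conv
  refine ⟨v, continuous_iff_continuousAt.2 fun x => ?_, ?_⟩
  · obtain ⟨L, hL, hl⟩ := lip (‖x‖ + 1)
    have hlip : LipschitzOnWith (Real.toNNReal L) v (closedBall 0 (‖x‖ + 1)) :=
      LipschitzOnWith.of_dist_le_mul fun y hy z hz => by
        rw [dist_eq_norm, dist_eq_norm, Real.coe_toNNReal _ hL]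
        exact le_of_tendsto' ((hv y).sub (hv z)).norm fun k => hl k y hy z hz
    exact hlip.continuousOn.continuousAt (Filter.mem_of_superset (ball_mem_nhds x one_pos) fun y hy =>
      mem_ball_aux (x := x) (by simp) (ball_subset_closedBall hy))
  · filter_upwards [ml_ae hu] with x hx
    exact tendsto_nhds_unique hx (hv x)

lemma ml_unif {u : Ed 3 → ℂ} (hu : Continuous u) (R : ℝ) :
    TendstoUniformlyOn (fun k => ml k u) u atTop (closedBall 0 R) := by
  have huc := (isCompact_closedBall (0 : Ed 3) (R + 1)).uniformContinuousOn_of_continuous hu.continuousOn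
  rw [Metric.tendstoUniformlyOn_iff]
  intro ε hε
  obtain ⟨δ, hδ, h⟩ := Metric.uniformContinuousOn_iff.1 huc (ε / 2) (by positivity)
  filter_upwards [hk_tendsto.eventually_lt_const hδ] with k hk x hx
  rw [dist_comm]
  refine (ml_dist k hu.locallyIntegrable (ε := ε / 2) fun y hy => ?_).trans_lt (by linarith)
  refine (h y (mem_ball_aux hx (ball_subset_closedBall (ball_subset_ball (hk_le k) hy))) x
    (closedBall_subset_closedBall (by linarith) hx) ?_).le
  exact (mem_ball.1 hy).trans hk

lemma lap_sub {v w : Ed 3 → ℂ} (hv : ContDiff ℝ (⊤ : ℕ∞) v) (hw : ContDiff ℝ (⊤ : ℕ∞) w) (x : Ed 3) :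
    lap (fun y => v y - w y) x = lap v x - lap w x := by
  have e : ∀ {a b : Ed 3 → ℂ}, ContDiff ℝ (⊤ : ℕ∞) a → ContDiff ℝ (⊤ : ℕ∞) b → ∀ i,
      pd (fun y => a y - b y) i = fun y => pd a i y - pd b i y := fun {a b} ha hb i => by
    funext y
    exact pd_sub (ha.differentiable (by simp) y) (hb.differentiable (by simp) y) i
  simp only [lap_eq, e hv hw, e (contDiff_pd hv _) (contDiff_pd hw _), Finset.sum_sub_distrib]

/-- Continuous functions with continuous distributional Laplacian are continuously differentiable. -/
lemma reg_C1 {u f : Ed 3 → ℂ} (hu : Continuous u) (hf : Continuous f) (h : WLap u f) :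
    ContDiff ℝ 1 u := by
  obtain ⟨C, hC, hi⟩ := interior_est
  have hul := hu.locallyIntegrable (μ := volume)
  have hs := fun k => ml_smooth k hul
  have key : ∀ R, UniformCauchySeqOn (fun k x => fderiv ℝ (ml k u) x) atTop (closedBall (0 : Ed 3) R) := by
    intro R
    rw [Metric.uniformCauchySeqOn_iff]
    intro ε hε
    have hδ : 0 < ε / (3 * (C + 1)) := by positivity
    obtain ⟨N1, hN1⟩ := Metric.uniformCauchySeqOn_iff.1 (ml_unif hu (R + 2)).uniformCauchySeqOn _ hδ
    obtain ⟨N2, hN2⟩ := Metric.uniformCauchySeqOn_iff.1 (ml_unif hf (R + 2)).uniformCauchySeqOn _ hδ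
    refine ⟨max N1 N2, fun m hm n hn x hx => ?_⟩
    have hd : fderiv ℝ (ml m u) x - fderiv ℝ (ml n u) x = fderiv ℝ (fun y => ml m u y - ml n u y) x :=
      (fderiv_fun_sub ((hs m).differentiable (by simp) x) ((hs n).differentiable (by simp) x)).symm
    rw [dist_eq_norm, hd]
    have hb := (hi _ ((hs m).sub (hs n)) x).2 (ε / (3 * (C + 1)))
      (fun y hy => by
        rw [← dist_eq_norm]
        exact (hN1 m ((le_max_left _ _).trans hm) n ((le_max_left _ _).trans hn) y (mem_ball_aux hx hy)).le)
      (fun y hy => by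
        rw [lap_sub (hs m) (hs n), lap_ml m hul h, lap_ml n hul h, ← dist_eq_norm]
        exact (hN2 m ((le_max_right _ _).trans hm) n ((le_max_right _ _).trans hn) y (mem_ball_aux hx hy)).le)
    refine (norm_fderiv_le hb).trans_lt ?_
    have : 3 * (C * (ε / (3 * (C + 1)))) = ε * (C / (C + 1)) := by field_simp
    rw [this]
    have h2 : C / (C + 1) < 1 := by rw [div_lt_one (by positivity)]; linarith
    nlinarith
  have conv : ∀ x, ∃ a, Tendsto (fun k => fderiv ℝ (ml k u) x) atTop (𝓝 a) := fun x =>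
    cauchySeq_tendsto_of_complete ((key ‖x‖).cauchySeq (by simp))
  choose g hg using conv
  have hun : ∀ R, TendstoUniformlyOn (fun k x => fderiv ℝ (ml k u) x) g atTop (closedBall (0 : Ed 3) R) :=
    fun R => (key R).tendstoUniformlyOn_of_tendsto fun x _ => hg x
  have hnh : ∀ x : Ed 3, closedBall (0 : Ed 3) (‖x‖ + 1) ∈ 𝓝 x := fun x =>
    Filter.mem_of_superset (ball_mem_nhds x one_pos) fun y hy =>
      mem_ball_aux (x := x) (by simp) (ball_subset_closedBall hy)
  have hD : ∀ x, HasFDerivAt u (g x) x := fun x => by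
    refine hasFDerivAt_of_tendstoUniformlyOnFilter (l := atTop) (f := fun k => ml k u)
      (f' := fun k x => fderiv ℝ (ml k u) x)
      ((tendstoUniformlyOn_iff_tendstoUniformlyOnFilter.1 (hun (‖x‖ + 1))).mono_right (le_principal_iff.2 (hnh x)))
      (Eventually.of_forall fun n => ((hs n.1).differentiable (by simp) n.2).hasFDerivAt)
      (Eventually.of_forall fun y => (ml_unif hu ‖y‖).tendsto_at (by simp))
  have hgc : Continuous g := continuous_iff_continuousAt.2 fun x =>
    ((hun (‖x‖ + 1)).continuousOn (Frequently.of_forall fun k =>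
      ((hs k).continuous_fderiv (by simp)).continuousOn)).continuousAt (hnh x)
  rw [contDiff_one_iff_fderiv]
  refine ⟨fun x => (hD x).differentiableAt, ?_⟩
  rwa [show fderiv ℝ u = g from funext fun x => (hD x).fderiv]

lemma cd_of_pd {u : Ed 3 → ℂ} {n : ℕ} (hu : ContDiff ℝ 1 u) (h : ∀ i, ContDiff ℝ n (pd u i)) :
    ContDiff ℝ (n + 1 : ℕ) u := by
  push_cast
  rw [contDiff_succ_iff_fderiv]
  refine ⟨hu.differentiable one_ne_zero, by simp, ?_⟩
  rw [contDiff_clm_apply_iff]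
  intro z
  simp only [fderiv_apply_sum]
  exact ContDiff.sum fun i _ => contDiff_const.mul (h i)

lemma pd_cd {u : Ed 3 → ℂ} {n : ℕ} (hu : ContDiff ℝ (n + 1 : ℕ) u) (i : Fin 3) : ContDiff ℝ n (pd u i) :=
  (hu.fderiv_right (m := n) (by push_cast; rfl)).clm_apply contDiff_const

/-- Elliptic regularity in the scale of continuously differentiable functions. -/
lemma reg_Ck (k : ℕ) : ∀ u f : Ed 3 → ℂ, Continuous u → ContDiff ℝ k f → WLap u f →
    ContDiff ℝ (k + 1 : ℕ) u := by
  induction k with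
  | zero => intro u f hu hf h; simpa using reg_C1 hu hf.continuous h
  | succ k ih =>
    intro u f hu hf h
    have h1 := reg_C1 hu hf.continuous h
    have hf1 : ContDiff ℝ 1 f := hf.of_le (by push_cast; exact le_add_self)
    refine cd_of_pd h1 fun i => ih (pd u i) (pd f i) (continuous_pd h1 i) (pd_cd hf i) fun φ hφ => ?_
    have hφi := hφ.pd i
    have hl : TF (lap φ) := (((hφ.pd 0).pd 0).add ((hφ.pd 1).pd 1)).add ((hφ.pd 2).pd 2) |> fun t => by
      have e : lap φ = fun x => pd (pd φ 0) 0 x + pd (pd φ 1) 1 x + pd (pd φ 2) 2 x := by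
        funext x; rw [lap_eq, Fin.sum_univ_three]
      rw [e]; exact t
    have e1 := ibp h1 hl.c1 hl.2 i
    have e2 := ibp hf1 hφ.c1 hφ.2 i
    have e3 := h _ hφi
    simp only [pd_lap hφ.1] at e3
    rw [e1, e2] at e3
    exact neg_injective (by simpa [integral_neg] using e3)

/-- Smoothness of continuous weak solutions of `Δu = F(u)`. -/
lemma reg_smooth {F : ℂ → ℂ} (hF : ContDiff ℝ (⊤ : ℕ∞) F) {u : Ed 3 → ℂ} (hu : Continuous u)
    (h : WLap u fun x => F (u x)) : ContDiff ℝ (⊤ : ℕ∞) u := by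
  rw [contDiff_infty]
  intro n
  induction n with
  | zero => exact (contDiff_zero (𝕜 := ℝ)).2 hu
  | succ n ih =>
    exact reg_Ck n u _ hu ((hF.of_le (by exact_mod_cast le_top)).comp ih) h

/-! ### Sobolev bound and plane wave -/

/-- The Sobolev embedding bounds the sixth moment by the Dirichlet energy. -/
lemma sobolev6 (g : ℝ) : ∃ B : ℝ, ∀ v : Ed 3 → ℂ, TF v → DG v ≤ g → ∫ x, ‖v x‖ ^ 6 ≤ B := by
  obtain ⟨κ, hκ⟩ : ∃ κ, κ = MeasureTheory.SNormLESNormFDerivOfEqConst ℂ (volume : Measure (Ed 3)) (2 : NNReal) := ⟨_, rfl⟩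
  refine ⟨((κ : ENNReal) * ENNReal.ofReal (Real.sqrt g)).toReal ^ 6, fun v hv hg => ?_⟩
  have h1 := eLpNorm_le_eLpNorm_fderiv_of_eq (volume : Measure (Ed 3)) hv.c1 hv.2 (p := 2) (p' := 6) (by norm_num)
    (by simp) (by simp; norm_num)
  rw [← hκ] at h1
  have hfc : Continuous (fderiv ℝ v) := hv.c1.continuous_fderiv one_ne_zero
  have hm2 : MemLp (fderiv ℝ v) 2 := hfc.memLp_of_hasCompactSupport (hv.2.fderiv (𝕜 := ℝ))
  have hm6 : MemLp v 6 := hv.cont.memLp_of_hasCompactSupport hv.2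
  have h2 : eLpNorm (fderiv ℝ v) 2 volume ≤ ENNReal.ofReal (Real.sqrt g) := by
    rw [hm2.eLpNorm_eq_integral_rpow_norm (by norm_num) (by norm_num), Real.sqrt_eq_rpow]
    apply ENNReal.ofReal_le_ofReal
    norm_num
    refine Real.rpow_le_rpow (integral_nonneg fun _ => by positivity) ?_ (by norm_num)
    have e : DG v = ∫ x, ∑ i, ‖pd v i x‖ ^ 2 := by
      rw [integral_finsetSum _ fun i _ => hv.int_G i, Fin.sum_univ_three]; rfl
    refine le_trans ?_ (e ▸ hg)
    refine integral_mono_of_nonneg (Eventually.of_forall fun x => by positivity)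
      (integrable_finsetSum _ fun i _ => hv.int_G i) (Eventually.of_forall fun x => ?_)
    have hS : 0 ≤ ∑ i, ‖pd v i x‖ ^ 2 := Finset.sum_nonneg fun i _ => by positivity
    have : ‖fderiv ℝ v x‖ ≤ Real.sqrt (∑ i, ‖pd v i x‖ ^ 2) :=
      ContinuousLinearMap.opNorm_le_bound _ (Real.sqrt_nonneg _) fun z => by
        refine abs_le_of_sq_le_sq' ?_ (by positivity) |>.2
        rw [mul_pow, Real.sq_sqrt hS, mul_comm]
        exact norm_fderiv_sq_le v x z
    calc ‖fderiv ℝ v x‖ ^ 2 ≤ Real.sqrt (∑ i, ‖pd v i x‖ ^ 2) ^ 2 := by gcongr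
      _ = _ := Real.sq_sqrt hS
  have h3 : eLpNorm v 6 volume ≤ κ * ENNReal.ofReal (Real.sqrt g) := h1.trans (by gcongr; exact h2)
  have h4 : ∫ x, ‖v x‖ ^ 6 = (eLpNorm v 6 volume).toReal ^ 6 := by
    have h0 : 0 ≤ ∫ x, ‖v x‖ ^ 6 := integral_nonneg fun _ => by positivity
    rw [hm6.eLpNorm_eq_integral_rpow_norm (by norm_num) (by norm_num), ENNReal.toReal_ofReal (by positivity)]
    norm_num
    rw [← Real.rpow_natCast, ← Real.rpow_mul h0]; norm_num
  rw [h4]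
  gcongr
  exact ENNReal.mul_ne_top ENNReal.coe_ne_top ENNReal.ofReal_ne_top

/-- The limit inherits the Sobolev bound by Fatou's lemma. -/
lemma MinSeq.six {c T p0 K V0 : ℝ} {w : ℕ → Ed 3 → ℂ} {V : Ed 3 → ℂ} (h : MinSeq c T p0 K V0 w V) :
    Integrable fun x => ‖V x‖ ^ 6 := by
  obtain ⟨g0, h0⟩ := h.G_bdd 0
  obtain ⟨g1, h1⟩ := h.G_bdd 1
  obtain ⟨g2, h2⟩ := h.G_bdd 2
  obtain ⟨B, hB⟩ := sobolev6 (g0 + g1 + g2)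
  have hi : ∀ n, Integrable fun x => ‖w n x‖ ^ 6 := fun n =>
    by
    have h1 : Continuous fun x => ‖w n x‖ ^ 6 := (h.tf n).cont.norm.pow 6
    have h2 : HasCompactSupport fun x => ‖w n x‖ ^ 6 := (h.tf n).2.comp_left (g := fun z : ℂ => ‖z‖ ^ 6) (by simp)
    exact h1.integrable_of_hasCompactSupport h2
  have hl : ∀ᵐ x, Tendsto (fun n => ‖w n x‖ ^ 6) atTop (𝓝 (‖V x‖ ^ 6)) := by
    filter_upwards [h.ae] with x hx
    exact (hx.norm).pow 6
  have hm : AEStronglyMeasurable (fun x => ‖V x‖ ^ 6) volume := by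
    have := h.sm.norm.aestronglyMeasurable (μ := volume)
    exact this.pow 6
  have h00 : ∀ n x, 0 ≤ ‖w n x‖ ^ 6 := fun n x => pow_nonneg (norm_nonneg _) 6
  have hb : ∀ n, ∫ x, ‖w n x‖ ^ 6 ≤ B := fun n => hB _ (h.tf n) (by unfold DG; linarith [h0 n, h1 n, h2 n])
  exact (fatou (f := fun n x => ‖w n x‖ ^ 6) (g := fun x => ‖V x‖ ^ 6) hi h00 hm hl (B := fun _ => B) (C := B) hb
    tendsto_const_nhds).1

/-- The plane wave `e^{i s x₀}`. -/
def ex (s : ℝ) (x : Ed 3) : ℂ := Complex.exp (I * s * (x 0 : ℂ))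

lemma ex_smooth (s : ℝ) : ContDiff ℝ (⊤ : ℕ∞) (ex s) :=
  (contDiff_const.mul (Complex.ofRealCLM.contDiff.comp (coord_contDiff 0))).cexp

lemma ex_mul (s : ℝ) (x : Ed 3) : ex s x * ex (-s) x = 1 := by
  unfold ex; rw [← Complex.exp_add]; simp

lemma ex_conj (s : ℝ) (x : Ed 3) : (starRingEnd ℂ) (ex s x) = ex (-s) x := by
  unfold ex; rw [← Complex.exp_conj]; simp

lemma ex_norm (s : ℝ) (x : Ed 3) : ‖ex s x‖ = 1 := by
  unfold ex
  rw [show I * s * (x 0 : ℂ) = ((s * x 0 : ℝ) : ℂ) * I by push_cast; ring, Complex.norm_exp_ofReal_mul_I]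

lemma pd_ex (s : ℝ) (i : Fin 3) (x : Ed 3) : pd (ex s) i x = if i = 0 then I * s * ex s x else 0 := by
  have h1 : HasDerivAt (fun t : ℝ => ex s (x + t • ee i)) (pd (ex s) i x) 0 :=
    hasDerivAt_line ((ex_smooth s).differentiable (by simp) x) i
  have h2 : HasDerivAt (fun t : ℝ => ex s (x + t • ee i)) (if i = 0 then I * s * ex s x else 0) 0 := by
    by_cases hi : i = 0
    · subst hi
      have e : (fun t : ℝ => ex s (x + t • ee 0)) = fun t : ℝ => Complex.exp (I * s * ((x 0 : ℂ) + t)) := by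
        funext t; simp [ex, ee]
      rw [e]
      have := (((hasDerivAt_id (0:ℝ)).ofReal_comp.const_add (x 0 : ℂ)).const_mul (I * s)).cexp
      refine this.congr_deriv ?_
      simp [ex]; ring
    · have e : (fun t : ℝ => ex s (x + t • ee i)) = fun t : ℝ => ex s x := by
        funext t; simp [ex, ee, Ne.symm hi]
      rw [e, if_neg hi]; exact hasDerivAt_const _ _
  exact h1.unique h2

lemma pd_ex_mul (s : ℝ) {β : Ed 3 → ℂ} (hβ : ContDiff ℝ (⊤ : ℕ∞) β) (i : Fin 3) :
    pd (fun x => ex s x * β x) i = fun x => ex s x * (pd β i x + if i = 0 then I * s * β x else 0) := by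
  funext x
  rw [pd_mul ((ex_smooth s).differentiable (by simp) x) (hβ.differentiable (by simp) x), pd_ex]
  split_ifs <;> ring

lemma pd2_ex_mul (s : ℝ) {β : Ed 3 → ℂ} (hβ : ContDiff ℝ (⊤ : ℕ∞) β) (i : Fin 3) (x : Ed 3) :
    pd (pd (fun x => ex s x * β x) i) i x =
      ex s x * (pd (pd β i) i x + if i = 0 then 2 * I * s * pd β 0 x - s ^ 2 * β x else 0) := by
  have hp := contDiff_pd hβ i
  have hc : ContDiff ℝ (⊤ : ℕ∞) fun x => I * s * β x := contDiff_const.mul hβ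
  rw [pd_ex_mul s hβ]
  by_cases hi : i = 0
  · subst hi
    simp only [if_true]
    rw [pd_ex_mul s (hp.add hc)]
    simp only [if_true]
    rw [pd_add (hp.differentiable (by simp) x) (hc.differentiable (by simp) x),
      pd_cmul _ (hβ.differentiable (by simp) x)]
    linear_combination (ex s x * s ^ 2 * β x) * I_sq
  · simp only [if_neg hi, add_zero]
    rw [pd_ex_mul s hp]
    simp [hi]

/-- The nonlinearity after the plane wave has been removed. -/
def NL (c : ℝ) (z : ℂ) : ℂ := -((c ^ 2 / 4 + 1 - ‖z‖ ^ 2 : ℝ) : ℂ) * z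

lemma NL_smooth (c : ℝ) : ContDiff ℝ (⊤ : ℕ∞) (NL c) :=
  (Complex.ofRealCLM.contDiff.comp (contDiff_const.sub (contDiff_norm_sq ℝ))).neg.mul contDiff_id

lemma NL_sq (c : ℝ) {z V : ℂ} (h : ‖z‖ ≤ 1 + ‖V‖) :
    ‖NL c z‖ ^ 2 ≤ 108 * (2 + c ^ 2 / 4) ^ 2 * (1 + ‖V‖ ^ 6) ∧ ‖z‖ ^ 2 ≤ 108 * (2 + c ^ 2 / 4) ^ 2 * (1 + ‖V‖ ^ 6) := by
  set t := ‖V‖ with ht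
  set S := ‖z‖ ^ 2 with hS
  set A := 2 + c ^ 2 / 4 with hA
  have hA1 : 1 ≤ A := by nlinarith
  have ht0 : 0 ≤ t := norm_nonneg _
  have hS0 : 0 ≤ S := by positivity
  have h1 : 1 + S ≤ 3 * (1 + t ^ 2) := by
    have : S ≤ (1 + t) ^ 2 := by rw [hS]; gcongr
    nlinarith [sq_nonneg (t - 1)]
  have h2 : (1 + S) ^ 3 ≤ 108 * (1 + t ^ 6) := by
    calc (1 + S) ^ 3 ≤ (3 * (1 + t ^ 2)) ^ 3 := by gcongr
      _ ≤ _ := by nlinarith [mul_nonneg (sq_nonneg (t ^ 2 - 1)) (by positivity : 0 ≤ t ^ 2 + 1)]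
  have h3 : ‖NL c z‖ ^ 2 ≤ A ^ 2 * (1 + S) ^ 3 := by
    have e : ‖NL c z‖ ^ 2 = (A - 1 - S) ^ 2 * S := by
      unfold NL
      rw [norm_mul, norm_neg, Complex.norm_real, mul_pow, ← hS, Real.norm_eq_abs, sq_abs]
      rw [hA]; ring
    have k : (A - 1 - S) ^ 2 ≤ (A * (1 + S)) ^ 2 := by
      apply sq_le_sq'
      · nlinarith
      · nlinarith
    rw [e]
    calc (A - 1 - S) ^ 2 * S ≤ (A * (1 + S)) ^ 2 * (1 + S) := by gcongr; linarith
      _ = _ := by ring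
  have h4 : A ^ 2 * (1 + S) ^ 3 ≤ A ^ 2 * (108 * (1 + t ^ 6)) := by gcongr
  constructor
  · linarith
  · have k1 : S ≤ (1 + S) ^ 3 := by nlinarith [pow_nonneg hS0 2, pow_nonneg hS0 3]
    have k2 : (1 + S) ^ 3 ≤ A ^ 2 * (1 + S) ^ 3 := le_mul_of_one_le_left (by positivity) (by nlinarith)
    linarith

/-! ### The travelling wave -/

/-- Cubic expressions in an `L⁶` field are locally square integrable. -/
lemma loc6 {V f : Ed 3 → ℂ} (h6 : Integrable fun x => ‖V x‖ ^ 6) (hf : AEStronglyMeasurable f) {C : ℝ}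
    (h : ∀ x, ‖f x‖ ^ 2 ≤ C * (1 + ‖V x‖ ^ 6)) :
    LocallyIntegrable f ∧ ∀ R, IntegrableOn (fun x => ‖f x‖ ^ 2) (closedBall 0 R) := by
  have hl : LocallyIntegrable (fun x => 1 + C * (1 + ‖V x‖ ^ 6)) := by
    have h1 : LocallyIntegrable (fun x : Ed 3 => 1 + C) := locallyIntegrable_const _
    have h2 := h1.add (h6.const_mul C).locallyIntegrable
    refine h2.congr (Eventually.of_forall fun x => ?_)
    simp only [Pi.add_apply]; ring
  refine ⟨hl.mono hf (Eventually.of_forall fun x => ?_), fun R => ?_⟩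
  · refine le_trans ?_ (le_abs_self _)
    nlinarith [h x, sq_nonneg (‖f x‖ - 1), norm_nonneg (f x)]
  · have h3 := hl.mono (hf.norm.pow 2) (Eventually.of_forall fun x => by
      refine le_trans ?_ (le_abs_self _)
      simp only [Pi.pow_apply]
      rw [Real.norm_of_nonneg (by positivity)]
      linarith [h x])
    exact h3.integrableOn_isCompact (isCompact_closedBall 0 R)

/-- Removing the plane wave turns the weak travelling wave equation into `Δu = F(u)`. -/
lemma weak_u {c : ℝ} {V : Ed 3 → ℂ} (hs : StronglyMeasurable V) (h6 : Integrable fun x => ‖V x‖ ^ 6)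
    (hW : ∀ φ, TF φ → Wk c 1 V φ = 0) {u : Ed 3 → ℂ}
    (hu : u = fun x => (starRingEnd ℂ) (1 + V x) * ex (-(c / 2)) x) :
    WLap u (fun x => NL c (u x)) ∧ AEStronglyMeasurable u ∧ ∀ x, ‖u x‖ ≤ 1 + ‖V x‖ := by
  have hus : AEStronglyMeasurable u := by
    rw [hu]
    exact ((Complex.continuous_conj.comp_stronglyMeasurable (stronglyMeasurable_const.add hs)).mul
      (ex_smooth _).continuous.stronglyMeasurable).aestronglyMeasurable
  have hun : ∀ x, ‖u x‖ = ‖1 + V x‖ := fun x => by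
    rw [hu]; simp only [norm_mul, ex_norm, mul_one, RCLike.norm_conj]
  have hub : ∀ x, ‖u x‖ ≤ 1 + ‖V x‖ := fun x => by
    rw [hun]; simpa using norm_add_le (1:ℂ) (V x)
  refine ⟨fun β hβ => ?_, hus, hub⟩
  have hul := (loc6 h6 hus fun x => (NL_sq c (hub x)).2).1
  have hfl := (loc6 h6 ((NL_smooth c).continuous.comp_aestronglyMeasurable hus) fun x => (NL_sq c (hub x)).1).1
  set ψ : Ed 3 → ℂ := fun x => (starRingEnd ℂ) (1 + V x) with hψ
  have huψ : ∀ x, u x = ψ x * ex (-(c / 2)) x := fun x => by rw [hu]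
  set φ : Ed 3 → ℂ := fun x => ex (-(c / 2)) x * β x with hφd
  have hφ : TF φ := hβ.mul_left (ex_smooth _)
  have hψs : AEStronglyMeasurable ψ :=
    (Complex.continuous_conj.comp_stronglyMeasurable (stronglyMeasurable_const.add hs)).aestronglyMeasurable
  have hψl : LocallyIntegrable ψ := hul.mono hψs (Eventually.of_forall fun x => by
    rw [huψ, norm_mul, ex_norm, mul_one])
  have hpair : ∀ {χ : Ed 3 → ℂ}, TF χ → Integrable fun x => ψ x * χ x := fun hχ => loc_mul hψl hχ.cont hχ.2
  have hp : ∀ χ : Ed 3 → ℂ, TF χ → ∀ i, prg V (pd χ i) = ∫ x, ψ x * pd χ i x := fun χ hχ i => by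
    have e : ∀ x, (starRingEnd ℂ) (V x) * pd χ i x = ψ x * pd χ i x - pd χ i x := fun x => by
      simp only [hψ, map_add, map_one]; ring
    unfold prg
    simp only [e]
    rw [integral_sub (hpair (hχ.pd i)) (hχ.pd i).integrable, integral_pd hχ, sub_zero]
  have h0 := hW φ hφ
  unfold Wk at h0
  rw [hp _ (hφ.pd 0), hp _ (hφ.pd 1), hp _ (hφ.pd 2), hp _ hφ] at h0
  unfold epr at h0
  have i1 : Integrable fun x => u x * lap β x := by
    simp only [lap_eq, Finset.mul_sum]
    exact integrable_finsetSum _ fun i _ => loc_mul hul ((hβ.pd i).pd i).cont ((hβ.pd i).pd i).2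
  have i2 : Integrable fun x => NL c (u x) * β x := loc_mul hfl hβ.cont hβ.2
  have j0 := hpair ((hφ.pd 0).pd 0)
  have j1 := hpair ((hφ.pd 1).pd 1)
  have j2 := hpair ((hφ.pd 2).pd 2)
  have j3 := (hpair (hφ.pd 0)).const_mul (I * c)
  have hpt : ∀ x, ((1 - ‖1 + V x‖ ^ 2 : ℝ) : ℂ) * ((starRingEnd ℂ) (1 + V x) * φ x) =
      (u x * lap β x - NL c (u x) * β x) - (((ψ x * pd (pd φ 0) 0 x + ψ x * pd (pd φ 1) 1 x) +
        ψ x * pd (pd φ 2) 2 x) + I * c * (ψ x * pd φ 0 x)) := by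
    intro x
    have q : ∀ i, pd (pd φ i) i x = _ := fun i => pd2_ex_mul (-(c / 2)) hβ.1 i x
    have q1 : pd φ 0 x = _ := congrFun (pd_ex_mul (-(c / 2)) hβ.1 0) x
    rw [q, q, q, q1, ← hun, lap_eq, Fin.sum_univ_three, NL]
    change ((1 - ‖u x‖ ^ 2 : ℝ) : ℂ) * (ψ x * φ x) = _
    simp only [if_true, Fin.isValue, one_ne_zero, if_false, Fin.reduceEq, hφd]
    generalize ((‖u x‖ : ℝ)) = m
    rw [huψ]
    push_cast
    linear_combination -(ψ x * ex (-(c / 2)) x * (c ^ 2 / 2 * β x)) * I_sq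
  have hE : ∫ x, ((1 - ‖1 + V x‖ ^ 2 : ℝ) : ℂ) * ((starRingEnd ℂ) (1 + V x) * φ x) =
      ((∫ x, u x * lap β x) - ∫ x, NL c (u x) * β x) - (((∫ x, ψ x * pd (pd φ 0) 0 x) +
        (∫ x, ψ x * pd (pd φ 1) 1 x) + ∫ x, ψ x * pd (pd φ 2) 2 x) + I * c * ∫ x, ψ x * pd φ 0 x) := by
    rw [integral_congr_ae (Eventually.of_forall hpt)]
    have j01 : Integrable fun x => ψ x * pd (pd φ 0) 0 x + ψ x * pd (pd φ 1) 1 x := j0.add j1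
    have j012 : Integrable fun x => ψ x * pd (pd φ 0) 0 x + ψ x * pd (pd φ 1) 1 x + ψ x * pd (pd φ 2) 2 x :=
      j01.add j2
    have jj : Integrable fun x => ψ x * pd (pd φ 0) 0 x + ψ x * pd (pd φ 1) 1 x + ψ x * pd (pd φ 2) 2 x +
      I * c * (ψ x * pd φ 0 x) := j012.add j3
    have ii : Integrable fun x => u x * lap β x - NL c (u x) * β x := i1.sub i2
    rw [integral_sub ii jj, integral_sub i1 i2, integral_add j012 j3, integral_add j01 j2, integral_add j0 j1,
      integral_const_mul]
  rw [hE] at h0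
  simp only [ofReal_one] at h0
  linear_combination h0

/-- A smooth distributional solution is a classical one. -/
lemma lap_classical {u f : Ed 3 → ℂ} (hu : ContDiff ℝ (⊤ : ℕ∞) u) (hf : Continuous f) (h : WLap u f) (x : Ed 3) :
    lap u x = f x := by
  have hlc := (contDiff_lap hu).continuous
  have key : ∀ φ, TF φ → ∫ x, (lap u x - f x) * φ x = 0 := fun φ hφ => by
    have a : ∀ i, ∫ x, u x * pd (pd φ i) i x = ∫ x, pd (pd u i) i x * φ x := fun i => by
      have e1 := ibp (hu.of_le (by exact_mod_cast le_top)) (hφ.pd i).c1 (hφ.pd i).2 i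
      have e2 := ibp ((contDiff_pd hu i).of_le (by exact_mod_cast le_top)) hφ.c1 hφ.2 i
      rw [e1, e2, neg_neg]
    have i1 : ∀ i, Integrable fun x => u x * pd (pd φ i) i x := fun i =>
      loc_mul hu.continuous.locallyIntegrable ((hφ.pd i).pd i).cont ((hφ.pd i).pd i).2
    have i2 : ∀ i, Integrable fun x => pd (pd u i) i x * φ x := fun i =>
      loc_mul (contDiff_pd (contDiff_pd hu i) i).continuous.locallyIntegrable hφ.cont hφ.2
    have e : ∫ x, u x * lap φ x = ∫ x, lap u x * φ x := by
      simp only [lap_eq, Finset.mul_sum, Finset.sum_mul]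
      rw [integral_finsetSum _ fun i _ => i1 i, integral_finsetSum _ fun i _ => i2 i]
      exact Finset.sum_congr rfl fun i _ => a i
    simp only [sub_mul]
    rw [integral_sub (loc_mul hlc.locallyIntegrable hφ.cont hφ.2) (loc_mul hf.locallyIntegrable hφ.cont hφ.2),
      ← e, h φ hφ, sub_self]
  have h0 := ae_eq_zero_of_integral_contDiff_smul_eq_zero (μ := volume) (hlc.sub hf).locallyIntegrable fun g hg hgc => by
    have := key (fun x => (g x : ℂ)) ⟨Complex.ofRealCLM.contDiff.comp hg,
      hgc.comp_left (g := fun r : ℝ => (r : ℂ)) (by simp)⟩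
    rw [← this]
    refine integral_congr_ae (Eventually.of_forall fun x => ?_)
    simp [mul_comm]
  have h1 : (fun x => lap u x - f x) = fun _ => 0 :=
    Continuous.ae_eq_iff_eq volume (hlc.sub hf) continuous_const |>.1 h0
  exact sub_eq_zero.1 (congrFun h1 x)

/-- The gradient of a smooth function is square integrable as soon as its difference quotients are
bounded in `L²`. -/
lemma pd_sq_int {ψ : Ed 3 → ℂ} (hψ : ContDiff ℝ (⊤ : ℕ∞) ψ) {i : Fin 3} {g : ℝ}
    (hg : ∀ τ : ℝ, Integrable (fun x => ‖ψ (x + τ • ee i) - ψ x‖ ^ 2) ∧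
      (∫ x, ‖ψ (x + τ • ee i) - ψ x‖ ^ 2) ≤ τ ^ 2 * g) : Integrable fun x => ‖pd ψ i x‖ ^ 2 := by
  have hl : ∀ x, Tendsto (fun n : ℕ => ((hk n)⁻¹) ^ 2 * ‖ψ (x + hk n • ee i) - ψ x‖ ^ 2) atTop (𝓝 (‖pd ψ i x‖ ^ 2)) := by
    intro x
    have h1 := (hasDerivAt_line (hψ.differentiable (by simp) x) i).tendsto_slope_zero
    have h2 : Tendsto hk atTop (𝓝[≠] 0) := tendsto_nhdsWithin_iff.2
      ⟨hk_tendsto, Eventually.of_forall fun n => (hk_pos n).ne'⟩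
    have h3 := ((h1.comp h2).norm).pow 2
    refine h3.congr fun n => ?_
    simp [mul_pow]
  have hi : ∀ n : ℕ, Integrable fun x => ((hk n)⁻¹) ^ 2 * ‖ψ (x + hk n • ee i) - ψ x‖ ^ 2 := fun n =>
    (hg _).1.const_mul _
  have hb : ∀ n : ℕ, ∫ x, ((hk n)⁻¹) ^ 2 * ‖ψ (x + hk n • ee i) - ψ x‖ ^ 2 ≤ g := fun n => by
    rw [integral_const_mul]
    have := hk_pos n
    calc _ ≤ ((hk n)⁻¹) ^ 2 * (hk n ^ 2 * g) := by gcongr; exact (hg _).2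
      _ = g := by field_simp
  have hm : AEStronglyMeasurable (fun x => ‖pd ψ i x‖ ^ 2) volume :=
    ((contDiff_pd hψ i).continuous.norm.pow 2).aestronglyMeasurable
  exact (fatou (f := fun n x => ((hk n)⁻¹) ^ 2 * ‖ψ (x + hk n • ee i) - ψ x‖ ^ 2) (g := fun x => ‖pd ψ i x‖ ^ 2)
    hi (fun n x => by positivity) hm (Eventually.of_forall hl) (B := fun _ => g) (C := g) hb tendsto_const_nhds).1

/-- for every subsonic speed `c ∈ (0, √2)` there exists a nontrivial
finite energy traveling wave of the Gross–Pitaevskii equation on `ℝ³`. -/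
theorem statement1 (c : ℝ) (hc : c ∈ Set.Ioo 0 (Real.sqrt 2)) :
    ∃ ψ : Ed 3 → ℂ, ContDiff ℝ (⊤ : ℕ∞) ψ ∧ GPeq c ψ ∧ FiniteEnergy ψ ∧ Nontriv ψ := by
  obtain ⟨T, p0, K, V0, w, V, hM, hT, hKV, hκ, hnt⟩ := min_exists hc.1 hc.2
  have hc2 : c ^ 2 < 2 := by
    have := Real.sq_sqrt (show (0:ℝ) ≤ 2 by norm_num)
    nlinarith [hc.1, hc.2]
  obtain ⟨ε, hε, hW⟩ := Wk_zero hM hT hKV hκ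
  have hε1 : ε = 1 := by
    rcases hε with h | h
    · subst h
      exact absurd (degenerate hc2 hM.sm hM.shift hM.eta fun φ hφ => by simpa using hW φ hφ) hnt
    · exact h
  subst hε1
  obtain ⟨u, hu⟩ : ∃ u : Ed 3 → ℂ, u = fun x => (starRingEnd ℂ) (1 + V x) * ex (-(c / 2)) x := ⟨_, rfl⟩
  obtain ⟨hwl, hus, hub⟩ := weak_u hM.sm hM.six (fun φ hφ => by simpa using hW φ hφ) hu
  have hul := loc6 hM.six hus fun x => (NL_sq c (hub x)).2
  have hfl := loc6 hM.six ((NL_smooth c).continuous.comp_aestronglyMeasurable hus) fun x => (NL_sq c (hub x)).1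
  have hbd := loc_bdd hul.1 hfl.1 hul.2 hfl.2 hwl
  obtain ⟨v, hv, huv⟩ := rep_cont hul.1 hbd (fun R => by
    obtain ⟨M, hM⟩ := hbd R
    obtain ⟨B, hB⟩ := (isCompact_closedBall (0:ℂ) M).exists_bound_of_continuousOn (NL_smooth c).continuous.continuousOn
    exact ⟨B, hM.mono fun x hx hxR => hB _ (mem_closedBall_zero_iff.2 (hx hxR))⟩) hwl
  have hwv : WLap v fun x => NL c (v x) := fun φ hφ => by
    have e1 : ∫ x, v x * lap φ x = ∫ x, u x * lap φ x :=
      integral_congr_ae (huv.mono fun x hx => by simp only [hx])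
    have e2 : ∫ x, NL c (v x) * φ x = ∫ x, NL c (u x) * φ x :=
      integral_congr_ae (huv.mono fun x hx => by simp only [hx])
    exact e1.trans ((hwl φ hφ).trans e2.symm)
  have hvs := reg_smooth (NL_smooth c) hv hwv
  have hcl := lap_classical hvs ((NL_smooth c).continuous.comp hv) hwv
  set m : Ed 3 → ℂ := fun x => ex (c / 2) x * v x with hm
  have hms : ContDiff ℝ (⊤ : ℕ∞) m := (ex_smooth _).mul hvs
  have hcj : ∀ {a : Ed 3 → ℂ}, ContDiff ℝ (⊤ : ℕ∞) a → ∀ i,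
      pd (fun x => (starRingEnd ℂ) (a x)) i = fun x => (starRingEnd ℂ) (pd a i x) := fun ha i =>
    funext fun x => pd_conj _ (ha.differentiable (by simp) x) i
  set ψ : Ed 3 → ℂ := fun x => (starRingEnd ℂ) (m x) with hψ
  have hψs : ContDiff ℝ (⊤ : ℕ∞) ψ := Complex.conjCLE.contDiff.comp hms
  have hae : ∀ᵐ x, 1 + V x = ψ x := huv.mono fun x hx => by
    have h1 : ex (c / 2) x * ex (-(c / 2)) x = 1 := ex_mul _ x
    simp only [hψ, hm, ← hx, hu]
    rw [mul_left_comm, h1, mul_one, Complex.conj_conj]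
  refine ⟨ψ, hψs, fun x => ?_, ?_, ?_⟩
  · have q : ∀ i, pd (pd m i) i x = _ := fun i => pd2_ex_mul (c / 2) hvs i x
    have q1 : pd m 0 x = _ := congrFun (pd_ex_mul (c / 2) hvs 0) x
    have hl : lap v x = NL c (v x) := hcl x
    rw [lap_eq, Fin.sum_univ_three] at hl
    unfold NL at hl
    have hn : ‖ψ x‖ = ‖v x‖ := by
      simp only [hψ, hm, RCLike.norm_conj, norm_mul, ex_norm, one_mul]
    have hmain : -I * c * pd m 0 x + (pd (pd m 0) 0 x + pd (pd m 1) 1 x + pd (pd m 2) 2 x) +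
        (1 - (‖v x‖ : ℂ) ^ 2) * m x = 0 := by
      rw [q, q, q, q1]
      simp only [if_true, Fin.isValue, one_ne_zero, if_false, Fin.reduceEq, hm]
      push_cast at hl ⊢
      linear_combination ex (c / 2) x * hl - (ex (c / 2) x * (c ^ 2 / 2 * v x)) * I_sq
    have h2 := congrArg (starRingEnd ℂ) hmain
    rw [hn, lap_eq, Fin.sum_univ_three]
    simp only [hψ, hcj hms, hcj (contDiff_pd hms _)]
    simpa [conj_ofReal] using h2
  · unfold FiniteEnergy
    have hg : ∀ i, Integrable fun x => ‖pd ψ i x‖ ^ 2 := fun i => by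
      obtain ⟨g, hg⟩ := hM.shift i
      refine pd_sq_int hψs (g := g) fun τ => ?_
      have e : (fun x => ‖V (x + τ • ee i) - V x‖ ^ 2) =ᵐ[volume] fun x => ‖ψ (x + τ • ee i) - ψ x‖ ^ 2 := by
        filter_upwards [hae, ae_shift hae (τ • ee i)] with x h1 h2
        rw [← h1, ← h2, add_sub_add_left_eq_sub]
      exact ⟨(hg τ).1.congr e, (integral_congr_ae e) ▸ (hg τ).2⟩
    have hη : Integrable fun x => (1 - ‖ψ x‖ ^ 2) ^ 2 :=
      hM.eta.congr (hae.mono fun x hx => by simp only [hx])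
    have hS : Integrable fun x => gradSq ψ x := integrable_finsetSum _ fun i _ => hg i
    exact (hS.const_mul (1 / 2)).add (hη.const_mul (1 / 4))
  · rintro ⟨z, hz, hzψ⟩
    exact hnt ⟨z, hz, hae.mono fun x hx => by rw [hx, hzψ]⟩
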